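/- arXiv:math/0010267 — 8 statements merged into one kernel-verified Lean document; each statement's English description precedes it below -/
import Mathlib

section
/- Let F be a field, n a positive integer, G a subgroup of GL(n,F), and H a normal subgroup of G. Suppose there is a subset X of the space of n×n matrices over F such that H is exactly the centralizer of X in G, i.e. H = {g ∈ G : gx = xg for every x ∈ X, where g is regarded as an n×n matrix}. Then there exists a group homomorphism from G into GL(n²,F) whose kernel is exactly H. -/
/-- **Wehrfritz, Theorem 6.2.** Let `G` be a subgroup of `GL(n, F)` and `H` a normal
subgroup of `G` such that `H = C_G(X)` for some subset `X` of the `n × n` matrices over `F`.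
Then there exists a homomorphism of `G` into `GL(n², F)` with kernel `H`. -/
theorem stmt_0 (F : Type*) [Field F] (n : ℕ) (hn : 0 < n)
    (G : Subgroup (Matrix.GeneralLinearGroup (Fin n) F))
    (H : Subgroup G) (hHnormal : H.Normal)
    (X : Set (Matrix (Fin n) (Fin n) F))
    (hH : ∀ g : G, g ∈ H ↔ ∀ x ∈ X,
      ((g : Matrix.GeneralLinearGroup (Fin n) F) : Matrix (Fin n) (Fin n) F) * x =
        x * ((g : Matrix.GeneralLinearGroup (Fin n) F) : Matrix (Fin n) (Fin n) F)) :
    ∃ φ : G →* Matrix.GeneralLinearGroup (Fin (n ^ 2)) F, φ.ker = H := by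
  classical
  let M := Matrix (Fin n) (Fin n) F
  let c : G → M := fun g => ((g : Matrix.GeneralLinearGroup (Fin n) F) : M)
  have c1 : c 1 = 1 := by simp [c]
  have cm : ∀ a b : G, c (a * b) = c a * c b := fun a b => by simp [c]
  have ci : ∀ a : G, c a * c a⁻¹ = 1 := fun a => by rw [← cm, mul_inv_cancel, c1]
  have ci' : ∀ a : G, c a⁻¹ * c a = 1 := fun a => by rw [← cm, inv_mul_cancel, c1]
  have hH' : ∀ g : G, g ∈ H ↔ ∀ x ∈ X, c g * x = x * c g := hH
  clear_value c
  let C : Submodule F M :=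
    { carrier := {x | ∀ h ∈ H, c h * x = x * c h}
      add_mem' := fun {a b} ha hb h hh => by rw [mul_add, add_mul, ha h hh, hb h hh]
      zero_mem' := fun h hh => by rw [mul_zero, zero_mul]
      smul_mem' := fun r a ha h hh => by
        rw [mul_smul_comm, smul_mul_assoc, ha h hh] }
  have hXC : ∀ x ∈ X, x ∈ C := fun x hx h hh => (hH' h).1 hh x hx
  have hconj : ∀ (g : G) (x : M), x ∈ C → c g * x * c g⁻¹ ∈ C := by
    intro g x hx h hh
    have h1 : g⁻¹ * h * g ∈ H := by
      simpa using hHnormal.conj_mem h hh g⁻¹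
    have h2 := hx _ h1
    have e1 : c h * c g = c g * c (g⁻¹ * h * g) := by
      rw [← cm, ← cm]; congr 1; group
    have e2 : c (g⁻¹ * h * g) * c g⁻¹ = c g⁻¹ * c h := by
      rw [← cm, ← cm]; congr 1; group
    calc c h * (c g * x * c g⁻¹) = (c h * c g) * x * c g⁻¹ := by simp only [mul_assoc]
      _ = c g * (c (g⁻¹ * h * g) * x) * c g⁻¹ := by rw [e1]; simp only [mul_assoc]
      _ = c g * x * (c (g⁻¹ * h * g) * c g⁻¹) := by rw [h2]; simp only [mul_assoc]
      _ = c g * x * c g⁻¹ * c h := by rw [e2]; simp only [mul_assoc]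
  obtain ⟨q, hq⟩ := LinearMap.exists_leftInverse_of_injective C.subtype C.ker_subtype
  let p : M →ₗ[F] M := C.subtype ∘ₗ q
  have hpC : ∀ x, p x ∈ C := fun x => (q x).2
  have hp : ∀ x ∈ C, p x = x := fun x hx => by
    have := LinearMap.congr_fun hq ⟨x, hx⟩
    exact congrArg Subtype.val this
  clear_value p
  let ρ : G →* Module.End F M :=
    { toFun := fun g => LinearMap.mulLeft F (c g) ∘ₗ LinearMap.mulRight F (c g⁻¹) ∘ₗ p
        + (LinearMap.id - p)
      map_one' := by
        ext1 x
        simp [c1]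
      map_mul' := fun a b => by
        apply LinearMap.ext
        intro x
        have e : p (c b * (p x * c b⁻¹)) = c b * (p x * c b⁻¹) := by
          apply hp
          rw [← mul_assoc]
          exact hconj b _ (hpC x)
        simp only [LinearMap.add_apply, LinearMap.comp_apply, LinearMap.mulLeft_apply,
          LinearMap.mulRight_apply, LinearMap.sub_apply, LinearMap.id_apply, Module.End.mul_apply,
          map_add, map_sub, e, hp _ (hpC x), mul_inv_rev, cm]
        simp only [sub_self, add_zero, mul_assoc]
        simp }
  have hρ : ∀ g x, ρ g x = c g * (p x * c g⁻¹) + (x - p x) := fun g x => rfl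
  have hker : ∀ g, ρ g = 1 ↔ g ∈ H := by
    intro g
    constructor
    · intro h
      rw [hH']
      intro x hx
      have h1 := LinearMap.congr_fun h x
      rw [hρ, hp x (hXC x hx), sub_self, add_zero, Module.End.one_apply] at h1
      have h2 := congrArg (· * c g) h1
      simpa [mul_assoc, ci'] using h2
    · intro h
      apply LinearMap.ext
      intro x
      rw [hρ, ← mul_assoc, hpC x g h, mul_assoc, ci]
      simp
  have hfr : Module.finrank F M = n ^ 2 := by
    simp [M, Module.finrank_matrix, sq]
  let b : Module.Basis (Fin (n ^ 2)) F M := Module.finBasisOfFinrankEq F M hfr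
  let T := LinearMap.toMatrixAlgEquiv b
  refine ⟨((T : Module.End F M →* Matrix (Fin (n ^ 2)) (Fin (n ^ 2)) F).comp ρ).toHomUnits, ?_⟩
  ext g
  rw [MonoidHom.mem_ker, ← hker, Units.ext_iff]
  change T (ρ g) = 1 ↔ _
  rw [← map_one T, T.injective.eq_iff]
end

section
/- Let F be a field and n a positive integer. If G is a group admitting an injective group homomorphism into GL(n,F), then the quotient group G/C(G) of G by its center admits an injective group homomorphism into GL(n²,F). In particular, if a group G is linear, then so is G/C(G). -/
/-- If a group `G` embeds into `GL(n, F)`, then `G / C(G)` embeds into `GL(n², F)`.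
In particular, if `G` is linear, then so is `G / C(G)`. -/
theorem stmt_1 (F : Type*) [Field F] (n : ℕ) (hn : 0 < n)
    (G : Type*) [Group G]
    (f : G →* Matrix.GeneralLinearGroup (Fin n) F) (hf : Function.Injective f) :
    ∃ ψ : G ⧸ Subgroup.center G →* Matrix.GeneralLinearGroup (Fin (n ^ 2)) F,
      Function.Injective ψ := by
  let V := Matrix (Fin n) (Fin n) F
  let c : G → (V →ₗ[F] V) := fun g =>
    (LinearMap.mulLeft F ((f g : V))) ∘ₗ (LinearMap.mulRight F ((f g⁻¹ : V)))
  have hc : ∀ g x, c g x = (f g : V) * (x * (f g⁻¹ : V)) := fun g x => rfl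
  have hcf : ∀ g h, c g (f h : V) = (f (g * h * g⁻¹) : V) := by
    intro g h
    rw [hc, map_mul, map_mul, Units.val_mul, Units.val_mul, mul_assoc]
  let A : Submodule F V := Submodule.span F (Set.range fun g => (f g : V))
  have hA : ∀ g, ∀ x ∈ A, c g x ∈ A := by
    intro g x hx
    have : A ≤ A.comap (c g) := by
      refine Submodule.span_le.2 ?_
      rintro _ ⟨h, rfl⟩
      change c g (f h : V) ∈ A
      rw [hcf]
      exact Submodule.subset_span ⟨_, rfl⟩
    exact this hx
  obtain ⟨B, hB⟩ := Submodule.exists_isCompl A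
  let φ : G →* Module.End F (A × B) :=
    { toFun := fun g => ((c g).restrict (hA g)).prodMap LinearMap.id
      map_one' := by
        refine LinearMap.ext ?_
        rintro ⟨⟨a, ha⟩, b⟩
        refine Prod.ext (Subtype.ext ?_) rfl
        change c 1 a = a
        simp [hc]
      map_mul' := by
        intro g h
        refine LinearMap.ext ?_
        rintro ⟨⟨a, ha⟩, b⟩
        refine Prod.ext (Subtype.ext ?_) rfl
        change c (g * h) a = c g (c h a)
        simp only [hc, map_mul, mul_inv_rev, Units.val_mul, mul_assoc] }
  have hφ : ∀ g x, (((φ g x).1 : A) : V) = c g x.1 := fun g x => rfl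
  have hφ2 : ∀ g x, (φ g x).2 = x.2 := fun g x => rfl
  have hdim : Module.finrank F (A × B) = n ^ 2 := by
    rw [(Submodule.prodEquivOfIsCompl A B hB).finrank_eq]
    simp [V, Module.finrank_matrix, sq]
  let b := Module.finBasisOfFinrankEq F (A × B) hdim
  let Φ : G →* Matrix.GeneralLinearGroup (Fin (n ^ 2)) F :=
    (((LinearMap.toMatrixAlgEquiv b : _ ≃ₐ[F] _) : _ →* Matrix (Fin (n ^ 2)) (Fin (n ^ 2)) F).comp
      φ).toHomUnits
  have hΦ : ∀ g, Φ g = 1 ↔ φ g = 1 := by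
    intro g
    rw [← Units.val_inj]
    change LinearMap.toMatrixAlgEquiv b (φ g) = 1 ↔ _
    rw [← map_one (LinearMap.toMatrixAlgEquiv b), (LinearMap.toMatrixAlgEquiv b).injective.eq_iff]
  have hker : Subgroup.center G = Φ.ker := by
    ext g
    rw [MonoidHom.mem_ker, hΦ, Subgroup.mem_center_iff]
    constructor
    · intro hg
      have hA1 : A ≤ LinearMap.eqLocus (c g) LinearMap.id := by
        refine Submodule.span_le.2 ?_
        rintro _ ⟨h, rfl⟩
        change c g (f h : V) = (f h : V)
        rw [hcf, ← hg h, mul_inv_cancel_right]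
      refine LinearMap.ext fun x => ?_
      exact Prod.ext (Subtype.ext (hA1 x.1.2)) rfl
    · intro hg h
      have hm : (f h : V) ∈ A := Submodule.subset_span ⟨h, rfl⟩
      have h1 := hφ g (⟨(f h : V), hm⟩, 0)
      rw [hg] at h1
      change (f h : V) = c g (f h : V) at h1
      rw [hcf] at h1
      have h2 := hf (Units.ext h1)
      exact eq_mul_inv_iff_mul_eq.1 h2
  exact ⟨(QuotientGroup.kerLift Φ).comp (QuotientGroup.quotientMulEquivOfEq hker).toMonoidHom,
    (QuotientGroup.kerLift_injective Φ).comp (QuotientGroup.quotientMulEquivOfEq hker).injective⟩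
end

section
/- Let G be a group and H a subgroup of G of finite index. Then G is linear if and only if H is linear. -/
/-- A group is linear if it has a faithful representation into `GL(m, F)`
for some field `F` and some positive integer `m`. -/
def IsLinearGroup (G : Type*) [Group G] : Prop :=
  ∃ (F : Type) (_ : Field F) (m : ℕ), 0 < m ∧
    ∃ φ : G →* Matrix.GeneralLinearGroup (Fin m) F, Function.Injective φ

theorem isLinearGroup_of_rep (G : Type*) [Group G] (F : Type) [Field F] (W : Type*) [AddCommGroup W]
    [Module F W] [Module.Finite F W] [Nontrivial W] (ρ : G →* (W →ₗ[F] W))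
    (hρ : Function.Injective ρ) :
    ∃ (m : ℕ), 0 < m ∧
    ∃ φ : G →* Matrix.GeneralLinearGroup (Fin m) F, Function.Injective φ := by
  refine ⟨Module.finrank F W, Module.finrank_pos, ?_⟩
  let e := LinearMap.toMatrixAlgEquiv (Module.finBasis F W)
  refine ⟨((e : (W →ₗ[F] W) →* _).comp ρ).toHomUnits, ?_⟩
  intro a b hab
  have h := congrArg Units.val hab
  apply hρ
  apply e.injective
  simpa using h

/-- If `H` is a finite index subgroup of `G`, then `G` is linear if and only if
`H` is linear. -/
theorem stmt_3 (G : Type*) [Group G] (H : Subgroup G) (hindex : H.index ≠ 0) :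
    IsLinearGroup G ↔ IsLinearGroup H := by
  classical
  constructor
  · rintro ⟨F, hF, m, hm, φ, hφ⟩
    exact ⟨F, hF, m, hm, φ.comp H.subtype, hφ.comp H.subtype_injective⟩
  rintro ⟨F, hF, m, hm, φ, hφ⟩
  refine ⟨F, hF, ?_⟩
  have : Nonempty (Fin m) := ⟨⟨0, hm⟩⟩
  let σ : Representation F H (Fin m → F) :=
    ((Matrix.toLinAlgEquiv' : Matrix (Fin m) (Fin m) F ≃ₐ[F] _) : _ →* _).comp
      ((Units.coeHom _).comp φ)
  have hσ : Function.Injective σ := by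
    intro a b hab
    exact hφ (Units.ext (Matrix.toLinAlgEquiv'.injective hab))
  let W := Representation.coindV H.subtype σ
  -- extension by zero
  let ext : (Fin m → F) → W := fun v => ⟨fun x => if h : x ∈ H then σ ⟨x, h⟩ v else 0, by
    rw [Representation.mem_coindV]
    intro g x
    by_cases hx : x ∈ H
    · have hgx : H.subtype g * x ∈ H := H.mul_mem g.2 hx
      rw [dif_pos hx, dif_pos hgx]
      have : (⟨H.subtype g * x, hgx⟩ : H) = g * ⟨x, hx⟩ := rfl
      rw [this, map_mul]; rfl
    · have hgx : H.subtype g * x ∉ H := fun h => hx ((H.mul_mem_cancel_left g.2).1 h)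
      rw [dif_neg hx, dif_neg hgx, map_zero]⟩
  have ext1 : ∀ v, (ext v).1 1 = v := by
    intro v
    have : (ext v).1 1 = σ 1 v := dif_pos H.one_mem
    rw [this, map_one]; rfl
  have : H.FiniteIndex := ⟨hindex⟩
  have : Finite (Quotient (QuotientGroup.rightRel H)) :=
    Finite.of_equiv _ (QuotientGroup.quotientRightRelEquivQuotientLeftRel H).symm
  let r : W →ₗ[F] (Quotient (QuotientGroup.rightRel H) → (Fin m → F)) :=
    { toFun := fun f q => f.1 q.out
      map_add' := fun _ _ => rfl
      map_smul' := fun _ _ => rfl }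
  have hr : Function.Injective r := by
    intro f f' h
    apply Subtype.ext
    funext x
    have hx := congrFun h (Quotient.mk _ x)
    change f.1 _ = f'.1 _ at hx
    have hrel := Quotient.mk_out (s := QuotientGroup.rightRel H) x
    rw [QuotientGroup.rightRel_apply] at hrel
    have key : ∀ f : W, f.1 x = σ ⟨_, hrel⟩ (f.1 (Quotient.mk (QuotientGroup.rightRel H) x).out) := by
      intro f
      rw [← (Representation.mem_coindV _ _ f.1).1 f.2]
      simp
    rw [key f, key f', hx]
  have : Module.Finite F W := Module.Finite.of_injective r hr
  have : Nontrivial W := by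
    refine ⟨ext 1, ext 0, fun h => ?_⟩
    have := congrArg (fun f : W => f.1 1) h
    simp only [ext1] at this
    exact one_ne_zero this
  refine isLinearGroup_of_rep G F W (Representation.coind H.subtype σ) ?_
  rw [injective_iff_map_eq_one]
  intro g hg
  have key : ∀ v, (ext v).1 g = v := by
    intro v
    have := congrArg (fun T : W →ₗ[F] W => (T (ext v)).1 1) hg
    change (ext v).1 (1 * g) = (ext v).1 1 at this
    rwa [one_mul, ext1] at this
  by_cases hgH : g ∈ H
  · have : σ ⟨g, hgH⟩ = σ 1 := by
      rw [map_one]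
      refine LinearMap.ext fun v => ?_
      have h1 : (ext v).1 g = σ ⟨g, hgH⟩ v := dif_pos hgH
      rw [← h1, key]; rfl
    exact congrArg Subtype.val (hσ this)
  · have h1 : (ext 1).1 g = 0 := dif_neg hgH
    rw [key] at h1
    exact absurd h1 one_ne_zero
end

section
/- For every n ≥ 2, the braid group B_n on n strings is linear; that is, there exist a field F and a positive integer m together with an injective group homomorphism B_n → GL(m,F). -/
/-- The braid relations on `n` strings, as elements of the free group on the
generators `σ_1, …, σ_{n-1}` (indexed by `Fin (n - 1)`): `σ_i σ_j = σ_j σ_i`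
whenever `|i - j| ≥ 2`, and `σ_i σ_{i+1} σ_i = σ_{i+1} σ_i σ_{i+1}`. -/
def braidRels (n : ℕ) : Set (FreeGroup (Fin (n - 1))) :=
  {r | (∃ i j : Fin (n - 1), (i : ℕ) + 2 ≤ (j : ℕ) ∧
          r = FreeGroup.of i * FreeGroup.of j * (FreeGroup.of i)⁻¹ * (FreeGroup.of j)⁻¹) ∨
       (∃ i j : Fin (n - 1), (j : ℕ) = (i : ℕ) + 1 ∧
          r = FreeGroup.of i * FreeGroup.of j * FreeGroup.of i *
              (FreeGroup.of j * FreeGroup.of i * FreeGroup.of j)⁻¹)}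

/-- The braid group `B_n` on `n` strings, presented by generators
`σ_1, …, σ_{n-1}` and the braid relations. -/
def BraidGroup (n : ℕ) : Type :=
  PresentedGroup (braidRels n)

instance (n : ℕ) : Group (BraidGroup n) := by
  unfold BraidGroup; infer_instance



section LK
variable {N : ℕ} {R : Type*} [CommRing R]

def LKT (t q : R) (a b : Fin N) (f : Fin N → Fin N → R) (i j : Fin N) : R :=
  if (j : ℕ) ≤ i then f i j
  else if (i : ℕ) = a ∧ (j : ℕ) = b then t * q ^ 2 * f a b
  else if (j : ℕ) = a then (1 - q) * f i a + q * f i b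
  else if (j : ℕ) = b then f i a + t * q ^ ((a : ℕ) - i + 1) * (q - 1) * f a b
  else if (i : ℕ) = a then t * q * (q - 1) * f a b + q * f b j
  else if (i : ℕ) = b then f a j + (1 - q) * f b j
  else if (i : ℕ) < a ∧ (b : ℕ) < j then f i j + t * q ^ ((a : ℕ) - i) * (q - 1) ^ 2 * f a b
  else f i j

lemma LKT_ge (t q : R) (a b : Fin N) (f : Fin N → Fin N → R) (i j : Fin N)
    (h : (j : ℕ) ≤ i) : LKT t q a b f i j = f i j := by simp only [LKT, if_pos h]

lemma LKT_ab (t q : R) (a b : Fin N) (f : Fin N → Fin N → R)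
    (h : (b : ℕ) = a + 1) : LKT t q a b f a b = t * q ^ 2 * f a b := by
  rw [LKT, if_neg (by omega), if_pos (by omega)]

lemma LKT_ia (t q : R) (a b : Fin N) (f : Fin N → Fin N → R) (i : Fin N)
    (h : (b : ℕ) = a + 1) (hi : (i : ℕ) < a) :
    LKT t q a b f i a = (1 - q) * f i a + q * f i b := by
  rw [LKT, if_neg (by omega), if_neg (by omega), if_pos rfl]

lemma LKT_ib (t q : R) (a b : Fin N) (f : Fin N → Fin N → R) (i : Fin N)
    (h : (b : ℕ) = a + 1) (hi : (i : ℕ) < a) :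
    LKT t q a b f i b = f i a + t * q ^ ((a : ℕ) - i + 1) * (q - 1) * f a b := by
  rw [LKT, if_neg (by omega), if_neg (by omega), if_neg (by omega), if_pos rfl]

lemma LKT_aj (t q : R) (a b : Fin N) (f : Fin N → Fin N → R) (j : Fin N)
    (h : (b : ℕ) = a + 1) (hj : (b : ℕ) < j) :
    LKT t q a b f a j = t * q * (q - 1) * f a b + q * f b j := by
  rw [LKT, if_neg (by omega), if_neg (by omega), if_neg (by omega), if_neg (by omega), if_pos rfl]

lemma LKT_bj (t q : R) (a b : Fin N) (f : Fin N → Fin N → R) (j : Fin N)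
    (h : (b : ℕ) = a + 1) (hj : (b : ℕ) < j) :
    LKT t q a b f b j = f a j + (1 - q) * f b j := by
  rw [LKT, if_neg (by omega), if_neg (by omega), if_neg (by omega), if_neg (by omega),
    if_neg (by omega), if_pos rfl]

lemma LKT_mid (t q : R) (a b : Fin N) (f : Fin N → Fin N → R) (i j : Fin N)
    (h : (b : ℕ) = a + 1) (hi : (i : ℕ) < a) (hj : (b : ℕ) < j) :
    LKT t q a b f i j = f i j + t * q ^ ((a : ℕ) - i) * (q - 1) ^ 2 * f a b := by
  rw [LKT, if_neg (by omega), if_neg (by omega), if_neg (by omega), if_neg (by omega),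
    if_neg (by omega), if_neg (by omega), if_pos (by omega)]

lemma LKT_lt (t q : R) (a b : Fin N) (f : Fin N → Fin N → R) (i j : Fin N)
    (h : (b : ℕ) = a + 1) (hj : (j : ℕ) < a) :
    LKT t q a b f i j = f i j := by
  by_cases h0 : (j : ℕ) ≤ i
  · exact LKT_ge _ _ _ _ _ _ _ h0
  rw [LKT, if_neg (by omega), if_neg (by omega), if_neg (by omega), if_neg (by omega),
    if_neg (by omega), if_neg (by omega), if_neg (by omega)]

lemma LKT_gt (t q : R) (a b : Fin N) (f : Fin N → Fin N → R) (i j : Fin N)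
    (h : (b : ℕ) = a + 1) (hi : (b : ℕ) < i) :
    LKT t q a b f i j = f i j := by
  by_cases h0 : (j : ℕ) ≤ i
  · exact LKT_ge _ _ _ _ _ _ _ h0
  rw [LKT, if_neg (by omega), if_neg (by omega), if_neg (by omega), if_neg (by omega),
    if_neg (by omega), if_neg (by omega), if_neg (by omega)]

lemma LKT_braid (t q : R) (a b c : Fin N) (hb : (b : ℕ) = a + 1) (hc : (c : ℕ) = b + 1)
    (f : Fin N → Fin N → R) :
    LKT t q a b (LKT t q b c (LKT t q a b f)) = LKT t q b c (LKT t q a b (LKT t q b c f)) := by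
  have e1 : ∀ i : Fin N, (i : ℕ) < a → q ^ ((b : ℕ) - i) = q ^ ((a : ℕ) - i) * q := by
    intro i hi
    rw [← pow_succ]; congr 1; omega
  have e2 : q ^ ((b : ℕ) - a) = q := by
    rw [show (b : ℕ) - a = 1 by omega, pow_one]
  funext i j
  by_cases h0 : (j : ℕ) ≤ i
  · simp (disch := omega) only [LKT_ge]
  have hi : (i : ℕ) < a ∨ i = a ∨ i = b ∨ i = c ∨ (c : ℕ) < i := by
    simp only [Fin.ext_iff]; omega
  have hj : (j : ℕ) < a ∨ j = a ∨ j = b ∨ j = c ∨ (c : ℕ) < j := by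
    simp only [Fin.ext_iff]; omega
  rcases hi with hi | rfl | rfl | rfl | hi <;> rcases hj with hj | rfl | rfl | rfl | hj <;>
    first
    | omega
    | (simp (disch := omega) only [LKT_ab, LKT_ia, LKT_ib, LKT_aj, LKT_bj, LKT_mid, LKT_lt, LKT_gt]
       try simp (disch := omega) only [pow_succ, e1, e2]
       try ring)

lemma LKT_comm (t q : R) (a b c d : Fin N) (hb : (b : ℕ) = a + 1) (hc : (b : ℕ) < c)
    (hd : (d : ℕ) = c + 1)
    (f : Fin N → Fin N → R) :
    LKT t q a b (LKT t q c d f) = LKT t q c d (LKT t q a b f) := by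
  have e2 : q ^ ((c : ℕ) - a) = q ^ ((c : ℕ) - b) * q := by
    rw [← pow_succ]; congr 1; omega
  funext i j
  by_cases h0 : (j : ℕ) ≤ i
  · simp (disch := omega) only [LKT_ge]
  have hi : (i : ℕ) < a ∨ i = a ∨ i = b ∨ ((b : ℕ) < i ∧ (i : ℕ) < c) ∨ i = c ∨ i = d ∨ (d : ℕ) < i := by
    simp only [Fin.ext_iff]; omega
  have hj : (j : ℕ) < a ∨ j = a ∨ j = b ∨ ((b : ℕ) < j ∧ (j : ℕ) < c) ∨ j = c ∨ j = d ∨ (d : ℕ) < j := by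
    simp only [Fin.ext_iff]; omega
  rcases hi with hi | rfl | rfl | hi | rfl | rfl | hi <;>
  rcases hj with hj | rfl | rfl | hj | rfl | rfl | hj <;>
    first
    | omega
    | (simp (disch := omega) only [LKT_ab, LKT_ia, LKT_ib, LKT_aj, LKT_bj, LKT_mid, LKT_lt, LKT_gt]
       try simp (disch := omega) only [pow_succ, e2]
       try ring)

lemma LKT_add (t q : R) (a b : Fin N) (f g : Fin N → Fin N → R) :
    LKT t q a b (f + g) = LKT t q a b f + LKT t q a b g := by
  funext i j
  simp only [LKT, Pi.add_apply]
  split_ifs <;> ring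

lemma LKT_smul (t q : R) (a b : Fin N) (c : R) (f : Fin N → Fin N → R) :
    LKT t q a b (c • f) = c • LKT t q a b f := by
  funext i j
  simp only [LKT, Pi.smul_apply, smul_eq_mul]
  split_ifs <;> ring

lemma LKT_map {S : Type*} [CommRing S] (φ : R →+* S) (t q : R) (a b : Fin N)
    (f : Fin N → Fin N → R) :
    (fun i j => φ (LKT t q a b f i j)) = LKT (φ t) (φ q) a b (fun i j => φ (f i j)) := by
  funext i j
  simp only [LKT]
  split_ifs <;> simp

end LK

lemma LKT_inj {N : ℕ} {F : Type*} [Field F] (t q : F) (ht : t ≠ 0) (hq : q ≠ 0) (a b : Fin N)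
    (hb : (b : ℕ) = a + 1) (f : Fin N → Fin N → F) (h : LKT t q a b f = 0) : f = 0 := by
  have H : ∀ i j, LKT t q a b f i j = 0 := fun i j => by rw [h]; rfl
  have hab : f a b = 0 := by
    have := H a b
    rw [LKT_ab _ _ _ _ _ hb] at this
    simpa [ht, hq] using this
  funext i j
  show f i j = 0
  by_cases h0 : (j : ℕ) ≤ i
  · have := H i j
    rwa [LKT_ge _ _ _ _ _ _ _ h0] at this
  have hi : (i : ℕ) < a ∨ i = a ∨ i = b ∨ (b : ℕ) < i := by
    simp only [Fin.ext_iff]; omega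
  have hj : (j : ℕ) < a ∨ j = a ∨ j = b ∨ (b : ℕ) < j := by
    simp only [Fin.ext_iff]; omega
  have Hij := H i j
  have Hia := H i a
  have Hib := H i b
  have Haj := H a j
  have Hbj := H b j
  rcases hi with hi | rfl | rfl | hi <;> rcases hj with hj | rfl | rfl | hj <;>
    first
    | omega
    | assumption
    | (simp (disch := omega) only [LKT_ab, LKT_ia, LKT_ib, LKT_aj, LKT_bj, LKT_mid, LKT_lt, LKT_gt,
        hab, mul_zero, add_zero, zero_add] at *
       simp_all)


section Garside
variable {G : Type*} [Group G]

def bP (s : ℕ → G) : ℕ → G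
  | 0 => 1
  | m + 1 => bP s m * s m

lemma bP_comm (s : ℕ → G) (K : ℕ)
    (hcomm : ∀ i j, i + 2 ≤ j → j < K → s i * s j = s j * s i) :
    ∀ m j, m + 1 ≤ j → j < K → bP s m * s j = s j * bP s m := by
  intro m
  induction m with
  | zero => intro j _ _; simp [bP]
  | succ m ih =>
    intro j h1 h2
    rw [bP, mul_assoc, hcomm m j (by omega) h2, ← mul_assoc, ih j (by omega) h2, mul_assoc]

lemma bP_shift (s : ℕ → G) (K : ℕ)
    (hcomm : ∀ i j, i + 2 ≤ j → j < K → s i * s j = s j * s i)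
    (hbr : ∀ i, i + 1 < K → s i * s (i + 1) * s i = s (i + 1) * s i * s (i + 1)) (i : ℕ) :
    ∀ m, i + 2 ≤ m → m ≤ K → bP s m * s i = s (i + 1) * bP s m := by
  intro m hm
  induction m, hm using Nat.le_induction with
  | base =>
    intro hK
    have h1 := bP_comm s K hcomm i (i + 1) le_rfl (by omega)
    have h2 := hbr i (by omega)
    calc bP s i * s i * s (i + 1) * s i = bP s i * (s i * s (i + 1) * s i) := by group
      _ = bP s i * s (i + 1) * s i * s (i + 1) := by rw [h2]; group
      _ = s (i + 1) * (bP s i * s i * s (i + 1)) := by rw [h1]; group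
  | succ m hm ih =>
    intro hK
    rw [bP, mul_assoc, ← hcomm i m hm (by omega), ← mul_assoc, ih (by omega), mul_assoc]

lemma bP_pos (s : ℕ → G) (K : ℕ) (S : Submonoid G) (hS : ∀ k < K, s k ∈ S) :
    ∀ m ≤ K, bP s m ∈ S := by
  intro m
  induction m with
  | zero => intro _; exact S.one_mem
  | succ m ih => intro h; exact S.mul_mem (ih (by omega)) (hS m (by omega))

lemma bP_succ' (s : ℕ → G) : ∀ m, bP s (m + 1) = s 0 * bP (fun i => s (i + 1)) m := by
  intro m
  induction m with
  | zero => simp [bP]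
  | succ m ih => rw [bP, ih, mul_assoc]; rfl

lemma bP_Q (s : ℕ → G) (K : ℕ) (d : G)
    (hd : ∀ i, i + 2 ≤ K → d * s i = s (i + 1) * d) :
    ∀ m, m + 1 ≤ K → d * bP s m = bP (fun i => s (i + 1)) m * d := by
  intro m
  induction m with
  | zero => intro _; simp [bP]
  | succ m ih =>
    intro h
    rw [bP, bP, ← mul_assoc, ih (by omega), mul_assoc, hd m (by omega), mul_assoc]

lemma frac (s : ℕ → G) (K : ℕ) (hK : 0 < K)
    (hcomm : ∀ i j, i + 2 ≤ j → j < K → s i * s j = s j * s i)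
    (hbr : ∀ i, i + 1 < K → s i * s (i + 1) * s i = s (i + 1) * s i * s (i + 1))
    (hgen : Subgroup.closure {x | ∃ k < K, s k = x} = ⊤) (g : G) :
    ∃ p ∈ Submonoid.closure {x | ∃ k < K, s k = x},
      ∃ r ∈ Submonoid.closure {x | ∃ k < K, s k = x}, g * r = p := by
  set S := Submonoid.closure {x | ∃ k < K, s k = x} with hSdef
  have hS : ∀ k < K, s k ∈ S := fun k hk => Submonoid.subset_closure ⟨k, hk, rfl⟩
  obtain ⟨d, hdd⟩ : ∃ d, d = bP s K := ⟨_, rfl⟩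
  have hd : ∀ i, i + 2 ≤ K → d * s i = s (i + 1) * d := fun i hi => by
    rw [hdd]; exact bP_shift s K hcomm hbr i K hi le_rfl
  have hdS : d ∈ S := hdd ▸ bP_pos s K S hS K le_rfl
  obtain ⟨K', rfl⟩ : ∃ K', K = K' + 1 := ⟨K - 1, by omega⟩
  obtain ⟨e, he⟩ : ∃ e, e = bP (fun i => s (i + 1)) K' := ⟨_, rfl⟩
  have heS : e ∈ S := he ▸ bP_pos _ K' S (fun k hk => hS (k + 1) (by omega)) K' le_rfl
  have h1 : d = s 0 * e := by rw [hdd, bP_succ', he]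
  have h2 : d * bP s K' = e * d := by rw [he]; exact bP_Q s (K' + 1) d hd K' le_rfl
  have h3 : d ^ 2 * s K' = s 0 * d ^ 2 := by
    have : d * d = e * d * s K' := by rw [← h2, mul_assoc]; congr 1
    calc d ^ 2 * s K' = s 0 * (e * d * s K') := by rw [pow_two]; nth_rw 1 [h1]; group
      _ = _ := by rw [← this, pow_two]
  have h4 : ∀ a i, i + a < K' + 1 → d ^ a * s i = s (i + a) * d ^ a := by
    intro a
    induction a with
    | zero => intro i _; simp
    | succ a ih =>
      intro i hi
      rw [pow_succ, mul_assoc, hd i (by omega), ← mul_assoc, ih (i + 1) (by omega), mul_assoc]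
      congr 2; omega
  have h5 : ∀ i < K' + 1, d ^ (K' + 2) * s i = s i * d ^ (K' + 2) := by
    intro i hi
    have ha := h4 (K' - i) i (by omega)
    have hb := h4 i 0 (by omega)
    rw [show i + (K' - i) = K' by omega] at ha
    rw [zero_add] at hb
    rw [show K' + 2 = i + (2 + (K' - i)) by omega, pow_add, pow_add]
    calc d ^ i * (d ^ 2 * d ^ (K' - i)) * s i = d ^ i * (d ^ 2 * (d ^ (K' - i) * s i)) := by group
      _ = d ^ i * (d ^ 2 * s K') * d ^ (K' - i) := by rw [ha]; simp only [mul_assoc]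
      _ = d ^ i * s 0 * d ^ 2 * d ^ (K' - i) := by rw [h3]; simp only [mul_assoc]
      _ = _ := by rw [hb]; simp only [mul_assoc]
  obtain ⟨z, hz⟩ : ∃ z, z = d ^ (K' + 2) := ⟨_, rfl⟩
  have hzS : z ∈ S := hz ▸ S.pow_mem hdS _
  have hzc : ∀ x : G, z * x = x * z := by
    have : Subgroup.closure {x | ∃ k < K' + 1, s k = x} ≤ Subgroup.centralizer {z} := by
      rw [Subgroup.closure_le]
      rintro x ⟨k, hk, rfl⟩
      simp only [SetLike.mem_coe, Subgroup.mem_centralizer_iff, Set.mem_singleton_iff]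
      rintro _ rfl
      rw [hz]; exact h5 k hk
    rw [hgen] at this
    intro x
    exact Subgroup.mem_centralizer_iff.1 (this (Subgroup.mem_top x)) z rfl
  have hzpc : ∀ (m : ℕ) (x : G), z ^ m * x = x * z ^ m := fun m x =>
    ((show Commute z x from hzc x).pow_left m).eq
  have key : ∃ m : ℕ, g * z ^ m ∈ S := by
    have hg : g ∈ (Subgroup.closure {x | ∃ k < K' + 1, s k = x}).toSubmonoid := by
      rw [hgen]; trivial
    rw [Subgroup.closure_toSubmonoid] at hg
    induction hg using Submonoid.closure_induction with
    | mem x hx =>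
      rcases hx with ⟨k, hk, rfl⟩ | ⟨k, hk, hx⟩
      · exact ⟨0, by simpa using hS k hk⟩
      · refine ⟨1, ?_⟩
        have hx' : x = (s k)⁻¹ := by rw [hx, inv_inv]
        have ha := h4 k 0 (by omega)
        rw [zero_add] at ha
        have : x * z ^ 1 = d ^ k * e * d ^ (K' + 1 - k) := by
          rw [hx', inv_mul_eq_iff_eq_mul]
          rw [← mul_assoc, ← mul_assoc, ← ha, mul_assoc (d ^ k), ← h1, pow_one, hz, ← pow_succ,
            ← pow_add]
          congr 1; omega
        rw [this]
        exact S.mul_mem (S.mul_mem (S.pow_mem hdS _) heS) (S.pow_mem hdS _)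
    | one => exact ⟨0, by simp⟩
    | mul x y _ _ ihx ihy =>
      obtain ⟨m, hm⟩ := ihx
      obtain ⟨m', hm'⟩ := ihy
      refine ⟨m + m', ?_⟩
      have : x * y * z ^ (m + m') = (x * z ^ m) * (y * z ^ m') := by
        rw [pow_add, mul_assoc x (z ^ m), ← mul_assoc (z ^ m), hzpc m y]
        simp only [mul_assoc]
      rw [this]
      exact S.mul_mem hm hm'
  obtain ⟨m, hm⟩ := key
  exact ⟨_, hm, z ^ m, S.pow_mem hzS m, rfl⟩

end Garside

section Final
variable {n : ℕ}

def blo (k : Fin (n - 1)) : Fin n := ⟨k, by omega⟩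
def bhi (k : Fin (n - 1)) : Fin n := ⟨k + 1, by omega⟩

lemma blo_val (k : Fin (n - 1)) : ((blo k : Fin n) : ℕ) = k := rfl
lemma bhi_val (k : Fin (n - 1)) : ((bhi k : Fin n) : ℕ) = k + 1 := rfl

def bact {R : Type*} [CommRing R] (t q : R) (w : List (Fin (n - 1))) (f : Fin n → Fin n → R) :
    Fin n → Fin n → R :=
  w.foldr (fun k g => LKT t q (blo k) (bhi k) g) f

lemma bact_append {R : Type*} [CommRing R] (t q : R) (w w' : List (Fin (n - 1)))
    (f : Fin n → Fin n → R) : bact t q (w ++ w') f = bact t q w (bact t q w' f) := by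
  simp [bact]

lemma bact_single {R : Type*} [CommRing R] (t q : R) (k : Fin (n - 1))
    (f : Fin n → Fin n → R) : bact t q [k] f = LKT t q (blo k) (bhi k) f := rfl

lemma bact_add {R : Type*} [CommRing R] (t q : R) (w : List (Fin (n - 1)))
    (f g : Fin n → Fin n → R) : bact t q w (f + g) = bact t q w f + bact t q w g := by
  induction w with
  | nil => rfl
  | cons k w ih =>
    have : ∀ f : Fin n → Fin n → R, bact t q (k :: w) f =
      LKT t q (blo k) (bhi k) (bact t q w f) := fun _ => rfl
    rw [this, this, this, ih, LKT_add]

lemma bact_smul {R : Type*} [CommRing R] (t q : R) (w : List (Fin (n - 1)))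
    (c : R) (f : Fin n → Fin n → R) : bact t q w (c • f) = c • bact t q w f := by
  induction w with
  | nil => rfl
  | cons k w ih =>
    have : ∀ f : Fin n → Fin n → R, bact t q (k :: w) f =
      LKT t q (blo k) (bhi k) (bact t q w f) := fun _ => rfl
    rw [this, this, ih, LKT_smul]

lemma bact_map {R S : Type*} [CommRing R] [CommRing S] (φ : R →+* S) (t q : R)
    (w : List (Fin (n - 1))) (f : Fin n → Fin n → R) :
    (fun i j => φ (bact t q w f i j)) = bact (φ t) (φ q) w (fun i j => φ (f i j)) := by
  induction w with
  | nil => rfl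
  | cons k w ih =>
    have h1 : bact t q (k :: w) f = LKT t q (blo k) (bhi k) (bact t q w f) := rfl
    have h2 : bact (φ t) (φ q) (k :: w) (fun i j => φ (f i j)) =
      LKT (φ t) (φ q) (blo k) (bhi k) (bact (φ t) (φ q) w (fun i j => φ (f i j))) := rfl
    rw [h1, h2, LKT_map, ih]

lemma bact_nonneg (w : List (Fin (n - 1))) (f : Fin n → Fin n → ℚ) (hf : ∀ i j, 0 ≤ f i j) :
    ∀ i j, 0 ≤ bact 0 (1 / 2) w f i j := by
  induction w with
  | nil => exact hf
  | cons k w ih =>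
    intro i j
    have h1 : bact 0 (1 / 2) (k :: w) f = LKT 0 (1 / 2) (blo k) (bhi k) (bact 0 (1 / 2) w f) := rfl
    rw [h1]
    generalize bact 0 (1 / 2) w f = g at ih
    simp only [LKT]
    have e1 := ih i j
    have e2 := ih i (blo k)
    have e3 := ih i (bhi k)
    have e4 := ih (blo k) j
    have e5 := ih (bhi k) j
    split_ifs <;> linarith

def bdl (a b : Fin n) (i j : Fin n) : ℚ := if (i : ℕ) = a ∧ (j : ℕ) = b then 1 else 0

lemma bdl_nonneg (a b : Fin n) (i j : Fin n) : 0 ≤ bdl a b i j := by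
  unfold bdl; split_ifs <;> norm_num

lemma bdl_ne (a b : Fin n) : bdl a b ≠ 0 := by
  intro h
  have := congrFun (congrFun h a) b
  simp [bdl] at this

lemma bL1 (a b : Fin n) (hb : (b : ℕ) = a + 1) : LKT 0 (1 / 2) a b (bdl a b) = 0 := by
  funext i j
  simp only [LKT, bdl, Pi.zero_apply]
  split_ifs <;> first | (norm_num; done) | omega | (exfalso; simp only [true_and, and_true] at *; omega)

lemma bL2 (a b c d : Fin n) (hb : (b : ℕ) = a + 1) (hd : (d : ℕ) = c + 1)
    (h : (b : ℕ) < c ∨ (d : ℕ) < a) : LKT 0 (1 / 2) a b (bdl c d) = bdl c d := by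
  funext i j
  simp only [LKT, bdl]
  split_ifs <;> first | (norm_num; done) | omega | (exfalso; simp only [true_and, and_true] at *; omega)

lemma bL3 (a b c : Fin n) (hb : (b : ℕ) = a + 1) (hc : (c : ℕ) = b + 1) :
    LKT 0 (1 / 2) b c (bdl a b) = (1 / 2 : ℚ) • bdl a b + (1 : ℚ) • bdl a c := by
  funext i j
  simp only [LKT, bdl, Pi.add_apply, Pi.smul_apply, smul_eq_mul]
  split_ifs <;> first | (norm_num; done) | omega | (exfalso; simp only [true_and, and_true] at *; omega)

lemma bL3' (a b c : Fin n) (hb : (b : ℕ) = a + 1) (hc : (c : ℕ) = b + 1) :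
    LKT 0 (1 / 2) a b (bdl a c) = (1 : ℚ) • bdl b c := by
  funext i j
  simp only [LKT, bdl, Pi.smul_apply, smul_eq_mul]
  split_ifs <;> first | (norm_num; done) | omega | (exfalso; simp only [true_and, and_true] at *; omega)

lemma bL4 (a b c : Fin n) (hb : (b : ℕ) = a + 1) (hc : (c : ℕ) = b + 1) :
    LKT 0 (1 / 2) a b (bdl b c) = (1 / 2 : ℚ) • bdl b c + (1 / 2 : ℚ) • bdl a c := by
  funext i j
  simp only [LKT, bdl, Pi.add_apply, Pi.smul_apply, smul_eq_mul]
  split_ifs <;> first | (norm_num; done) | omega | (exfalso; simp only [true_and, and_true] at *; omega)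

lemma bL4' (a b c : Fin n) (hb : (b : ℕ) = a + 1) (hc : (c : ℕ) = b + 1) :
    LKT 0 (1 / 2) b c (bdl a c) = (1 / 2 : ℚ) • bdl a b := by
  funext i j
  simp only [LKT, bdl, Pi.smul_apply, smul_eq_mul]
  split_ifs <;> first | (norm_num; done) | omega | (exfalso; simp only [true_and, and_true] at *; omega)

/-- generator -/
def bs (k : Fin (n - 1)) : BraidGroup n := PresentedGroup.of (rels := braidRels n) k

lemma bs_comm (i j : Fin (n - 1)) (h : (i : ℕ) + 2 ≤ j) : bs i * bs j = bs j * bs i := by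
  have : PresentedGroup.mk (braidRels n) (FreeGroup.of i * FreeGroup.of j * (FreeGroup.of i)⁻¹ *
      (FreeGroup.of j)⁻¹) = 1 :=
    PresentedGroup.one_of_mem (Or.inl ⟨i, j, h, rfl⟩)
  simp only [map_mul, map_inv] at this
  have h2 : bs i * bs j * (bs i)⁻¹ * (bs j)⁻¹ = 1 := this
  rw [mul_inv_eq_one, mul_inv_eq_iff_eq_mul] at h2
  exact h2

lemma bs_braid (i j : Fin (n - 1)) (h : (j : ℕ) = i + 1) :
    bs i * bs j * bs i = bs j * bs i * bs j := by
  have : PresentedGroup.mk (braidRels n) (FreeGroup.of i * FreeGroup.of j * FreeGroup.of i *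
      (FreeGroup.of j * FreeGroup.of i * FreeGroup.of j)⁻¹) = 1 :=
    PresentedGroup.one_of_mem (Or.inr ⟨i, j, h, rfl⟩)
  simp only [map_mul, map_inv] at this
  have h2 : bs i * bs j * bs i * (bs j * bs i * bs j)⁻¹ = 1 := this
  rwa [mul_inv_eq_one] at h2

def bprod (w : List (Fin (n - 1))) : BraidGroup n := (w.map bs).prod

lemma bprod_append (w w' : List (Fin (n - 1))) : bprod (w ++ w') = bprod w * bprod w' := by
  simp [bprod]

lemma bprod_single (k : Fin (n - 1)) : bprod [k] = bs k := by
  simp [bprod]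

noncomputable def bequiv {F : Type} [Field F] (t q : F) (ht : t ≠ 0) (hq : q ≠ 0)
    (k : Fin (n - 1)) : (Fin n → Fin n → F) ≃ₗ[F] (Fin n → Fin n → F) :=
  LinearEquiv.ofInjectiveEndo
    { toFun := LKT t q (blo k) (bhi k)
      map_add' := LKT_add t q _ _
      map_smul' := LKT_smul t q _ _ }
    (by
      rw [← LinearMap.ker_eq_bot, LinearMap.ker_eq_bot']
      intro f hf
      exact LKT_inj t q ht hq (blo k) (bhi k) rfl f hf)

lemma bequiv_apply {F : Type} [Field F] (t q : F) (ht : t ≠ 0) (hq : q ≠ 0)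
    (k : Fin (n - 1)) (f : Fin n → Fin n → F) :
    bequiv t q ht hq k f = LKT t q (blo k) (bhi k) f := rfl

noncomputable def brho {F : Type} [Field F] (t q : F) (ht : t ≠ 0) (hq : q ≠ 0) :
    BraidGroup n →* ((Fin n → Fin n → F) ≃ₗ[F] (Fin n → Fin n → F)) :=
  PresentedGroup.toGroup (rels := braidRels n) (f := bequiv t q ht hq) (by
    rintro r (⟨i, j, h, rfl⟩ | ⟨i, j, h, rfl⟩)
    · simp only [map_mul, map_inv, FreeGroup.lift_apply_of]
      rw [mul_inv_eq_one, mul_inv_eq_iff_eq_mul]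
      ext1 f
      simp only [LinearEquiv.mul_apply, bequiv_apply]
      exact LKT_comm t q _ _ _ _ rfl (by rw [blo_val, bhi_val]; omega) rfl f
    · simp only [map_mul, map_inv, FreeGroup.lift_apply_of]
      rw [mul_inv_eq_one]
      ext1 f
      simp only [LinearEquiv.mul_apply, bequiv_apply]
      have hj : (blo j : Fin n) = bhi i := Fin.ext h
      rw [hj]
      exact LKT_braid t q _ _ _ rfl (by rw [bhi_val, bhi_val, h]) f)

lemma brho_bs {F : Type} [Field F] (t q : F) (ht : t ≠ 0) (hq : q ≠ 0) (k : Fin (n - 1)) :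
    brho t q ht hq (bs k) = bequiv t q ht hq k :=
  PresentedGroup.toGroup.of _

lemma brho_prod {F : Type} [Field F] (t q : F) (ht : t ≠ 0) (hq : q ≠ 0)
    (w : List (Fin (n - 1))) (f : Fin n → Fin n → F) :
    brho t q ht hq (bprod w) f = bact t q w f := by
  induction w with
  | nil => simp [bprod, bact]
  | cons k w ih =>
    have h1 : bprod (k :: w) = bs k * bprod w := by simp [bprod]
    have h2 : bact t q (k :: w) f = LKT t q (blo k) (bhi k) (bact t q w f) := rfl
    rw [h1, h2, map_mul, LinearEquiv.mul_apply, ih, brho_bs, bequiv_apply]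

lemma bhalf_ne : (algebraMap (Polynomial ℚ) (RatFunc ℚ)) (Polynomial.C (1 / 2 : ℚ)) ≠ 0 := by
  rw [Ne, map_eq_zero_iff _ (RatFunc.algebraMap_injective ℚ), Polynomial.C_eq_zero]
  norm_num

lemma bX_ne : (algebraMap (Polynomial ℚ) (RatFunc ℚ)) Polynomial.X ≠ 0 := by
  rw [Ne, map_eq_zero_iff _ (RatFunc.algebraMap_injective ℚ)]
  exact Polynomial.X_ne_zero

noncomputable def bRho (n : ℕ) : BraidGroup n →*
    ((Fin n → Fin n → RatFunc ℚ) ≃ₗ[RatFunc ℚ] (Fin n → Fin n → RatFunc ℚ)) :=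
  brho _ _ bX_ne bhalf_ne

lemma bdescent (w w' : List (Fin (n - 1))) (h : bRho n (bprod w) = bRho n (bprod w'))
    (f : Fin n → Fin n → ℚ) : bact 0 (1 / 2) w f = bact 0 (1 / 2) w' f := by
  have h1 : bact (Polynomial.X : Polynomial ℚ) (Polynomial.C (1 / 2)) w
        (fun i j => Polynomial.C (f i j)) =
      bact (Polynomial.X : Polynomial ℚ) (Polynomial.C (1 / 2)) w'
        (fun i j => Polynomial.C (f i j)) := by
    have h2 := DFunLike.congr_fun h
      (fun i j => algebraMap (Polynomial ℚ) (RatFunc ℚ) (Polynomial.C (f i j)))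
    rw [bRho, brho_prod, brho_prod, ← bact_map (algebraMap (Polynomial ℚ) (RatFunc ℚ)) _ _ _
      (fun i j => Polynomial.C (f i j)), ← bact_map (algebraMap (Polynomial ℚ) (RatFunc ℚ)) _ _ _
      (fun i j => Polynomial.C (f i j))] at h2
    funext i j
    exact RatFunc.algebraMap_injective ℚ (congrFun (congrFun h2 i) j)
  have e := fun w : List (Fin (n - 1)) => bact_map (Polynomial.evalRingHom (0 : ℚ))
    (Polynomial.X : Polynomial ℚ) (Polynomial.C (1 / 2)) w (fun i j => Polynomial.C (f i j))
  have e1 := e w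
  have e2 := e w'
  rw [h1, e2] at e1
  simp only [Polynomial.coe_evalRingHom, Polynomial.eval_X, Polynomial.eval_C] at e1
  exact e1.symm

/-- positivity step -/
lemma bpos_step (w : List (Fin (n - 1))) (f g : Fin n → Fin n → ℚ) (hf : ∀ i j, 0 ≤ f i j)
    (hg : ∀ i j, 0 ≤ g i j) (x y : ℚ) (hx : 0 < x) (hy : 0 < y)
    (h : bact 0 (1 / 2) w f ≠ 0 ∨ bact 0 (1 / 2) w g ≠ 0) :
    bact 0 (1 / 2) w (x • f + y • g) ≠ 0 := by
  intro h0
  rw [bact_add, bact_smul, bact_smul] at h0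
  have H : ∀ i j, bact 0 (1 / 2) w f i j = 0 ∧ bact 0 (1 / 2) w g i j = 0 := by
    intro i j
    have h1 := bact_nonneg w f hf i j
    have h2 := bact_nonneg w g hg i j
    have h3 := congrFun (congrFun h0 i) j
    simp only [Pi.add_apply, Pi.smul_apply, smul_eq_mul, Pi.zero_apply] at h3
    have h4 := mul_nonneg hx.le h1
    have h5 := mul_nonneg hy.le h2
    constructor
    · have : x * bact 0 (1 / 2) w f i j = 0 := by linarith
      exact (mul_eq_zero.1 this).resolve_left hx.ne'
    · have : y * bact 0 (1 / 2) w g i j = 0 := by linarith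
      exact (mul_eq_zero.1 this).resolve_left hy.ne'
  rcases h with h | h
  · exact h (funext fun i => funext fun j => (H i j).1)
  · exact h (funext fun i => funext fun j => (H i j).2)

lemma badj (i j : Fin (n - 1)) (h : (j : ℕ) = i + 1 ∨ (i : ℕ) = j + 1) :
    ∃ g : Fin n → Fin n → ℚ, (∀ i j, 0 ≤ g i j) ∧ (∃ x y : ℚ, 0 < x ∧ 0 < y ∧
      LKT 0 (1 / 2) (blo j) (bhi j) (bdl (blo i) (bhi i)) = x • bdl (blo i) (bhi i) + y • g) ∧
      ∃ z : ℚ, 0 < z ∧ LKT 0 (1 / 2) (blo i) (bhi i) g = z • bdl (blo j) (bhi j) := by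
  rcases h with h | h
  · have hj : (blo j : Fin n) = bhi i := Fin.ext h
    rw [hj]
    have hc : ((bhi j : Fin n) : ℕ) = (bhi i : Fin n) + 1 := by rw [bhi_val, bhi_val, h]
    exact ⟨bdl (blo i) (bhi j), bdl_nonneg _ _,
      ⟨1 / 2, 1, by norm_num, by norm_num, bL3 _ _ _ rfl hc⟩, 1, by norm_num, bL3' _ _ _ rfl hc⟩
  · have hi : (blo i : Fin n) = bhi j := Fin.ext h
    rw [hi]
    have hc : ((bhi i : Fin n) : ℕ) = (bhi j : Fin n) + 1 := by rw [bhi_val, bhi_val, h]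
    exact ⟨bdl (blo j) (bhi i), bdl_nonneg _ _,
      ⟨1 / 2, 1 / 2, by norm_num, by norm_num, bL4 _ _ _ rfl hc⟩, 1 / 2, by norm_num,
        bL4' _ _ _ rfl hc⟩

lemma bkey (L : ℕ) : ∀ w : List (Fin (n - 1)), w.length = L → ∀ i : Fin (n - 1),
    bact 0 (1 / 2) w (bdl (blo i) (bhi i)) ≠ 0 ∨
      ∃ v : List (Fin (n - 1)), v.length + 1 = L ∧ bprod w = bprod v * bs i := by
  induction L using Nat.strong_induction_on with
  | _ L ih =>
  intro w hw i
  rcases w.eq_nil_or_concat' with rfl | ⟨v, j, rfl⟩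
  · left; exact bdl_ne _ _
  have hL : v.length + 1 = L := by simpa using hw
  rw [bprod_append, bprod_single, bact_append, bact_single]
  by_cases hij : i = j
  · subst hij
    exact Or.inr ⟨v, hL, rfl⟩
  have hij' : (i : ℕ) ≠ j := fun h => hij (Fin.ext h)
  by_cases hadj : (j : ℕ) = i + 1 ∨ (i : ℕ) = j + 1
  · obtain ⟨g, hg, ⟨x, y, hx, hy, hxy⟩, z, hz, hgz⟩ := badj i j hadj
    rw [hxy]
    rcases ih v.length (by omega) v rfl i with h | ⟨v', hv', hv⟩
    · left
      exact bpos_step v _ g (bdl_nonneg _ _) hg x y hx hy (Or.inl h)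
    · rcases ih v'.length (by omega) v' rfl j with h | ⟨v'', hv'', hv2⟩
      · left
        refine bpos_step v _ g (bdl_nonneg _ _) hg x y hx hy (Or.inr ?_)
        rw [bdescent v (v' ++ [i]) (by rw [hv, bprod_append, bprod_single]), bact_append,
          bact_single, hgz, bact_smul]
        intro h0
        exact h ((smul_eq_zero.1 h0).resolve_left hz.ne')
      · right
        refine ⟨v'' ++ [i, j], by simp; omega, ?_⟩
        have hb : bs i * bs j * bs i = bs j * bs i * bs j := by
          rcases hadj with h | h
          · exact bs_braid i j h
          · exact (bs_braid j i h).symm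
        have h3 : bprod [i, j] = bs i * bs j := by simp [bprod]
        rw [bprod_append, h3, hv, hv2, mul_assoc, mul_assoc, ← mul_assoc (bs j), ← hb]
        simp only [mul_assoc]
  · have hc : bs i * bs j = bs j * bs i := by
      rcases Nat.lt_or_gt_of_ne hij' with h | h
      · exact bs_comm i j (by omega)
      · exact (bs_comm j i (by omega)).symm
    rw [bL2 _ _ _ _ rfl rfl (by rw [bhi_val, bhi_val, blo_val, blo_val]; omega)]
    rcases ih v.length (by omega) v rfl i with h | ⟨v', hv', hv⟩
    · exact Or.inl h
    · right
      refine ⟨v' ++ [j], by simp; omega, ?_⟩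
      rw [bprod_append, bprod_single, hv, mul_assoc, hc, mul_assoc]

lemma bmon (L : ℕ) : ∀ w : List (Fin (n - 1)), w.length = L → ∀ w' : List (Fin (n - 1)),
    bRho n (bprod w) = bRho n (bprod w') → bprod w = bprod w' := by
  induction L with
  | zero =>
    intro w hw w' h
    obtain rfl := List.length_eq_zero_iff.1 hw
    rcases w'.eq_nil_or_concat' with rfl | ⟨v, j, rfl⟩
    · rfl
    · exfalso
      have h1 := bdescent _ _ h (bdl (blo j) (bhi j))
      rw [bact_append, bact_single, bL1 _ _ rfl, ← zero_smul ℚ (0 : Fin n → Fin n → ℚ),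
        bact_smul, zero_smul] at h1
      exact bdl_ne _ _ h1
  | succ L ih =>
    intro w hw w' h
    rcases w.eq_nil_or_concat' with rfl | ⟨v, j, rfl⟩
    · simp at hw
    have h1 := bdescent _ _ h (bdl (blo j) (bhi j))
    rw [bact_append, bact_single, bL1 _ _ rfl, ← zero_smul ℚ (0 : Fin n → Fin n → ℚ),
        bact_smul, zero_smul] at h1
    rcases bkey w'.length w' rfl j with h2 | ⟨v', _, hv'⟩
    · exact absurd h1.symm h2
    · rw [hv', bprod_append, bprod_single, map_mul, map_mul] at h
      rw [hv', bprod_append, bprod_single, ih v (by simpa using hw) v' (mul_right_cancel h)]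

lemma bRho_inj (hn : 2 ≤ n) : Function.Injective (bRho n) := by
  rw [injective_iff_map_eq_one]
  intro g hg
  let s : ℕ → BraidGroup n := fun k => if h : k < n - 1 then bs ⟨k, h⟩ else 1
  have hs : ∀ k (h : k < n - 1), s k = bs ⟨k, h⟩ := fun k h => dif_pos h
  obtain ⟨p, hp, r, hr, hgr⟩ := frac s (n - 1) (by omega)
    (fun i j h h' => by
      rw [hs i (by omega), hs j h']; exact bs_comm _ _ h)
    (fun i h => by
      rw [hs i (by omega), hs (i + 1) h]; exact bs_braid _ _ rfl)
    (by
      have := PresentedGroup.closure_range_of (braidRels n)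
      refine Eq.trans ?_ this
      show Subgroup.closure {x | ∃ k < n - 1, s k = x} =
        Subgroup.closure (Set.range (bs : Fin (n - 1) → BraidGroup n))
      congr 1
      ext x
      constructor
      · rintro ⟨k, hk, rfl⟩
        exact ⟨⟨k, hk⟩, (hs k hk).symm⟩
      · rintro ⟨k, rfl⟩
        exact ⟨k, k.2, hs k k.2⟩) g
  have hword : ∀ x ∈ Submonoid.closure {x | ∃ k < n - 1, s k = x}, ∃ w, bprod w = x := by
    intro x hx
    induction hx using Submonoid.closure_induction with
    | mem x hx =>
      obtain ⟨k, hk, rfl⟩ := hx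
      exact ⟨[⟨k, hk⟩], by rw [bprod_single, hs]⟩
    | one => exact ⟨[], rfl⟩
    | mul x y _ _ hx hy =>
      obtain ⟨w, rfl⟩ := hx
      obtain ⟨w', rfl⟩ := hy
      exact ⟨w ++ w', bprod_append w w'⟩
  obtain ⟨w, rfl⟩ := hword p hp
  obtain ⟨w', rfl⟩ := hword r hr
  have h1 : bRho n (bprod w') = bRho n (bprod w) := by
    rw [← hgr, map_mul, hg, one_mul]
  have h2 := bmon _ w' rfl w h1
  rw [← h2] at hgr
  exact mul_eq_right.1 hgr

end Final

/-- **Bigelow.** The braid groups are linear: for every `n ≥ 2` there is a field `F`,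
a positive integer `m` and an injective homomorphism `B_n → GL(m, F)`. -/
theorem stmt_4 (n : ℕ) (hn : 2 ≤ n) :
    ∃ (F : Type) (_ : Field F) (m : ℕ), 0 < m ∧
      ∃ φ : BraidGroup n →* Matrix.GeneralLinearGroup (Fin m) F,
        Function.Injective φ := by
  let V := Fin n → Fin n → RatFunc ℚ
  let b := Module.finBasis (RatFunc ℚ) V
  haveI : Nonempty (Fin n) := ⟨⟨0, by omega⟩⟩
  haveI : Nontrivial V := inferInstance
  let e1 := (LinearMap.GeneralLinearGroup.generalLinearEquiv (RatFunc ℚ) V).symm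
  let e2 := Units.mapEquiv (LinearMap.toMatrixAlgEquiv b).toMulEquiv
  refine ⟨RatFunc ℚ, inferInstance, Module.finrank (RatFunc ℚ) V, Module.finrank_pos,
    (e2.toMonoidHom.comp e1.toMonoidHom).comp (bRho n), ?_⟩
  exact (e2.injective.comp e1.injective).comp (bRho_inj hn)
end

section
/- For every n ≥ 2, there is an injective group homomorphism from the braid group B_n on n strings into GL(n(n−1)/2, ℤ[q^{±1}, t^{±1}]), the group of invertible matrices of size n(n−1)/2 over the ring of Laurent polynomials in two variables q, t with integer coefficients. -/
/-- The ring `ℤ[q^{±1}, t^{±1}]` of Laurent polynomials in two commuting variables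
with integer coefficients, realized as the monoid algebra of `ℤ × ℤ` over `ℤ`
(the monomial `q^a t^b` corresponds to the point `(a, b)`). -/
def LaurentPoly2 : Type :=
  AddMonoidAlgebra ℤ (ℤ × ℤ)

noncomputable instance : CommRing LaurentPoly2 := by
  unfold LaurentPoly2; infer_instance
set_option linter.unusedSimpArgs false
set_option linter.unusedVariables false
set_option linter.unusedSectionVars false
namespace BG
variable {R : Type*} [CommRing R]

def F (q t : R) (k : ℕ) (g : ℕ → ℕ → R) (i j : ℕ) : R :=
  if i = k ∧ j = k + 1 then t * q^2 * g k (k+1)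
  else if j = k then (1 - q) * g i k + q * g i (k+1)
  else if j = k + 1 then g i k + t * q * (q-1) * g k (k+1)
  else if i = k then g (k+1) j + t * q * (q-1) * g k (k+1)
  else if i = k + 1 then q * g k j + (1-q) * g (k+1) j
  else if i < k ∧ k + 1 < j then g i j + t * (q-1)^2 * g k (k+1)
  else g i j

def Fi (q u w : R) (k : ℕ) (h : ℕ → ℕ → R) (i j : ℕ) : R :=
  if i = k ∧ j = k + 1 then w * u^2 * h k (k+1)
  else if j = k then h i (k+1) - u * (q-1) * h k (k+1)
  else if j = k + 1 then u * (h i k - (1-q) * (h i (k+1) - u * (q-1) * h k (k+1)))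
  else if i = k then u * (h (k+1) j - (1-q) * (h k j - u * (q-1) * h k (k+1)))
  else if i = k + 1 then h k j - u * (q-1) * h k (k+1)
  else if i < k ∧ k + 1 < j then h i j - u^2 * (q-1)^2 * h k (k+1)
  else h i j

section
variable (q t : R) (k : ℕ) (g : ℕ → ℕ → R) (i j : ℕ)
lemma F1 : F q t k g k (k+1) = t * q^2 * g k (k+1) := by simp [F]
lemma F2 : F q t k g i k = (1 - q) * g i k + q * g i (k+1) := by simp [F]
lemma F3 (h : i < k) : F q t k g i (k+1) = g i k + t * q * (q-1) * g k (k+1) := by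
  simp [F, h.ne]
lemma F4 (h : k + 1 < j) : F q t k g k j = g (k+1) j + t * q * (q-1) * g k (k+1) := by
  simp [F, h.ne', show j ≠ k by omega]
lemma F5 (h : k + 1 < j) : F q t k g (k+1) j = q * g k j + (1-q) * g (k+1) j := by
  simp [F, h.ne', show j ≠ k by omega]
lemma F6 (h : i < k) (h' : k + 1 < j) : F q t k g i j = g i j + t * (q-1)^2 * g k (k+1) := by
  simp [F, h.ne, h, h', h'.ne', show j ≠ k by omega, show i ≠ k+1 by omega]
lemma F7 (hij : i < j) (h : k + 1 < i ∨ j < k) : F q t k g i j = g i j := by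
  unfold F
  repeat' rw [if_neg (by omega)]
end

lemma F_comm (q t : R) (k l : ℕ) (hkl : k + 2 ≤ l) (g : ℕ → ℕ → R) (i j : ℕ) (hij : i < j) :
    F q t k (F q t l g) i j = F q t l (F q t k g) i j := by
  have hi : i < k ∨ i = k ∨ i = k + 1 ∨ (k + 1 < i ∧ i < l) ∨ i = l ∨ i = l + 1 ∨ l + 1 < i := by
    omega
  have hj : j < k ∨ j = k ∨ j = k + 1 ∨ (k + 1 < j ∧ j < l) ∨ j = l ∨ j = l + 1 ∨ l + 1 < j := by
    omega
  rcases hi with hi | rfl | rfl | hi | rfl | rfl | hi <;>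
  rcases hj with hj | rfl | rfl | hj | rfl | rfl | hj <;>
  first
  | omega
  | (simp (disch := omega) only [F1, F2, F3, F4, F5, F6, F7]; try ring)

lemma F_braid (q t : R) (k : ℕ) (g : ℕ → ℕ → R) (i j : ℕ) (hij : i < j) :
    F q t k (F q t (k+1) (F q t k g)) i j = F q t (k+1) (F q t k (F q t (k+1) g)) i j := by
  have hi : i < k ∨ i = k ∨ i = k + 1 ∨ i = k + 1 + 1 ∨ k + 1 + 1 < i := by omega
  have hj : j < k ∨ j = k ∨ j = k + 1 ∨ j = k + 1 + 1 ∨ k + 1 + 1 < j := by omega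
  rcases hi with hi | rfl | rfl | rfl | hi <;>
  rcases hj with hj | rfl | rfl | rfl | hj <;>
  first
  | omega
  | (simp (disch := omega) only [F1, F2, F3, F4, F5, F6, F7]; try ring)

set_option maxHeartbeats 2000000 in
lemma Fi_F (q t u w : R) (hu : q * u = 1) (hw : t * w = 1) (k : ℕ) (g : ℕ → ℕ → R) (i j : ℕ)
    (hij : i < j) : Fi q u w k (F q t k g) i j = g i j := by
  have hi : i < k ∨ i = k ∨ i = k + 1 ∨ k + 1 < i := by omega
  have hj : j < k ∨ j = k ∨ j = k + 1 ∨ k + 1 < j := by omega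
  unfold Fi
  rcases hi with hi | rfl | rfl | hi <;>
  rcases hj with hj | rfl | rfl | hj <;>
  first
  | omega
  | (split_ifs <;> first
      | omega
      | (simp (disch := omega) only [F1, F2, F3, F4, F5, F6, F7]; try grind))

set_option maxHeartbeats 2000000 in
lemma F_Fi (q t u w : R) (hu : q * u = 1) (hw : t * w = 1) (k : ℕ) (g : ℕ → ℕ → R) (i j : ℕ)
    (hij : i < j) : F q t k (Fi q u w k g) i j = g i j := by
  have hi : i < k ∨ i = k ∨ i = k + 1 ∨ k + 1 < i := by omega
  have hj : j < k ∨ j = k ∨ j = k + 1 ∨ k + 1 < j := by omega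
  rcases hi with hi | rfl | rfl | hi <;>
  rcases hj with hj | rfl | rfl | hj <;>
  first
  | omega
  | (simp (disch := omega) only [F1, F2, F3, F4, F5, F6, F7]
     unfold Fi
     split_ifs <;> first
      | omega
      | grind)

lemma F_congr (q t : R) (n k : ℕ) (hk : k + 1 < n) (g g' : ℕ → ℕ → R)
    (h : ∀ i j, i < j → j < n → g i j = g' i j) (i j : ℕ) (hij : i < j) (hj : j < n) :
    F q t k g i j = F q t k g' i j := by
  unfold F
  split_ifs <;> (try subst_vars) <;>
    simp (disch := omega) only [h]

lemma Fi_congr (q u w : R) (n k : ℕ) (hk : k + 1 < n) (g g' : ℕ → ℕ → R)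
    (h : ∀ i j, i < j → j < n → g i j = g' i j) (i j : ℕ) (hij : i < j) (hj : j < n) :
    Fi q u w k g i j = Fi q u w k g' i j := by
  unfold Fi
  split_ifs <;> (try subst_vars) <;>
    simp (disch := omega) only [h]

abbrev Idx (n : ℕ) := (j : Fin n) × Fin (j : ℕ)

def ev {n : ℕ} (f : Idx n → R) (i j : ℕ) : R :=
  if h : i < j ∧ j < n then f ⟨⟨j, h.2⟩, ⟨i, h.1⟩⟩ else 0

def res (n : ℕ) (g : ℕ → ℕ → R) : Idx n → R := fun p => g p.2 p.1

lemma ev_res (n : ℕ) (g : ℕ → ℕ → R) (i j : ℕ) (h : i < j) (h' : j < n) :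
    ev (res n g) i j = g i j := by
  simp [ev, res, h, h']

lemma res_ev {n : ℕ} (f : Idx n → R) : res n (ev f) = f := by
  funext ⟨j, i⟩
  simp [ev, res]

lemma res_congr (n : ℕ) (g g' : ℕ → ℕ → R)
    (h : ∀ i j, i < j → j < n → g i j = g' i j) : res n g = res n g' := by
  funext ⟨j, i⟩
  exact h _ _ i.2 j.2

lemma ev_add {n : ℕ} (f f' : Idx n → R) (i j : ℕ) : ev (f + f') i j = ev f i j + ev f' i j := by
  unfold ev; split_ifs <;> simp

lemma ev_smul {n : ℕ} (c : R) (f : Idx n → R) (i j : ℕ) : ev (c • f) i j = c * ev f i j := by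
  unfold ev; split_ifs <;> simp

def T (q t : R) (n k : ℕ) : Module.End R (Idx n → R) where
  toFun f := res n (F q t k (ev f))
  map_add' f g := by
    funext ⟨j, i⟩
    simp only [res, F, ev_add, Pi.add_apply]
    split_ifs <;> ring
  map_smul' c g := by
    funext ⟨j, i⟩
    simp only [res, F, ev_smul, Pi.smul_apply, RingHom.id_apply, smul_eq_mul]
    split_ifs <;> ring

def Ti (q u w : R) (n k : ℕ) : Module.End R (Idx n → R) where
  toFun f := res n (Fi q u w k (ev f))
  map_add' f g := by
    funext ⟨j, i⟩
    simp only [res, Fi, ev_add, Pi.add_apply]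
    split_ifs <;> ring
  map_smul' c g := by
    funext ⟨j, i⟩
    simp only [res, Fi, ev_smul, Pi.smul_apply, RingHom.id_apply, smul_eq_mul]
    split_ifs <;> ring

lemma T_res (q t : R) (n k : ℕ) (hk : k + 1 < n) (g : ℕ → ℕ → R) :
    T q t n k (res n g) = res n (F q t k g) :=
  res_congr _ _ _ fun i j h h' => F_congr q t n k hk _ _ (fun i j h h' => ev_res n g i j h h') i j h h'

lemma Ti_res (q u w : R) (n k : ℕ) (hk : k + 1 < n) (g : ℕ → ℕ → R) :
    Ti q u w n k (res n g) = res n (Fi q u w k g) :=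
  res_congr _ _ _ fun i j h h' => Fi_congr q u w n k hk _ _ (fun i j h h' => ev_res n g i j h h') i j h h'

lemma T_comm (q t : R) (n k l : ℕ) (hkl : k + 2 ≤ l) (hl : l + 1 < n) :
    T q t n k * T q t n l = T q t n l * T q t n k := by
  refine LinearMap.ext fun f => ?_
  rw [← res_ev f]
  simp (disch := omega) only [Module.End.mul_apply, T_res]
  exact res_congr _ _ _ fun i j h h' => F_comm q t k l hkl _ i j h

lemma T_braid (q t : R) (n k : ℕ) (hl : k + 1 + 1 < n) :
    T q t n k * T q t n (k+1) * T q t n k = T q t n (k+1) * T q t n k * T q t n (k+1) := by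
  refine LinearMap.ext fun f => ?_
  rw [← res_ev f]
  simp (disch := omega) only [Module.End.mul_apply, T_res]
  exact res_congr _ _ _ fun i j h h' => F_braid q t k _ i j h

def TU (q t u w : R) (hu : q * u = 1) (hw : t * w = 1) (n k : ℕ) (hk : k + 1 < n) :
    (Module.End R (Idx n → R))ˣ where
  val := T q t n k
  inv := Ti q u w n k
  val_inv := by
    refine LinearMap.ext fun f => ?_
    rw [← res_ev f]
    simp (disch := omega) only [Module.End.mul_apply, T_res, Ti_res, Module.End.one_apply]
    exact res_congr _ _ _ fun i j h h' => F_Fi q t u w hu hw k _ i j h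
  inv_val := by
    refine LinearMap.ext fun f => ?_
    rw [← res_ev f]
    simp (disch := omega) only [Module.End.mul_apply, T_res, Ti_res, Module.End.one_apply]
    exact res_congr _ _ _ fun i j h h' => Fi_F q t u w hu hw k _ i j h

/-- naturality -/
lemma T_map {S : Type*} [CommRing S] (φ : R →+* S) (q t : R) (n k : ℕ) (f : Idx n → R) :
    T (φ q) (φ t) n k (φ ∘ f) = φ ∘ (T q t n k f) := by
  have h : ∀ i j, ev (φ ∘ f) i j = φ (ev f i j) := by
    intro i j; unfold ev; split_ifs <;> simp
  funext ⟨j, i⟩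
  simp only [T, LinearMap.coe_mk, AddHom.coe_mk, res, F, h, Function.comp]
  split_ifs <;> simp

/-- basis vectors -/
def dl (R : Type*) [CommRing R] (n a b : ℕ) : Idx n → R :=
  res n (fun i j => if i = a ∧ j = b then 1 else 0)

lemma dl_ne (n a b : ℕ) (h : a < b) (h' : b < n) : dl ℚ n a b ≠ 0 := by
  intro hh
  have := congrArg (fun f => ev f a b) hh
  simp [dl, ev_res, h, h', ev] at this
  try simp [res] at this

lemma dl_map {S : Type*} [CommRing S] (φ : R →+* S) (n a b : ℕ) :
    φ ∘ (dl R n a b) = dl S n a b := by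
  funext ⟨j, i⟩
  simp only [dl, res, Function.comp]
  split_ifs <;> simp

lemma dl_nonneg (n a b : ℕ) : 0 ≤ dl ℚ n a b := by
  rintro ⟨j, i⟩
  simp only [dl, res]
  split_ifs <;> simp

abbrev T0 (n k : ℕ) := T (1/2 : ℚ) 0 n k

lemma T0_nonneg (n k : ℕ) (f : Idx n → ℚ) (hf : 0 ≤ f) : 0 ≤ T0 n k f := by
  have h : ∀ i j, 0 ≤ ev f i j := by
    intro i j; unfold ev; split_ifs
    · exact hf _
    · exact le_rfl
  rintro ⟨j, i⟩
  simp only [T, LinearMap.coe_mk, AddHom.coe_mk, res, F, Pi.zero_apply]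
  split_ifs <;> norm_num <;> (try exact h _ _) <;> 
   exact add_nonneg (mul_nonneg (by norm_num) (h _ _)) (mul_nonneg (by norm_num) (h _ _))

lemma res_add (n : ℕ) (g g' : ℕ → ℕ → R) (c : R) :
    res n g + c • res n g' = res n (fun i j => g i j + c * g' i j) := rfl
lemma res_smul (n : ℕ) (g' : ℕ → ℕ → R) (c : R) :
    c • res n g' = res n (fun i j => c * g' i j) := rfl

lemma T0_1 (n k : ℕ) (hk : k + 1 < n) : T0 n k (dl ℚ n k (k+1)) = 0 := by
  rw [dl, T_res _ _ _ _ hk, show (0 : Idx n → ℚ) = res n (fun _ _ => 0) from rfl]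
  refine res_congr _ _ _ fun i j h h' => ?_
  unfold F
  grind

lemma T0_2 (n k i : ℕ) (hk : k + 1 < n) (hi : i + 1 < n) (hik : i + 2 ≤ k ∨ k + 2 ≤ i) :
    T0 n k (dl ℚ n i (i+1)) = dl ℚ n i (i+1) := by
  rw [dl, T_res _ _ _ _ hk]
  refine res_congr _ _ _ fun i j h h' => ?_
  unfold F
  grind

lemma T0_3 (n k : ℕ) (hk : k + 2 < n) :
    T0 n k (dl ℚ n (k+1) (k+2)) = dl ℚ n k (k+2) + (1/2 : ℚ) • dl ℚ n (k+1) (k+2) := by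
  rw [dl, dl, T_res _ _ _ _ (by omega), res_add]
  refine res_congr _ _ _ fun i j h h' => ?_
  unfold F
  grind

lemma T0_4 (n k : ℕ) (hk : k + 2 < n) :
    T0 n (k+1) (dl ℚ n k (k+2)) = (1/2 : ℚ) • dl ℚ n k (k+1) := by
  rw [dl, dl, T_res _ _ _ _ (by omega), res_smul]
  refine res_congr _ _ _ fun i j h h' => ?_
  unfold F
  grind

lemma T0_5 (n k : ℕ) (hk : k + 2 < n) :
    T0 n (k+1) (dl ℚ n k (k+1)) = dl ℚ n k (k+2) + (1/2 : ℚ) • dl ℚ n k (k+1) := by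
  rw [dl, dl, T_res _ _ _ _ (by omega), res_add]
  refine res_congr _ _ _ fun i j h h' => ?_
  unfold F
  grind

lemma T0_6 (n k : ℕ) (hk : k + 2 < n) :
    T0 n k (dl ℚ n k (k+2)) = (1/2 : ℚ) • dl ℚ n (k+1) (k+2) := by
  rw [dl, dl, T_res _ _ _ _ (by omega), res_smul]
  refine res_congr _ _ _ fun i j h h' => ?_
  unfold F
  grind

lemma card_Idx (n : ℕ) : Fintype.card (Idx n) = n * (n - 1) / 2 := by
  rw [Fintype.card_sigma]
  simp only [Fintype.card_fin]
  rw [Fin.sum_univ_eq_sum_range (fun i => i), Finset.sum_range_id]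

section grp
variable {G : Type*} [Group G] (s : ℕ → G) (N : ℕ)

def D : ℕ → G
  | 0 => 1
  | m+1 => D m * s m

variable (hc : ∀ i j, i + 2 ≤ j → j < N → s i * s j = s j * s i)
  (hb : ∀ i, i + 1 < N → s i * s (i+1) * s i = s (i+1) * s i * s (i+1))
include hc

lemma D1 (m j : ℕ) (hm : m + 1 ≤ j) (hj : j < N) : D s m * s j = s j * D s m := by
  induction m with
  | zero => simp [D]
  | succ m ih =>
    rw [D, mul_assoc, hc m j (by omega) hj, ← mul_assoc, ih (by omega), mul_assoc]

include hb
lemma D2 (m i : ℕ) (hm : i + 1 < m) (hN : m ≤ N) : D s m * s i = s (i+1) * D s m := by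
  induction m with
  | zero => omega
  | succ m ih =>
    by_cases h : i + 1 < m
    · rw [D, mul_assoc, ← hc i m (by omega) (by omega), ← mul_assoc, ih h (by omega), mul_assoc]
    · obtain rfl : m = i + 1 := by omega
      have := D1 s N hc i (i+1) le_rfl (by omega)
      simp only [D]
      calc D s i * s i * s (i+1) * s i = D s i * (s i * s (i+1) * s i) := by group
        _ = (D s i * s (i+1)) * s i * s (i+1) := by rw [hb i (by omega)]; group
        _ = _ := by rw [this]; group

lemma D3 (m : ℕ) (hm : m < N) : D s (m+1) * D s (m+1) * s m = s 0 * (D s (m+1) * D s (m+1)) := by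
  induction m with
  | zero => simp [D, mul_assoc]
  | succ m ih =>
    have h1 := D1 s N hc m (m+1) le_rfl (by omega)
    have hbm := hb m hm
    have e : D s (m+1+1) * D s (m+1+1) = D s (m+1) * D s (m+1) * s (m+1) * s m := by
      simp only [D]
      calc D s m * s m * s (m+1) * (D s m * s m * s (m+1))
          = D s m * s m * (s (m+1) * D s m) * s m * s (m+1) := by group
        _ = D s m * s m * D s m * (s (m+1) * s m * s (m+1)) := by rw [← h1]; group
        _ = _ := by rw [← hbm]; group
    rw [e]
    calc D s (m+1) * D s (m+1) * s (m+1) * s m * s (m+1)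
        = D s (m+1) * D s (m+1) * (s (m+1) * s m * s (m+1)) := by group
      _ = (D s (m+1) * D s (m+1) * s m) * s (m+1) * s m := by rw [← hbm]; group
      _ = _ := by rw [ih (by omega)]; group

lemma D4 (a i : ℕ) (h : i + a < N) : D s N ^ a * s i = s (i+a) * D s N ^ a := by
  induction a with
  | zero => simp
  | succ a ih =>
    rw [pow_succ', mul_assoc, ih (by omega), ← mul_assoc, D2 s N hc hb N (i+a) (by omega) le_rfl,
      mul_assoc]; rfl

lemma D5 (i : ℕ) (h : i < N) : D s N ^ (N+1) * s i = s i * D s N ^ (N+1) := by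
  have e : D s N ^ (N+1) = D s N ^ i * (D s N * D s N) * D s N ^ (N - 1 - i) := by
    rw [← pow_two, ← pow_add, ← pow_add]; congr 1; omega
  have a := D4 s N hc hb (N-1-i) i (by omega)
  have b := D4 s N hc hb i 0 (by omega)
  have c := D3 s N hc hb (N-1) (by omega)
  rw [show i + (N-1-i) = N - 1 by omega] at a
  rw [show N - 1 + 1 = N by omega] at c
  rw [zero_add] at b
  rw [e, mul_assoc, a, mul_assoc, ← mul_assoc _ (s (N-1)), c]
  simp only [← mul_assoc]
  rw [b]

omit hc hb in
lemma D6 (P : Submonoid G) (hP : ∀ i, i < N → s i ∈ P) (m : ℕ) (hm : m ≤ N) : D s m ∈ P := by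
  induction m with
  | zero => exact P.one_mem
  | succ m ih => exact P.mul_mem (ih (by omega)) (hP _ (by omega))

omit hc hb in
lemma D7 (P : Submonoid G) (hP : ∀ i, i < N → s i ∈ P) (m : ℕ) (hm : m + 1 ≤ N) :
    ∃ p ∈ P, D s (m + 1) = s 0 * p := by
  induction m with
  | zero => exact ⟨1, P.one_mem, by simp [D]⟩
  | succ m ih =>
    obtain ⟨p, hp, e⟩ := ih (by omega)
    exact ⟨p * s (m+1), P.mul_mem hp (hP _ (by omega)), by rw [D, e, mul_assoc]⟩

lemma D8 (P : Submonoid G) (hP : ∀ i, i < N → s i ∈ P) (i : ℕ) (hi : i < N) :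
    ∃ p ∈ P, D s N ^ (N+1) = s i * p := by
  obtain ⟨p, hp, e⟩ := D7 s N P hP (N-1) (by omega)
  rw [show N - 1 + 1 = N by omega] at e
  have hD := D6 s N P hP N le_rfl
  refine ⟨D s N ^ i * p * D s N ^ (N - i), P.mul_mem (P.mul_mem (P.pow_mem hD _) hp) (P.pow_mem hD _), ?_⟩
  have b := D4 s N hc hb i 0 (by omega)
  rw [zero_add] at b
  calc D s N ^ (N+1) = D s N ^ i * D s N * D s N ^ (N-i) := by
        rw [← pow_succ, ← pow_add]; congr 1; omega
    _ = (D s N ^ i * s 0) * p * D s N ^ (N-i) := by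
        rw [mul_assoc _ (s 0) p, ← e]
    _ = _ := by rw [b]; simp only [mul_assoc]

/-- Every group element is a fraction. -/
lemma fractions (P : Submonoid G) (hP : ∀ i, i < N → s i ∈ P)
    (hgen : Subgroup.closure {x | ∃ i < N, s i = x} = ⊤) (g : G) :
    ∃ p ∈ P, ∃ z ∈ P, g * z = p := by
  set Z := D s N ^ (N+1) with hZ
  have hZP : Z ∈ P := P.pow_mem (D6 s N P hP N le_rfl) _
  have hcent : ∀ g : G, Z * g = g * Z := by
    intro g
    have : Subgroup.closure {x | ∃ i < N, s i = x} ≤ Subgroup.centralizer {Z} := by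
      rw [Subgroup.closure_le]
      rintro _ ⟨i, hi, rfl⟩
      rw [SetLike.mem_coe, Subgroup.mem_centralizer_singleton_iff]
      first
      | exact (D5 s N hc hb i hi)
      | exact (D5 s N hc hb i hi).symm
    have h2 := this (hgen ▸ Subgroup.mem_top g)
    rw [Subgroup.mem_centralizer_singleton_iff] at h2
    first
    | exact h2
    | exact h2.symm
  have hcp : ∀ (k : ℕ) (g : G), Z ^ k * g = g * Z ^ k := fun k g =>
    (Commute.pow_left (show Commute Z g from hcent g) k)
  suffices h : ∃ p ∈ P, ∃ k : ℕ, g * Z ^ k = p by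
    obtain ⟨p, hp, k, e⟩ := h
    exact ⟨p, hp, _, P.pow_mem hZP k, e⟩
  have hg : g ∈ (Subgroup.closure {x | ∃ i < N, s i = x}).toSubmonoid := by
    rw [hgen]; trivial
  rw [Subgroup.closure_toSubmonoid] at hg
  induction hg using Submonoid.closure_induction with
  | mem x hx =>
    rcases hx with ⟨i, hi, rfl⟩ | ⟨i, hi, e⟩
    · exact ⟨s i, hP i hi, 0, by simp⟩
    · obtain ⟨p, hp, e'⟩ := D8 s N hc hb P hP i hi
      refine ⟨p, hp, 1, ?_⟩
      rw [pow_one, hZ, e', e]; group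
  | one => exact ⟨1, P.one_mem, 0, by simp⟩
  | mul x y _ _ hx hy =>
    obtain ⟨p, hp, k, rfl⟩ := hx
    obtain ⟨p', hp', k', rfl⟩ := hy
    refine ⟨_, P.mul_mem hp hp', k + k', ?_⟩
    rw [pow_add]
    simp only [mul_assoc]
    rw [← mul_assoc (Z ^ k) y, hcp k y]
    simp only [mul_assoc]
end grp

def sg (n : ℕ) (i : Fin (n - 1)) : BraidGroup n := PresentedGroup.of (rels := braidRels n) i

lemma sg_comm (n : ℕ) (i j : Fin (n-1)) (h : (i : ℕ) + 2 ≤ j) : sg n i * sg n j = sg n j * sg n i := by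
  have := PresentedGroup.one_of_mem (rels := braidRels n) (Or.inl ⟨i, j, h, rfl⟩)
  have h2 : sg n i * sg n j * (sg n i)⁻¹ * (sg n j)⁻¹ = 1 := this
  rw [mul_inv_eq_one, mul_inv_eq_iff_eq_mul] at h2
  exact h2

lemma sg_braid (n : ℕ) (i j : Fin (n-1)) (h : (j : ℕ) = i + 1) :
    sg n i * sg n j * sg n i = sg n j * sg n i * sg n j := by
  have := PresentedGroup.one_of_mem (rels := braidRels n) (Or.inr ⟨i, j, h, rfl⟩)
  have h2 : sg n i * sg n j * sg n i * (sg n j * sg n i * sg n j)⁻¹ = 1 := this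
  rwa [mul_inv_eq_one] at h2

lemma sg_lift (n : ℕ) {H : Type*} [Group H] (f : Fin (n-1) → H)
    (hc : ∀ i j : Fin (n-1), (i : ℕ) + 2 ≤ j → f i * f j = f j * f i)
    (hb : ∀ i j : Fin (n-1), (j : ℕ) = i + 1 → f i * f j * f i = f j * f i * f j) :
    ∃ φ : BraidGroup n →* H, ∀ i, φ (sg n i) = f i := by
  have : ∀ r ∈ braidRels n, FreeGroup.lift f r = 1 := by
    rintro r (⟨i, j, h, rfl⟩ | ⟨i, j, h, rfl⟩)
    · simp only [map_mul, map_inv, FreeGroup.lift_apply_of]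
      rw [hc i j h]; group
    · simp only [map_mul, map_inv, FreeGroup.lift_apply_of]
      rw [hb i j h]; group
  refine ⟨PresentedGroup.toGroup (rels := braidRels n) this, fun i => ?_⟩
  exact PresentedGroup.toGroup.of _

lemma sg_closure (n : ℕ) : Subgroup.closure (Set.range (sg n)) = ⊤ :=
  PresentedGroup.closure_range_of (braidRels n)

/-- every braid is a fraction of positive braids -/
lemma braid_fractions (n : ℕ) (g : BraidGroup n) :
    ∃ p ∈ Submonoid.closure (Set.range (sg n)), ∃ z ∈ Submonoid.closure (Set.range (sg n)),
      g * z = p := by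
  set s : ℕ → BraidGroup n := fun i => if h : i < n - 1 then sg n ⟨i, h⟩ else 1 with hs
  refine fractions s (n-1) ?_ ?_ _ ?_ ?_ g
  · intro i j h hj
    simp only [hs, hj, show i < n - 1 by omega, dif_pos]
    exact sg_comm n _ _ h
  · intro i hi
    simp only [hs, hi, show i < n - 1 by omega, dif_pos]
    exact sg_braid n _ _ rfl
  · intro i hi
    simp only [hs, hi, dif_pos]
    exact Submonoid.subset_closure ⟨_, rfl⟩
  · rw [← sg_closure n]
    congr 1
    ext x
    constructor
    · rintro ⟨i, hi, rfl⟩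
      exact ⟨⟨i, hi⟩, by simp [hs, hi]⟩
    · rintro ⟨i, rfl⟩
      exact ⟨i, i.2, by simp [hs]⟩

abbrev MM (n : ℕ) := BraidGroup n × Module.End ℚ (Idx n → ℚ)

noncomputable def gg (n : ℕ) (i : Fin (n-1)) : MM n := (sg n i, T0 n i)

lemma gg_comm (n : ℕ) (i j : Fin (n-1)) (h : (i : ℕ) + 2 ≤ j) : gg n i * gg n j = gg n j * gg n i :=
  Prod.ext (sg_comm n i j h) (T_comm _ _ n i j h (by omega))

lemma gg_braid (n : ℕ) (i j : Fin (n-1)) (h : (j : ℕ) = i + 1) :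
    gg n i * gg n j * gg n i = gg n j * gg n i * gg n j := by
  refine Prod.ext (sg_braid n i j h) ?_
  have := T_braid (1/2 : ℚ) 0 n i (by omega)
  rw [← h] at this
  exact this

inductive Pos (n : ℕ) : ℕ → MM n → Prop
  | one : Pos n 0 1
  | mul (m : ℕ) (x : MM n) (k : Fin (n-1)) : Pos n m x → Pos n (m+1) (x * gg n k)

lemma Pos.nonneg {n m : ℕ} {x : MM n} (h : Pos n m x) (f : Idx n → ℚ) (hf : 0 ≤ f) :
    0 ≤ x.2 f := by
  induction h generalizing f with
  | one => exact hf
  | mul m x k _ ih => exact ih _ (T0_nonneg n k f hf)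

lemma Pos.split {n m : ℕ} {x : MM n} (h : Pos n m x) (a b c d : ℕ)
    (e : x.2 (dl ℚ n a b + (1/2 : ℚ) • dl ℚ n c d) = 0) :
    x.2 (dl ℚ n a b) = 0 ∧ x.2 (dl ℚ n c d) = 0 := by
  have h1 := h.nonneg _ (dl_nonneg n a b)
  have h2 := h.nonneg _ (dl_nonneg n c d)
  rw [map_add, map_smul] at e
  constructor <;> funext p <;>
  · have e1 := congrFun e p
    have h1 := h1 p
    have h2 := h2 p
    simp only [Pi.add_apply, Pi.smul_apply, Pi.zero_apply, smul_eq_mul] at e1 h1 h2 ⊢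
    linarith

lemma half {n : ℕ} {c : Module.End ℚ (Idx n → ℚ)} {f : Idx n → ℚ} (h : c ((1/2 : ℚ) • f) = 0) :
    c f = 0 := by
  rw [map_smul] at h
  simpa using h

lemma key (n : ℕ) : ∀ (m : ℕ) (x : MM n), Pos n m x → ∀ i : Fin (n-1),
    x.2 (dl ℚ n i (i+1)) = 0 → ∃ m' y, m = m' + 1 ∧ Pos n m' y ∧ x = y * gg n i := by
  intro m
  induction m using Nat.strong_induction_on with
  | _ m ih =>
  intro x hx i hi
  cases hx with
  | one => exact absurd hi (dl_ne n i (i+1) (by omega) (by omega))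
  | mul m y k hy =>
    have hi' : y.2 (T0 n k (dl ℚ n i (i+1))) = 0 := hi
    have hcases : i = k ∨ ((i : ℕ) + 2 ≤ k ∨ (k : ℕ) + 2 ≤ i) ∨ (i : ℕ) = k + 1 ∨ (k : ℕ) = i + 1 := by
      rw [Fin.ext_iff]; omega
    rcases hcases with rfl | h | h | h
    · exact ⟨m, y, rfl, hy, rfl⟩
    · rw [T0_2 n k i (by omega) (by omega) h] at hi'
      obtain ⟨m', z, rfl, hz, rfl⟩ := ih m (by omega) y hy i hi'
      refine ⟨_, z * gg n k, rfl, hz.mul _ _ _, ?_⟩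
      rw [mul_assoc, mul_assoc]
      congr 1
      rcases h with h | h
      · exact gg_comm n i k h
      · exact (gg_comm n k i h).symm
    · have hh := T0_3 n k (by omega)
      rw [h] at hi'
      rw [hh] at hi'
      obtain ⟨h1, h2⟩ := hy.split _ _ _ _ hi'
      obtain ⟨m', z, rfl, hz, rfl⟩ := ih m (by omega) y hy i (by rw [h]; exact h2)
      have h3 : z.2 (T0 n i (dl ℚ n k (k+2))) = 0 := h1
      rw [h, T0_4 n k (by omega)] at h3
      obtain ⟨m'', v, rfl, hv, rfl⟩ := ih m' (by omega) z hz k (half h3)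
      refine ⟨_, v * gg n i * gg n k, rfl, (hv.mul _ _ _).mul _ _ _, ?_⟩
      have := gg_braid n k i h
      simp only [mul_assoc] at this ⊢
      rw [this]
    · have hh := T0_5 n i (by omega)
      rw [← h] at hh
      have hi'' := hi'
      rw [← h, hh] at hi''
      obtain ⟨h1, h2⟩ := hy.split _ _ _ _ hi''
      obtain ⟨m', z, rfl, hz, rfl⟩ := ih m (by omega) y hy i (by rw [← h]; exact h2)
      have h3 : z.2 (T0 n i (dl ℚ n i (i+2))) = 0 := h1
      rw [T0_6 n i (by omega)] at h3
      obtain ⟨m'', v, rfl, hv, rfl⟩ := ih m' (by omega) z hz k (by rw [h]; exact half h3)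
      refine ⟨_, v * gg n i * gg n k, rfl, (hv.mul _ _ _).mul _ _ _, ?_⟩
      have := gg_braid n i k h
      simp only [mul_assoc] at this ⊢
      rw [this]

lemma Pos.exists {n : ℕ} (p : BraidGroup n) (hp : p ∈ Submonoid.closure (Set.range (sg n))) :
    ∃ m x, Pos n m x ∧ x.1 = p := by
  induction hp using Submonoid.closure_induction_right with
  | one => exact ⟨0, 1, Pos.one, rfl⟩
  | mul_right x hx y hy ih =>
    obtain ⟨m, z, hz, rfl⟩ := ih
    obtain ⟨k, rfl⟩ := hy
    exact ⟨_, _, hz.mul _ _ k, rfl⟩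

section main
variable {L P : Type*} [CommRing L] [CommRing P] (n : ℕ) (q t : P) (ι : P →+* L) (π : P →+* ℚ)
  (hι : Function.Injective ι) (hq : π q = 1/2) (ht : π t = 0)
  (ρ : BraidGroup n →* (Module.End L (Idx n → L))ˣ)
  (hρ : ∀ i, (ρ (sg n i) : Module.End L (Idx n → L)) = T (ι q) (ι t) n i)
include hq ht hρ

lemma Pos.link {m : ℕ} {x : MM n} (h : Pos n m x) (f : Idx n → P) :
    ∃ h : Idx n → P, (ρ x.1 : Module.End L (Idx n → L)) (ι ∘ f) = ι ∘ h ∧ x.2 (π ∘ f) = π ∘ h := by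
  induction h generalizing f with
  | one => exact ⟨f, by simp, by simp⟩
  | mul m x k _ ih =>
    obtain ⟨g, h1, h2⟩ := ih (T q t n k f)
    refine ⟨g, ?_, ?_⟩
    · rw [← h1, Prod.fst_mul, map_mul, Units.val_mul, Module.End.mul_apply]
      congr 1
      rw [← T_map, ← hρ]; rfl
    · rw [← h2, Prod.snd_mul, Module.End.mul_apply]
      congr 1
      rw [← T_map, hq, ht]; rfl

include hι
lemma Pos.spec {m m' : ℕ} {x y : MM n} (h : Pos n m x) (h' : Pos n m' y) (e : ρ x.1 = ρ y.1)
    (a b : ℕ) : x.2 (dl ℚ n a b) = y.2 (dl ℚ n a b) := by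
  obtain ⟨u, h1, h2⟩ := h.link n q t ι π hq ht ρ hρ (dl P n a b)
  obtain ⟨v, h3, h4⟩ := h'.link n q t ι π hq ht ρ hρ (dl P n a b)
  rw [e, h3] at h1
  have : v = u := hι.comp_left h1
  rw [dl_map] at h2 h4
  rw [h2, h4, this]

lemma Pos.inj (m : ℕ) : ∀ (m' : ℕ) (x y : MM n), Pos n m x → Pos n m' y → ρ x.1 = ρ y.1 →
    x.1 = y.1 := by
  induction m with
  | zero =>
    intro m' x y hx hy e
    cases hx
    cases hy with
    | one => rfl
    | mul m y k hy =>
      have := Pos.spec n q t ι π hι hq ht ρ hρ Pos.one (hy.mul _ _ k) e k (k+1)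
      have h2 : (y * gg n k).2 (dl ℚ n k (k+1)) = 0 := by
        rw [Prod.snd_mul, Module.End.mul_apply]
        change y.2 (T0 n k _) = 0
        rw [T0_1 n k (by omega), map_zero]
      rw [h2] at this
      exact absurd this (dl_ne n k (k+1) (by omega) (by omega))
  | succ m ih =>
    intro m' x y hx hy e
    have hx' := hx
    cases hx with
    | mul m x k hx =>
      have := Pos.spec n q t ι π hι hq ht ρ hρ hx' hy e k (k+1)
      have h2 : (x * gg n k).2 (dl ℚ n k (k+1)) = 0 := by
        rw [Prod.snd_mul, Module.End.mul_apply]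
        change x.2 (T0 n k _) = 0
        rw [T0_1 n k (by omega), map_zero]
      rw [h2] at this
      obtain ⟨m'', v, rfl, hv, rfl⟩ := key n m' y hy k this.symm
      rw [Prod.fst_mul, Prod.fst_mul] at e ⊢
      rw [map_mul, map_mul] at e
      rw [ih _ x v hx hv (mul_right_cancel e)]

lemma rho_inj : Function.Injective ρ := by
  rw [injective_iff_map_eq_one]
  intro g hg
  obtain ⟨p, hp, z, hz, e⟩ := braid_fractions n g
  obtain ⟨m, x, hx, rfl⟩ := Pos.exists p hp
  obtain ⟨m', y, hy, rfl⟩ := Pos.exists z hz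
  have := Pos.inj n q t ι π hι hq ht ρ hρ m m' x y hx hy (by rw [← e, map_mul, hg, one_mul])
  rw [this] at e
  simpa using e
end main

theorem main' {L P : Type*} [CommRing L] [CommRing P] (n : ℕ) (q t : P) (ι : P →+* L) (π : P →+* ℚ)
    (hι : Function.Injective ι) (hq : π q = 1/2) (ht : π t = 0) (u w : L)
    (hu : ι q * u = 1) (hw : ι t * w = 1) :
    ∃ φ : BraidGroup n →* Matrix.GeneralLinearGroup (Fin (n * (n - 1) / 2)) L,
      Function.Injective φ := by
  obtain ⟨ρ, hρ⟩ := sg_lift n (fun i => TU (ι q) (ι t) u w hu hw n i (by omega))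
    (fun i j h => Units.ext (T_comm _ _ n i j h (by omega)))
    (fun i j h => by
      refine Units.ext ?_
      have := T_braid (ι q) (ι t) n i (by omega)
      rw [← h] at this
      exact this)
  have hinj := rho_inj n q t ι π hι hq ht ρ (fun i => by rw [hρ]; rfl)
  let e : Idx n ≃ Fin (n * (n-1) / 2) := Fintype.equivFinOfCardEq (card_Idx n)
  let E : (Module.End L (Idx n → L)) ≃* Matrix (Fin (n * (n-1) / 2)) (Fin (n * (n-1) / 2)) L :=
    ((LinearMap.toMatrixAlgEquiv' (R := L) (n := Idx n)).trans (Matrix.reindexAlgEquiv L L e)).toMulEquiv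
  refine ⟨(Units.mapEquiv E).toMonoidHom.comp ρ, ?_⟩
  exact (Units.mapEquiv E).injective.comp hinj

open AddMonoidAlgebra in
theorem main'' (n : ℕ) :
    ∃ φ : BraidGroup n →* Matrix.GeneralLinearGroup (Fin (n * (n - 1) / 2)) (AddMonoidAlgebra ℤ (ℤ × ℤ)),
      Function.Injective φ := by
  let c : ℕ × ℕ →+ ℤ × ℤ := (Nat.castAddMonoidHom ℤ).prodMap (Nat.castAddMonoidHom ℤ)
  have hc : Function.Injective c := by
    rintro ⟨a, b⟩ ⟨a', b'⟩ h
    simpa [c] using h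
  let h0 : Multiplicative (ℕ × ℕ) →* ℚ :=
    { toFun := fun x => (1/2) ^ (Multiplicative.toAdd x).1 * 0 ^ (Multiplicative.toAdd x).2
      map_one' := by simp
      map_mul' := fun x y => by simp [pow_add]; ring }
  refine main' (P := AddMonoidAlgebra ℤ (ℕ × ℕ)) n (single (1, 0) 1) (single (0, 1) 1)
    (AddMonoidAlgebra.mapDomainRingHom ℤ c) (AddMonoidAlgebra.lift ℤ ℚ (ℕ × ℕ) h0).toRingHom
    ?_ ?_ ?_ (single (-1, 0) 1) (single (0, -1) 1) ?_ ?_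
  · exact AddMonoidAlgebra.mapDomain_injective hc
  · simp [h0]
  · simp [h0]
  · simp [c, single_mul_single, one_def]; rfl
  · simp [c, single_mul_single, one_def]; rfl

end BG

/-- **Bigelow.** For every `n ≥ 2`, the braid group `B_n` embeds into
`GL(n(n-1)/2, ℤ[q^{±1}, t^{±1}])`. -/
theorem stmt_5 (n : ℕ) (hn : 2 ≤ n) :
    ∃ φ : BraidGroup n →* Matrix.GeneralLinearGroup (Fin (n * (n - 1) / 2)) LaurentPoly2,
      Function.Injective φ := by
  exact BG.main'' n
end

section
/- For every n ≥ 2, there is an injective group homomorphism from the braid group B_n on n strings into GL(n(n−1)/2, ℝ), the group of invertible real matrices of size n(n−1)/2. -/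
namespace LK

section ops
variable {R : Type*} [CommRing R]

/-- The (dual) Lawrence-Krammer operator of the `k`-th generator. -/
def S (q t : R) (k : ℕ) (f : ℕ → ℕ → R) (i j : ℕ) : R :=
  if i = k ∧ j = k + 1 then t * q ^ 2 * f k (k + 1)
  else if i < k ∧ j = k then (1 - q) * f i k + q * f i (k + 1)
  else if i < k ∧ j = k + 1 then f i k + t * q * (q - 1) * f k (k + 1)
  else if i = k ∧ k + 1 < j then t * q * (q - 1) * f k (k + 1) + f (k + 1) j
  else if i = k + 1 ∧ k + 1 < j then q * f k j + (1 - q) * f (k + 1) j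
  else if i < k ∧ k + 1 < j then f i j + t * (q - 1) ^ 2 * f k (k + 1)
  else f i j

variable (q t : R) (k : ℕ) (f : ℕ → ℕ → R) (i j : ℕ)

theorem S1 (h : i = k ∧ j = k + 1) : S q t k f i j = t * q ^ 2 * f k (k + 1) := by
  unfold S; rw [if_pos h]

theorem S2 (h : i < k ∧ j = k) : S q t k f i j = (1 - q) * f i k + q * f i (k + 1) := by
  unfold S; rw [if_neg (by omega), if_pos h]

theorem S3 (h : i < k ∧ j = k + 1) :
    S q t k f i j = f i k + t * q * (q - 1) * f k (k + 1) := by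
  unfold S; rw [if_neg (by omega), if_neg (by omega), if_pos h]

theorem S4 (h : i = k ∧ k + 1 < j) :
    S q t k f i j = t * q * (q - 1) * f k (k + 1) + f (k + 1) j := by
  unfold S; rw [if_neg (by omega), if_neg (by omega), if_neg (by omega), if_pos h]

theorem S5 (h : i = k + 1 ∧ k + 1 < j) :
    S q t k f i j = q * f k j + (1 - q) * f (k + 1) j := by
  unfold S
  rw [if_neg (by omega), if_neg (by omega), if_neg (by omega), if_neg (by omega), if_pos h]

theorem S6 (h : i < k ∧ k + 1 < j) :
    S q t k f i j = f i j + t * (q - 1) ^ 2 * f k (k + 1) := by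
  unfold S
  rw [if_neg (by omega), if_neg (by omega), if_neg (by omega), if_neg (by omega),
    if_neg (by omega), if_pos h]

theorem S7 (h : j ≤ i ∨ j < k ∨ k + 1 < i) : S q t k f i j = f i j := by
  unfold S
  rw [if_neg (by omega), if_neg (by omega), if_neg (by omega), if_neg (by omega),
    if_neg (by omega), if_neg (by omega)]

theorem S_braid : S q t k (S q t (k + 1) (S q t k f)) =
    S q t (k + 1) (S q t k (S q t (k + 1) f)) := by
  funext i j
  rcases le_or_gt j i with hij | hij
  · simp (disch := omega) only [S7]
  have hi : i < k ∨ i = k ∨ i = k + 1 ∨ i = k + 2 ∨ k + 2 < i := by omega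
  have hj : j < k ∨ j = k ∨ j = k + 1 ∨ j = k + 2 ∨ k + 2 < j := by omega
  rcases hi with hi | hi | hi | hi | hi <;> rcases hj with hj | hj | hj | hj | hj <;>
  first
  | (exfalso; omega)
  | (try subst hi
     try subst hj
     simp (disch := omega) only [S1, S2, S3, S4, S5, S6, S7]
     try ring)

theorem S_comm (l : ℕ) (hl : k + 2 ≤ l) : S q t k (S q t l f) = S q t l (S q t k f) := by
  funext i j
  rcases le_or_gt j i with hij | hij
  · simp (disch := omega) only [S7]
  have hi : i < k ∨ i = k ∨ i = k + 1 ∨ (k + 1 < i ∧ i < l) ∨ i = l ∨ i = l + 1 ∨ l + 1 < i := by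
    omega
  have hj : j < k ∨ j = k ∨ j = k + 1 ∨ (k + 1 < j ∧ j < l) ∨ j = l ∨ j = l + 1 ∨ l + 1 < j := by
    omega
  rcases hi with hi | hi | hi | hi | hi | hi | hi <;>
  rcases hj with hj | hj | hj | hj | hj | hj | hj <;>
  first
  | (exfalso; omega)
  | (try subst hi
     try subst hj
     simp (disch := omega) only [S1, S2, S3, S4, S5, S6, S7]
     try ring)

theorem S_local (n : ℕ) (hk : k + 1 < n) (g : ℕ → ℕ → R)
    (h : ∀ i j, i < j → j < n → f i j = g i j) :
    ∀ i j, i < j → j < n → S q t k f i j = S q t k g i j := by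
  intro i j hij hj
  have h0 := h k (k + 1) (by omega) hk
  unfold S
  split_ifs with h1 h2 h3 h4 h5 h6
  · rw [h0]
  · rw [h i k (by omega) (by omega), h i (k+1) (by omega) (by omega)]
  · rw [h0, h i k (by omega) (by omega)]
  · rw [h0, h (k+1) j (by omega) (by omega)]
  · rw [h k j (by omega) (by omega), h (k+1) j (by omega) (by omega)]
  · rw [h0, h i j hij hj]
  · rw [h i j hij hj]

theorem S_add (g : ℕ → ℕ → R) : S q t k (fun a b => f a b + g a b) i j =
    S q t k f i j + S q t k g i j := by
  unfold S; split_ifs <;> ring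

theorem S_smul (c : R) : S q t k (fun a b => c * f a b) i j = c * S q t k f i j := by
  unfold S; split_ifs <;> ring

theorem S_map {R' : Type*} [CommRing R'] (φ : R →+* R') :
    S (φ q) (φ t) k (fun a b => φ (f a b)) i j = φ (S q t k f i j) := by
  unfold S; split_ifs <;> simp

theorem S_surj {F : Type*} [Field F] (q t : F) (hq : q ≠ 0) (ht : t ≠ 0) (k : ℕ)
    (g : ℕ → ℕ → F) : ∃ f, ∀ i j, S q t k f i j = g i j := by
  let c := g k (k + 1) / (t * q ^ 2)
  let f : ℕ → ℕ → F := fun i j =>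
    if i = k ∧ j = k + 1 then c
    else if i < k ∧ j = k then g i (k + 1) - t * q * (q - 1) * c
    else if i < k ∧ j = k + 1 then
      (g i k - (1 - q) * (g i (k + 1) - t * q * (q - 1) * c)) / q
    else if i = k + 1 ∧ k + 1 < j then g k j - t * q * (q - 1) * c
    else if i = k ∧ k + 1 < j then
      (g (k + 1) j - (1 - q) * (g k j - t * q * (q - 1) * c)) / q
    else if i < k ∧ k + 1 < j then g i j - t * (q - 1) ^ 2 * c
    else g i j
  have f1 : f k (k + 1) = c := by simp [f]
  have f2 : ∀ i, i < k → f i k = g i (k + 1) - t * q * (q - 1) * c := by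
    intro i hi; simp [f, hi]
  have f3 : ∀ i, i < k → f i (k + 1) =
      (g i k - (1 - q) * (g i (k + 1) - t * q * (q - 1) * c)) / q := by
    intro i hi; simp [f, hi, hi.ne]
  have f4 : ∀ j, k + 1 < j → f (k + 1) j = g k j - t * q * (q - 1) * c := by
    intro j hj; simp [f, hj]
  have f5 : ∀ j, k + 1 < j → f k j =
      (g (k + 1) j - (1 - q) * (g k j - t * q * (q - 1) * c)) / q := by
    intro j hj; simp [f, hj, hj.ne']
  have f6 : ∀ i j, i < k → k + 1 < j → f i j = g i j - t * (q - 1) ^ 2 * c := by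
    intro i j hi hj
    have e1 : i ≠ k := by omega
    have e2 : j ≠ k := by omega
    have e3 : j ≠ k + 1 := by omega
    have e4 : i ≠ k + 1 := by omega
    simp [f, hi, hj, e1, e2, e3, e4]
  have hc : t * q ^ 2 * c = g k (k + 1) := by
    simp only [c]; field_simp
  refine ⟨f, fun i j => ?_⟩
  unfold S
  split_ifs with h1 h2 h3 h4 h5 h6
  · obtain ⟨rfl, rfl⟩ := h1; rw [f1, hc]
  · obtain ⟨h, rfl⟩ := h2; rw [f2 i h, f3 i h]; field_simp; ring
  · obtain ⟨h, rfl⟩ := h3; rw [f1, f2 i h]; ring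
  · obtain ⟨rfl, h⟩ := h4; rw [f1, f4 j h]; ring
  · obtain ⟨rfl, h⟩ := h5; rw [f4 j h, f5 j h]; field_simp; ring
  · rw [f1, f6 i j h6.1 h6.2]; ring
  · have : ∀ x y : Prop, ¬ (i = k + 1 ∧ k + 1 < j) := fun _ _ => h5
    simp only [f]
    rw [if_neg h1, if_neg h2, if_neg h3, if_neg h5, if_neg h4, if_neg h6]

/-- operator of a word, the head acting first -/
def W {N : ℕ} (q t : R) : List (Fin N) → (ℕ → ℕ → R) → (ℕ → ℕ → R)
  | [], f => f
  | a :: w, f => W q t w (S q t a f)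

theorem W_map {N : ℕ} {R' : Type*} [CommRing R'] (φ : R →+* R') (w : List (Fin N)) :
    ∀ f : ℕ → ℕ → R, W (φ q) (φ t) w (fun a b => φ (f a b)) = fun a b => φ (W q t w f a b) := by
  induction w with
  | nil => intro f; rfl
  | cons a w ih =>
    intro f
    have : S (φ q) (φ t) a (fun a b => φ (f a b)) = fun x y => φ (S q t a f x y) := by
      funext i j; exact S_map ..
    simp only [W, this, ih]

theorem W_smul {N : ℕ} (c : R) (w : List (Fin N)) :
    ∀ f : ℕ → ℕ → R, W q t w (fun a b => c * f a b) = fun a b => c * W q t w f a b := by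
  induction w with
  | nil => intro f; rfl
  | cons a w ih =>
    intro f
    have : S q t a (fun a b => c * f a b) = fun x y => c * S q t a f x y := by
      funext i j; exact S_smul ..
    simp only [W, this, ih]

end ops

section zero

/-- delta function -/
def dl {R : Type*} [CommRing R] (a b : ℕ) : ℕ → ℕ → R := fun i j => if i = a ∧ j = b then 1 else 0

theorem dl_nonneg (a b i j : ℕ) : (0 : ℚ) ≤ dl a b i j := by
  unfold dl; split_ifs <;> norm_num

theorem S_mono (k : ℕ) (f g : ℕ → ℕ → ℚ) (h : ∀ i j, f i j ≤ g i j) (i j : ℕ) :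
    S (1/2) 0 k f i j ≤ S (1/2) 0 k g i j := by
  unfold S
  split_ifs
  · simp
  · linarith [h i k, h i (k+1)]
  · linarith [h i k]
  · linarith [h (k+1) j]
  · linarith [h k j, h (k+1) j]
  · linarith [h i j]
  · exact h i j

theorem S_zero (k i j : ℕ) : S (1/2) (0:ℚ) k (fun _ _ => 0) i j = 0 := by
  unfold S; split_ifs <;> simp

theorem W_mono {N : ℕ} (w : List (Fin N)) : ∀ (f g : ℕ → ℕ → ℚ) (_ : ∀ i j, f i j ≤ g i j)
    (i j : ℕ), W (1/2) 0 w f i j ≤ W (1/2) 0 w g i j := by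
  induction w with
  | nil => intro f g h; exact h
  | cons a w ih => intro f g h; exact ih _ _ (S_mono a f g h)

theorem W_nonneg {N : ℕ} (w : List (Fin N)) (f : ℕ → ℕ → ℚ) (h : ∀ i j, 0 ≤ f i j)
    (i j : ℕ) : 0 ≤ W (1/2) 0 w f i j := by
  have h0 : ∀ w : List (Fin N), W (1/2) (0:ℚ) w (fun _ _ => 0) = fun _ _ => 0 := by
    intro w
    have := W_smul (1/2 : ℚ) 0 0 w (fun _ _ => 0)
    simpa using this
  have := W_mono w (fun _ _ => 0) f h i j
  rwa [h0] at this

/-- vanishing of a row at `t = 0` -/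
def D {N : ℕ} (n : ℕ) (w : List (Fin N)) (a b : ℕ) : Prop :=
  ∀ i j, i < j → j < n → W (1/2) (0:ℚ) w (dl a b) i j = 0

theorem D_cons {N n : ℕ} (k : Fin N) (w : List (Fin N)) (a b a' b' : ℕ)
    (h : D n (k :: w) a b) (hv : (1/2 : ℚ) ≤ S (1/2) 0 k (dl a b) a' b') : D n w a' b' := by
  intro i j hij hj
  have h1 := h i j hij hj
  simp only [W] at h1
  have hnn : ∀ x y, (0:ℚ) ≤ S (1/2) 0 k (dl a b) x y := by
    intro x y
    have := S_mono k (fun _ _ => 0) (dl a b) (dl_nonneg a b) x y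
    rwa [S_zero] at this
  have h2 := W_mono w (fun x y => (1/2) * dl a' b' x y) (S (1/2) 0 k (dl a b)) (by
    intro x y
    by_cases hh : x = a' ∧ y = b'
    · rw [show (dl a' b' x y : ℚ) = 1 from if_pos hh, mul_one, hh.1, hh.2]
      exact hv
    · rw [show (dl a' b' x y : ℚ) = 0 from if_neg hh, mul_zero]
      exact hnn x y) i j
  rw [W_smul, h1] at h2
  have h3 := W_nonneg w (dl a' b') (dl_nonneg a' b') i j
  linarith

end zero

section garside
variable {G : Type*} [Group G] (σ : ℕ → G) (N : ℕ)
  (hc : ∀ i j, i + 2 ≤ j → j < N → σ i * σ j = σ j * σ i)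
  (hb : ∀ i, i + 1 < N → σ i * σ (i+1) * σ i = σ (i+1) * σ i * σ (i+1))

/-- `σ 0 ⋯ σ (m-1)` -/
def d : ℕ → G
  | 0 => 1
  | m + 1 => d m * σ m

/-- `σ 1 ⋯ σ m` -/
def e : ℕ → G
  | 0 => 1
  | m + 1 => e m * σ (m + 1)

theorem d_eq (m : ℕ) : d σ (m + 1) = σ 0 * e σ m := by
  induction m with
  | zero => simp [d, e]
  | succ m ih => rw [d, ih, e, mul_assoc]

include hc in
theorem d_comm (m j : ℕ) (hm : m + 1 ≤ j) (hj : j < N) : d σ m * σ j = σ j * d σ m := by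
  induction m with
  | zero => simp [d]
  | succ m ih => 
    rw [d, mul_assoc, hc m j (by omega) hj, ← mul_assoc, ih (by omega), mul_assoc]

include hc hb in
theorem d_shift (m i : ℕ) (hi : i + 1 < m) (hm : m ≤ N) : d σ m * σ i = σ (i + 1) * d σ m := by
  induction m with
  | zero => omega
  | succ m ih =>
    rcases Nat.lt_or_ge (i + 1) m with h | h
    · rw [d, mul_assoc, ← hc i m (by omega) (by omega), ← mul_assoc, ih h (by omega), mul_assoc]
    · obtain rfl : m = i + 1 := by omega
      have h1 := hb i (by omega)
      have h2 := d_comm σ N hc i (i + 1) (by omega) (by omega)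
      calc d σ (i + 1 + 1) * σ i = d σ i * (σ i * σ (i+1) * σ i) := by simp only [d, mul_assoc]
        _ = (d σ i * σ (i+1)) * (σ i * σ (i+1)) := by rw [h1]; simp only [mul_assoc]
        _ = _ := by rw [h2]; simp only [d, mul_assoc]

include hc hb in
theorem d_e (m : ℕ) (hm : m < N) : d σ N * d σ m = e σ m * d σ N := by
  induction m with
  | zero => simp [d, e]
  | succ m ih =>
    rw [d, ← mul_assoc, ih (by omega), mul_assoc, d_shift σ N hc hb N m hm le_rfl, e, mul_assoc]

include hc hb in
theorem d_last (M : ℕ) (hM : N = M + 1) : d σ N ^ 2 * σ M = σ 0 * d σ N ^ 2 := by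
  have h1 := d_e σ N hc hb M (by omega)
  have h2 : d σ N = σ 0 * e σ M := by rw [hM, d_eq]
  have h3 : d σ N = d σ M * σ M := by rw [hM, d]
  calc d σ N ^ 2 * σ M = (σ 0 * e σ M) * d σ N * σ M := by rw [← h2, pow_two]
    _ = σ 0 * (e σ M * d σ N) * σ M := by simp only [mul_assoc]
    _ = σ 0 * (d σ N * (d σ M * σ M)) := by rw [← h1]; simp only [mul_assoc]
    _ = _ := by rw [← h3, pow_two]

include hc hb in
theorem d_pow (p i : ℕ) (hi : i + p < N) : d σ N ^ p * σ i = σ (i + p) * d σ N ^ p := by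
  induction p with
  | zero => simp
  | succ p ih =>
    rw [pow_succ', mul_assoc, ih (by omega), ← mul_assoc,
      d_shift σ N hc hb N (i + p) (by omega) le_rfl, mul_assoc]
    rfl

include hc hb in
theorem z_comm (i : ℕ) (hi : i < N) : d σ N ^ (N + 1) * σ i = σ i * d σ N ^ (N + 1) := by
  obtain ⟨r, rfl⟩ : ∃ r, N = i + r + 1 := ⟨N - i - 1, by omega⟩
  have h1 := d_pow σ _ hc hb r i (by omega)
  have h2 := d_last σ _ hc hb (i + r) rfl
  have h3 := d_pow σ _ hc hb i 0 (by omega)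
  rw [show i + r + 1 + 1 = i + (2 + r) by omega, pow_add, pow_add, mul_assoc, mul_assoc, h1,
    ← mul_assoc (_ ^ 2), h2, mul_assoc, ← mul_assoc, h3]
  simp [mul_assoc]

theorem d_mem (H : Submonoid G) (m : ℕ) (h : ∀ i < m, σ i ∈ H) : d σ m ∈ H := by
  induction m with
  | zero => exact H.one_mem
  | succ m ih => exact H.mul_mem (ih fun i hi => h i (by omega)) (h m (by omega))

include hc hb in
theorem z_div (H : Submonoid G) (h : ∀ i < N, σ i ∈ H) (i : ℕ) (hi : i < N) :
    (σ i)⁻¹ * d σ N ^ (N + 1) ∈ H := by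
  obtain ⟨M, rfl⟩ : ∃ M, N = M + 1 := ⟨N - 1, by omega⟩
  have he : ∀ m, m ≤ M → e σ m ∈ H := by
    intro m hm
    induction m with
    | zero => exact H.one_mem
    | succ m ih => exact H.mul_mem (ih (by omega)) (h _ (by omega))
  have h1 := d_pow σ _ hc hb i 0 (by omega)
  have hd := d_mem σ H (M + 1) h
  obtain ⟨r, hr⟩ : ∃ r, M + 1 + 1 = i + 1 + r := ⟨M + 1 + 1 - (i + 1), by omega⟩
  have : (σ i)⁻¹ * d σ (M + 1) ^ (M + 1 + 1) = d σ (M+1) ^ i * e σ M * d σ (M + 1) ^ r := by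
    rw [inv_mul_eq_iff_eq_mul, hr, pow_add, ← mul_assoc]
    congr 1
    rw [zero_add] at h1
    rw [← mul_assoc, ← h1, mul_assoc, ← d_eq, pow_succ]
  rw [this]
  exact H.mul_mem (H.mul_mem (H.pow_mem hd _) (he _ le_rfl)) (H.pow_mem hd _)

include hc hb in
theorem frac (H : Submonoid G) (h : ∀ i < N, σ i ∈ H)
    (htop : Subgroup.closure {g | ∃ i < N, σ i = g} = ⊤) (g : G) :
    ∃ a ∈ H, ∃ b ∈ H, g * a = b := by
  set z := d σ N ^ (N + 1) with hz
  have hzH : z ∈ H := H.pow_mem (d_mem σ H N h) _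
  have hzc : ∀ g, z * g = g * z := by
    intro g
    have : g ∈ Subgroup.closure {g | ∃ i < N, σ i = g} := by rw [htop]; trivial
    have hle : Subgroup.closure {g | ∃ i < N, σ i = g} ≤ Subgroup.centralizer {z} := by
      rw [Subgroup.closure_le]
      rintro _ ⟨i, hi, rfl⟩
      simp only [SetLike.mem_coe, Subgroup.mem_centralizer_iff, Set.mem_singleton_iff, forall_eq]
      exact z_comm σ N hc hb i hi
    have := hle this
    simpa [Subgroup.mem_centralizer_iff] using this
  have key : ∃ p : ℕ, g * z ^ p ∈ H := by
    have : g ∈ Subgroup.closure {g | ∃ i < N, σ i = g} := by rw [htop]; trivial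
    induction this using Subgroup.closure_induction'' with
    | one => exact ⟨0, by simp⟩
    | mem x hx => obtain ⟨i, hi, rfl⟩ := hx; exact ⟨0, by simpa using h i hi⟩
    | inv_mem x hx =>
      obtain ⟨i, hi, rfl⟩ := hx
      exact ⟨1, by rw [pow_one]; exact z_div σ N hc hb H h i hi⟩
    | mul x y _ _ hx hy =>
      obtain ⟨p, hp⟩ := hx
      obtain ⟨r, hr⟩ := hy
      refine ⟨p + r, ?_⟩
      have hcm : Commute (z ^ p) y := (show Commute z y from hzc y).pow_left p
      have : x * y * z ^ (p + r) = (x * z ^ p) * (y * z ^ r) := by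
        rw [pow_add, mul_assoc x, ← mul_assoc y, ← hcm.eq]; simp only [mul_assoc]
      rw [this]; exact H.mul_mem hp hr
  obtain ⟨p, hp⟩ := key
  exact ⟨z ^ p, H.pow_mem hzH p, _, hp, rfl⟩

end garside

section main
variable (n : ℕ)

/-- generator -/
def gn (a : Fin (n - 1)) : BraidGroup n := PresentedGroup.of (rels := braidRels n) a

theorem gn_comm (a b : Fin (n - 1)) (h : (a : ℕ) + 2 ≤ b) : gn n a * gn n b = gn n b * gn n a := by
  have h1 : PresentedGroup.mk (braidRels n) (FreeGroup.of a * FreeGroup.of b *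
      (FreeGroup.of a)⁻¹ * (FreeGroup.of b)⁻¹) = 1 :=
    PresentedGroup.one_of_mem (Or.inl ⟨a, b, h, rfl⟩)
  simp only [map_mul, map_inv] at h1
  have h2 : gn n a * gn n b * (gn n a)⁻¹ * (gn n b)⁻¹ = 1 := h1
  rw [mul_inv_eq_one, mul_inv_eq_iff_eq_mul] at h2
  exact h2

theorem gn_braid (a b : Fin (n - 1)) (h : (b : ℕ) = a + 1) :
    gn n a * gn n b * gn n a = gn n b * gn n a * gn n b := by
  have h1 : PresentedGroup.mk (braidRels n) (FreeGroup.of a * FreeGroup.of b * FreeGroup.of a *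
              (FreeGroup.of b * FreeGroup.of a * FreeGroup.of b)⁻¹) = 1 :=
    PresentedGroup.one_of_mem (Or.inr ⟨a, b, h, rfl⟩)
  simp only [map_mul, map_inv] at h1
  have h2 : gn n a * gn n b * gn n a * (gn n b * gn n a * gn n b)⁻¹ = 1 := h1
  exact mul_inv_eq_one.mp h2

/-- product of a word (head on the right) -/
def pr : List (Fin (n - 1)) → BraidGroup n
  | [] => 1
  | a :: w => pr w * gn n a

/-- equivalence of positive words -/
def WEq (u v : List (Fin (n - 1))) : Prop :=
  u.length = v.length ∧ pr n u = pr n v ∧ W (1/2) (0:ℚ) u = W (1/2) (0:ℚ) v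

variable {n}

theorem WEq.trans {u v w : List (Fin (n - 1))} (h : WEq n u v) (h' : WEq n v w) : WEq n u w :=
  ⟨h.1.trans h'.1, h.2.1.trans h'.2.1, h.2.2.trans h'.2.2⟩

theorem WEq.cons {u v : List (Fin (n - 1))} (a : Fin (n - 1)) (h : WEq n u v) :
    WEq n (a :: u) (a :: v) :=
  ⟨by simp [h.1], by simp [pr, h.2.1], by funext f; simp only [W, h.2.2]⟩

theorem WEq.D {u v : List (Fin (n - 1))} (h : WEq n u v) (a b : ℕ) (hd : D n u a b) :
    D n v a b := by
  unfold LK.D at *; rwa [← h.2.2]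

theorem WEq_comm (a b : Fin (n - 1)) (h : (a : ℕ) + 2 ≤ b ∨ (b : ℕ) + 2 ≤ a)
    (w : List (Fin (n - 1))) : WEq n (a :: b :: w) (b :: a :: w) := by
  refine ⟨rfl, ?_, ?_⟩
  · simp only [pr, mul_assoc]
    rcases h with h | h
    · rw [gn_comm n a b h]
    · rw [gn_comm n b a h]
  · funext f
    simp only [W]
    rcases h with h | h
    · rw [S_comm _ _ _ _ _ h]
    · rw [S_comm _ _ _ _ _ h]

theorem WEq_braid (a b : Fin (n - 1)) (h : (b : ℕ) = a + 1 ∨ (a : ℕ) = b + 1)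
    (w : List (Fin (n - 1))) : WEq n (a :: b :: a :: w) (b :: a :: b :: w) := by
  refine ⟨rfl, ?_, ?_⟩
  · simp only [pr, mul_assoc]
    rcases h with h | h
    · have := gn_braid n a b h
      simp only [mul_assoc] at this; rw [this]
    · have := gn_braid n b a h
      simp only [mul_assoc] at this; rw [this]
  · funext f
    simp only [W]
    rcases h with h | h
    · rw [h, S_braid]
    · rw [h, S_braid]

theorem divides (m : ℕ) : ∀ (w : List (Fin (n - 1))), w.length = m → ∀ k : Fin (n - 1),
    D n w k (k + 1) → ∃ w', WEq n w (k :: w') := by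
  induction m using Nat.strong_induction_on with
  | _ m ih =>
  intro w hw k hD
  cases w with
  | nil =>
    have := hD k (k + 1) (by omega) (by omega)
    simp [W, dl] at this
  | cons a w =>
    simp only [List.length_cons] at hw
    have hcase : a = k ∨ ((a : ℕ) + 2 ≤ k ∨ (k : ℕ) + 2 ≤ a) ∨ (k : ℕ) = a + 1 ∨
        (a : ℕ) = k + 1 := by
      rw [Fin.ext_iff]; omega
    rcases hcase with rfl | h | h | h
    · exact ⟨w, rfl, rfl, rfl⟩
    · have h1 : D n w k (k + 1) := by
        apply D_cons a w _ _ _ _ hD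
        rw [S7 _ _ _ _ _ _ (by omega)]
        norm_num [dl]
      obtain ⟨w', hw'⟩ := ih w.length (by omega) w rfl k h1
      exact ⟨a :: w', (hw'.cons a).trans (WEq_comm a k h w')⟩
    · have h1 : D n w k (k + 1) := by
        apply D_cons a w _ _ _ _ hD
        rw [S5 _ _ _ _ _ _ (by omega), h]
        norm_num [dl]
      have h2 : D n w a (a + 2) := by
        apply D_cons a w _ _ _ _ hD
        rw [S4 _ _ _ _ _ _ (by omega), h]
        norm_num [dl]
      obtain ⟨w', hw'⟩ := ih w.length (by omega) w rfl k h1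
      have h3 : D n w' a (a + 1) := by
        apply D_cons k w' _ _ _ _ (hw'.D _ _ h2)
        rw [S2 _ _ _ _ _ _ (by omega), h]
        norm_num [dl]
      have hl := hw'.1
      simp only [List.length_cons] at hl
      obtain ⟨w'', hw''⟩ := ih w'.length (by omega) w' rfl a h3
      exact ⟨a :: k :: w'', ((hw'.trans (hw''.cons k)).cons a).trans
        (WEq_braid a k (Or.inl h) w'')⟩
    · have h1 : D n w k (k + 1) := by
        apply D_cons a w _ _ _ _ hD
        rw [S2 _ _ _ _ _ _ (by omega), h]
        norm_num [dl]
      have h2 : D n w k (k + 2) := by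
        apply D_cons a w _ _ _ _ hD
        rw [S3 _ _ _ _ _ _ (by omega), h]
        norm_num [dl]
      obtain ⟨w', hw'⟩ := ih w.length (by omega) w rfl k h1
      have h3 : D n w' a (a + 1) := by
        apply D_cons k w' _ _ _ _ (hw'.D _ _ h2)
        rw [S5 _ _ _ _ _ _ (by omega), h]
        norm_num [dl]
      have hl := hw'.1
      simp only [List.length_cons] at hl
      obtain ⟨w'', hw''⟩ := ih w'.length (by omega) w' rfl a h3
      exact ⟨a :: k :: w'', ((hw'.trans (hw''.cons k)).cons a).trans
        (WEq_braid a k (Or.inr h) w'')⟩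

variable (n) in
/-- index pairs -/
abbrev P := {p : Fin n × Fin n // p.1 < p.2}

/-- restriction to pairs -/
def res {R : Type*} (f : ℕ → ℕ → R) : P n → R := fun p => f p.1.1 p.1.2

/-- extension by zero -/
def ext {R : Type*} [CommRing R] (f : P n → R) : ℕ → ℕ → R := fun i j =>
  if h : i < j ∧ j < n then f ⟨(⟨i, by omega⟩, ⟨j, h.2⟩), h.1⟩ else 0

theorem res_ext {R : Type*} [CommRing R] (f : P n → R) : res (ext f) = f := by
  funext p
  have h : (p.1.1 : ℕ) < p.1.2 := p.2
  simp [res, ext, h]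

theorem res_eq_iff {R : Type*} (f g : ℕ → ℕ → R) :
    res (n := n) f = res g ↔ ∀ i j, i < j → j < n → f i j = g i j := by
  constructor
  · intro h i j hij hj
    exact congrFun h ⟨(⟨i, by omega⟩, ⟨j, hj⟩), hij⟩
  · intro h
    funext p
    exact h _ _ p.2 p.1.2.2

/-- the operator on the finite dimensional space -/
def SP {R : Type*} [CommRing R] (q t : R) (k : Fin (n - 1)) : Module.End R (P n → R) where
  toFun f := res (S q t k (ext f))
  map_add' f g := by
    have : ext (f + g) = fun a b => ext f a b + ext g a b := by
      funext a b; unfold ext; split_ifs <;> simp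
    rw [this]
    funext p
    simp [res, S_add]
  map_smul' c f := by
    have : ext (c • f) = fun a b => c * ext f a b := by
      funext a b; unfold ext; split_ifs <;> simp
    rw [this]
    funext p
    simp [res, S_smul]

theorem SP_res {R : Type*} [CommRing R] (q t : R) (k : Fin (n - 1)) (f : ℕ → ℕ → R) :
    SP q t k (res f) = res (S q t k f) := by
  change res (S q t k (ext (res f))) = _
  rw [res_eq_iff]
  apply S_local _ _ _ _ n (by omega)
  rw [← res_eq_iff, res_ext]

theorem SP_isUnit {F : Type*} [Field F] (q t : F) (hq : q ≠ 0) (ht : t ≠ 0) (k : Fin (n - 1)) :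
    IsUnit (SP q t k) := by
  rw [LinearMap.isUnit_iff_range_eq_top, LinearMap.range_eq_top]
  intro g
  obtain ⟨f, hf⟩ := S_surj q t hq ht k (ext g)
  refine ⟨res f, ?_⟩
  rw [SP_res, show S q t k f = ext g from funext₂ hf, res_ext]

theorem end_ext {R : Type*} [CommRing R] (A B : Module.End R (P n → R))
    (h : ∀ f : ℕ → ℕ → R, A (res f) = B (res f)) : A = B := by
  apply LinearMap.ext
  intro f
  rw [← res_ext f, h]

theorem exists_rep (q t : ℝ) (hq : q ≠ 0) (ht : t ≠ 0) :
    ∃ φ : BraidGroup n →* (Module.End ℝ (P n → ℝ))ˣ, ∀ k, (φ (gn n k) : Module.End ℝ _) =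
      SP q t k := by
  let s : Fin (n - 1) → (Module.End ℝ (P n → ℝ))ˣ := fun k => (SP_isUnit q t hq ht k).unit
  have hs : ∀ k, ((s k : (Module.End ℝ (P n → ℝ))ˣ) : Module.End ℝ (P n → ℝ)) = SP q t k :=
    fun k => rfl
  have hrel : ∀ r ∈ braidRels n, FreeGroup.lift s r = 1 := by
    rintro r (⟨i, j, hij, rfl⟩ | ⟨i, j, hij, rfl⟩)
    · simp only [map_mul, map_inv, FreeGroup.lift_apply_of]
      rw [mul_inv_eq_one, mul_inv_eq_iff_eq_mul]
      apply Units.ext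
      simp only [Units.val_mul, hs]
      apply end_ext
      intro f
      simp only [Module.End.mul_apply, SP_res]
      rw [S_comm _ _ _ _ _ hij]
    · simp only [map_mul, map_inv, FreeGroup.lift_apply_of]
      rw [mul_inv_eq_one]
      apply Units.ext
      simp only [Units.val_mul, hs]
      apply end_ext
      intro f
      simp only [Module.End.mul_apply, SP_res]
      rw [hij, S_braid]
  refine ⟨PresentedGroup.toGroup hrel, fun k => ?_⟩
  have : PresentedGroup.toGroup hrel (PresentedGroup.of k) = s k := PresentedGroup.toGroup.of hrel
  exact (congrArg Units.val this).trans (hs k)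

theorem rep_word (q t : ℝ) (φ : BraidGroup n →* (Module.End ℝ (P n → ℝ))ˣ)
    (hφ : ∀ k, (φ (gn n k) : Module.End ℝ _) = SP q t k) (w : List (Fin (n - 1))) :
    ∀ f : ℕ → ℕ → ℝ, (φ (pr n w) : Module.End ℝ (P n → ℝ)) (res f) = res (W q t w f) := by
  induction w with
  | nil => intro f; simp [pr, W]
  | cons a w ih =>
    intro f
    simp only [pr, W, map_mul, Units.val_mul, Module.End.mul_apply, hφ, SP_res, ih]

open Polynomial in
theorem D_of_rep (t : ℝ) (ht : Transcendental ℚ t) (φ : BraidGroup n →* (Module.End ℝ (P n → ℝ))ˣ)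
    (hφ : ∀ k, (φ (gn n k) : Module.End ℝ _) = SP (1/2) t k) (u v : List (Fin (n - 1)))
    (h : φ (pr n u) = φ (pr n v)) (a b : ℕ) (hD : D n u a b) : D n v a b := by
  have hw : ∀ w : List (Fin (n - 1)), W (1/2 : ℝ) t w (dl a b) =
      fun i j => aeval t (W (C (1/2 : ℚ)) (X : ℚ[X]) w (dl a b) i j) := by
    intro w
    have := W_map (C (1/2 : ℚ)) X (aeval t : ℚ[X] →ₐ[ℚ] ℝ).toRingHom w (dl a b)
    have e0 : (fun x y => (aeval t : ℚ[X] →ₐ[ℚ] ℝ).toRingHom (dl a b x y)) = dl a b := by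
      funext i j; unfold dl; split_ifs <;> simp
    have e1 : (aeval t : ℚ[X] →ₐ[ℚ] ℝ).toRingHom (C (1/2 : ℚ)) = 1/2 := by simp
    have e2 : (aeval t : ℚ[X] →ₐ[ℚ] ℝ).toRingHom X = t := by simp
    rw [e0, e1, e2] at this
    exact this
  have hw0 : ∀ w : List (Fin (n - 1)), W (1/2 : ℚ) 0 w (dl a b) =
      fun i j => evalRingHom 0 (W (C (1/2 : ℚ)) (X : ℚ[X]) w (dl a b) i j) := by
    intro w
    have := W_map (C (1/2 : ℚ)) X (evalRingHom (0:ℚ)) w (dl a b)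
    have e0 : (fun x y => evalRingHom (0:ℚ) (dl a b x y)) = dl a b := by
      funext i j; unfold dl; split_ifs <;> simp
    have e1 : evalRingHom (0:ℚ) (C (1/2 : ℚ)) = 1/2 := by simp
    have e2 : evalRingHom (0:ℚ) X = 0 := by simp
    rw [e0, e1, e2] at this
    exact this
  intro i j hij hj
  have e1 : res (n := n) (W (1/2 : ℝ) t u (dl a b)) = res (W (1/2 : ℝ) t v (dl a b)) := by
    rw [← rep_word _ _ φ hφ, ← rep_word _ _ φ hφ, h]
  have e2 := (res_eq_iff _ _).1 e1 i j hij hj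
  rw [hw, hw] at e2
  have e3 := transcendental_iff_injective.1 ht e2
  have e4 := hD i j hij hj
  rw [hw0] at e4 ⊢
  simp only at e4 ⊢
  rw [← e3, e4]

theorem word_inj (t : ℝ) (ht : Transcendental ℚ t) (φ : BraidGroup n →* (Module.End ℝ (P n → ℝ))ˣ)
    (hφ : ∀ k, (φ (gn n k) : Module.End ℝ _) = SP (1/2) t k) (u : List (Fin (n - 1))) :
    ∀ v : List (Fin (n - 1)), φ (pr n u) = φ (pr n v) → pr n u = pr n v := by
  have hz : ∀ (k : Fin (n - 1)) (w : List (Fin (n - 1))), D n (k :: w) k (k + 1) := by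
    intro k w i j hij hj
    have h0 : S (1/2 : ℚ) 0 k (dl k (k + 1)) = fun a b => 0 * (dl k (k + 1) a b : ℚ) := by
      funext a b
      unfold S dl
      split_ifs <;> simp <;> omega
    simp only [W]
    rw [h0, W_smul]
    exact zero_mul _
  induction u with
  | nil =>
    intro v h
    cases v with
    | nil => rfl
    | cons k v =>
      have := D_of_rep t ht φ hφ _ _ h.symm _ _ (hz k v) k (k + 1) (by omega) (by omega)
      simp [W, dl] at this
  | cons k u ih =>
    intro v h
    obtain ⟨v', hv'⟩ := divides _ v rfl k (D_of_rep t ht φ hφ _ _ h _ _ (hz k u))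
    rw [hv'.2.1] at h ⊢
    simp only [pr, map_mul] at h ⊢
    rw [ih v' (mul_right_cancel h)]

/-- positive submonoid -/
def posM : Submonoid (BraidGroup n) where
  carrier := {g | ∃ w, g = pr n w}
  one_mem' := ⟨[], rfl⟩
  mul_mem' := by
    rintro _ _ ⟨u, rfl⟩ ⟨v, rfl⟩
    refine ⟨v ++ u, ?_⟩
    induction v with
    | nil => simp [pr]
    | cons a v ih => simp only [pr, List.cons_append, ← ih, mul_assoc]

theorem fractions (g : BraidGroup n) : ∃ u v, g * pr n u = pr n v := by
  let σ : ℕ → BraidGroup n := fun i => if h : i < n - 1 then gn n ⟨i, h⟩ else 1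
  have hσ : ∀ i (h : i < n - 1), σ i = gn n ⟨i, h⟩ := fun i h => dif_pos h
  obtain ⟨a, ⟨u, rfl⟩, b, ⟨v, rfl⟩, h⟩ := frac σ (n - 1)
    (by
      intro i j hij hj
      rw [hσ i (by omega), hσ j hj]
      exact gn_comm n _ _ hij)
    (by
      intro i hi
      rw [hσ i (by omega), hσ _ hi]
      exact gn_braid n _ _ rfl)
    posM
    (by
      intro i hi
      rw [hσ i hi]
      exact ⟨[⟨i, hi⟩], by simp [pr]⟩)
    (by
      have h := PresentedGroup.closure_range_of (braidRels n)
      rw [eq_top_iff]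
      refine (eq_top_iff.1 h).trans (Subgroup.closure_mono ?_)
      rintro _ ⟨i, rfl⟩
      exact ⟨i, i.2, hσ i i.2⟩)
    g
  exact ⟨u, v, h⟩

theorem card_P : Fintype.card (P n) = n * (n - 1) / 2 := by
  rw [← Nat.choose_two_right]
  have h : Fintype.card (P n) = ∑ j ∈ Finset.range n, j := by
    rw [Fintype.card_subtype]
    rw [Finset.card_filter, ← Finset.univ_product_univ, Finset.sum_product_right]
    rw [Finset.sum_range]
    refine Finset.sum_congr rfl fun j _ => ?_
    rw [← Finset.card_filter]
    have : (Finset.univ.filter fun x : Fin n => x < j) = Finset.Iio j := by ext; simp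
    exact (congrArg Finset.card this).trans (Fin.card_Iio j)
  rw [h, Finset.sum_range_id, Nat.choose_two_right]

theorem final (n : ℕ) :
    ∃ φ : BraidGroup n →* Matrix.GeneralLinearGroup (Fin (n * (n - 1) / 2)) ℝ,
      Function.Injective φ := by
  obtain ⟨t, ht⟩ : ∃ t : ℝ, Transcendental ℚ t := by
    refine ⟨liouvilleNumber (2 : ℕ), ?_⟩
    have := transcendental_liouvilleNumber (m := 2) le_rfl
    exact fun h => this (by rwa [IsFractionRing.isAlgebraic_iff ℤ ℚ ℝ])
  have ht0 : t ≠ 0 := by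
    rintro rfl
    exact ht isAlgebraic_zero
  obtain ⟨φ, hφ⟩ := exists_rep (n := n) (1/2) t (by norm_num) ht0
  have hinj : Function.Injective φ := by
    rw [injective_iff_map_eq_one]
    intro g hg
    obtain ⟨u, v, h⟩ := fractions g
    have := congrArg φ h
    rw [map_mul, hg, one_mul] at this
    have := word_inj t ht φ hφ u v this
    rw [← this] at h
    simpa using h
  have eP : P n ≃ Fin (n * (n - 1) / 2) := Fintype.equivFinOfCardEq card_P
  let E : (Module.End ℝ (P n → ℝ))ˣ ≃* (Matrix (Fin (n * (n - 1) / 2)) (Fin (n * (n - 1) / 2)) ℝ)ˣ :=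
    Units.mapEquiv ((LinearMap.toMatrixAlgEquiv'.trans
      (Matrix.reindexAlgEquiv ℝ ℝ eP)).toMulEquiv)
  exact ⟨E.toMonoidHom.comp φ, E.injective.comp hinj⟩

end main

end LK

/-- For every `n ≥ 2`, the braid group `B_n` embeds into `GL(n(n-1)/2, ℝ)`. -/
theorem stmt_7 (n : ℕ) (hn : 2 ≤ n) :
    ∃ φ : BraidGroup n →* Matrix.GeneralLinearGroup (Fin (n * (n - 1) / 2)) ℝ,
      Function.Injective φ := by
  exact LK.final n
end

section
/- For every n ≥ 2, the quotient group B_n/C(B_n) of the braid group B_n on n strings by its center is linear; more precisely, there is an injective group homomorphism from B_n/C(B_n) into GL((n(n−1)/2)², ℝ). -/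
namespace LKB
def LK {R : Type*} [CommRing R] (q t : R) (k : ℕ) (f : ℕ → ℕ → R) (i j : ℕ) : R :=
  if ¬ i < j then 0 else
  if i = k then (if j = k + 1 then t * q ^ 2 * f k (k+1)
    else t * q * (q - 1) * f k (k+1) + f (k+1) j)
  else if i = k + 1 then q * f k j + (1 - q) * f (k+1) j
  else if j = k then (1 - q) * f i k + q * f i (k+1)
  else if j = k + 1 then f i k + t * q * (q - 1) * f k (k+1)
  else if i < k ∧ k + 1 < j then f i j + t * (q-1)^2 * f k (k+1)
  else f i j

section
variable {R : Type*} [CommRing R] (q t : R) (k : ℕ) (f : ℕ → ℕ → R) (i j : ℕ)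

theorem LK0 (h : ¬ i < j) : LK q t k f i j = 0 := by
  unfold LK; split_ifs; rfl
theorem LK1 (h : i = k) (h' : j = k+1) : LK q t k f i j = t * q ^ 2 * f k (k+1) := by
  unfold LK; split_ifs <;> first | omega | rfl
theorem LK2 (h : i = k) (h' : k+1 < j) :
    LK q t k f i j = t * q * (q - 1) * f k (k+1) + f (k+1) j := by
  unfold LK; split_ifs <;> first | omega | rfl
theorem LK3 (h : i = k+1) (h' : k+1 < j) :
    LK q t k f i j = q * f k j + (1 - q) * f (k+1) j := by
  unfold LK; split_ifs <;> first | omega | rfl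
theorem LK4 (h : i < k) (h' : j = k) :
    LK q t k f i j = (1 - q) * f i k + q * f i (k+1) := by
  unfold LK; split_ifs <;> first | omega | rfl
theorem LK5 (h : i < k) (h' : j = k+1) :
    LK q t k f i j = f i k + t * q * (q - 1) * f k (k+1) := by
  unfold LK; split_ifs <;> first | omega | rfl
theorem LK6 (h : i < k) (h' : k+1 < j) :
    LK q t k f i j = f i j + t * (q-1)^2 * f k (k+1) := by
  unfold LK; split_ifs <;> first | omega | rfl
theorem LK7 (h : i < j) (h' : j < k ∨ k+1 < i) :
    LK q t k f i j = f i j := by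
  unfold LK; split_ifs <;> first | omega | rfl

theorem LK_cases (h : i < j) : (i = k ∧ j = k+1) ∨ (i = k ∧ k+1 < j) ∨ (i = k+1 ∧ k+1 < j)
    ∨ (i < k ∧ j = k) ∨ (i < k ∧ j = k+1) ∨ (i < k ∧ k+1 < j) ∨ (j < k ∨ k+1 < i) := by omega

theorem LK_comm (l : ℕ) (h : k + 2 ≤ l) :
    LK q t k (LK q t l f) i j = LK q t l (LK q t k f) i j := by
  by_cases hij : i < j
  swap
  · simp [LK, hij]
  rcases LK_cases k i j hij with ⟨h1, h2⟩ | ⟨h1, h2⟩ | ⟨h1, h2⟩ | ⟨h1, h2⟩ | ⟨h1, h2⟩ | ⟨h1, h2⟩ | h1 <;>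
  rcases LK_cases l i j hij with ⟨g1, g2⟩ | ⟨g1, g2⟩ | ⟨g1, g2⟩ | ⟨g1, g2⟩ | ⟨g1, g2⟩ | ⟨g1, g2⟩ | g1 <;>
  first
  | (exfalso; omega)
  | (simp (disch := omega) only [LK1, LK2, LK3, LK4, LK5, LK6, LK7]
     done)
  | (simp (disch := omega) only [LK1, LK2, LK3, LK4, LK5, LK6, LK7]
     ring)

theorem LK_braid :
    LK q t k (LK q t (k+1) (LK q t k f)) i j =
      LK q t (k+1) (LK q t k (LK q t (k+1) f)) i j := by
  by_cases hij : i < j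
  swap
  · simp [LK, hij]
  have hi : i < k ∨ i = k ∨ i = k+1 ∨ i = k+1+1 ∨ k+1+1 < i := by omega
  have hj : j < k ∨ j = k ∨ j = k+1 ∨ j = k+1+1 ∨ k+1+1 < j := by omega
  rcases hi with hi | hi | hi | hi | hi <;>
  rcases hj with hj | hj | hj | hj | hj <;>
  first
  | (exfalso; omega)
  | (subst_vars
     simp (disch := omega) only [LK1, LK2, LK3, LK4, LK5, LK6, LK7]
     done)
  | (subst_vars
     simp (disch := omega) only [LK1, LK2, LK3, LK4, LK5, LK6, LK7]
     ring)
end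
end LKB
namespace LKB
section grp
variable {G : Type*} [Group G] (s : ℕ → G)

def Dl : ℕ → G
  | 0 => 1
  | m + 1 => Dl m * s m

theorem Dl_comm (hc : ∀ i j, i + 2 ≤ j → s i * s j = s j * s i) (m j : ℕ) (h : m + 1 ≤ j) :
    Dl s m * s j = s j * Dl s m := by
  induction m with
  | zero => simp [Dl]
  | succ m ih =>
    simp only [Dl]
    rw [mul_assoc, hc m j (by omega), ← mul_assoc, ih (by omega), mul_assoc]

theorem Dl_shift (N : ℕ) (hc : ∀ i j, i + 2 ≤ j → s i * s j = s j * s i)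
    (hb : ∀ i, i + 1 < N → s i * s (i+1) * s i = s (i+1) * s i * s (i+1))
    (i m : ℕ) (h : i + 2 ≤ m) (hm : m ≤ N) :
    Dl s m * s i = s (i+1) * Dl s m := by
  induction m, h using Nat.le_induction with
  | base =>
    have h1 := Dl_comm s hc i (i+1) le_rfl
    have h2 := hb i (by omega)
    simp only [Dl]
    calc Dl s i * s i * s (i+1) * s i = Dl s i * (s i * s (i+1) * s i) := by group
      _ = Dl s i * s (i+1) * (s i * s (i+1)) := by rw [h2]; group
      _ = _ := by rw [h1]; group
  | succ m hm' ih =>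
    simp only [Dl]
    rw [mul_assoc, ← hc i m hm', ← mul_assoc, ih (by omega), mul_assoc]

theorem Dl_C (N : ℕ) (hc : ∀ i j, i + 2 ≤ j → s i * s j = s j * s i)
    (hb : ∀ i, i + 1 < N → s i * s (i+1) * s i = s (i+1) * s i * s (i+1))
    (m : ℕ) (h : m + 1 ≤ N) :
    s 0 * Dl s N * Dl s m = Dl s (m+1) * Dl s N := by
  induction m with
  | zero => simp [Dl]
  | succ m ih =>
    have h1 := Dl_shift s N hc hb m N (by omega) le_rfl
    rw [show Dl s (m+1) = Dl s m * s m from rfl, ← mul_assoc, ih (by omega), mul_assoc, h1,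
      show Dl s (m+1+1) = Dl s (m+1) * s (m+1) from rfl, mul_assoc]

theorem Dl_pow (N : ℕ) (hc : ∀ i j, i + 2 ≤ j → s i * s j = s j * s i)
    (hb : ∀ i, i + 1 < N → s i * s (i+1) * s i = s (i+1) * s i * s (i+1))
    (k : ℕ) (h : k < N) :
    Dl s N ^ k * s 0 = s k * Dl s N ^ k := by
  induction k with
  | zero => simp
  | succ k ih =>
    rw [pow_succ', mul_assoc, ih (by omega), ← mul_assoc,
      Dl_shift s N hc hb k N (by omega) le_rfl, mul_assoc]

theorem Dl_central (N : ℕ) (hc : ∀ i j, i + 2 ≤ j → s i * s j = s j * s i)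
    (hb : ∀ i, i + 1 < N → s i * s (i+1) * s i = s (i+1) * s i * s (i+1))
    (k : ℕ) (h : k < N) :
    Commute (Dl s N ^ (N+1)) (s k) := by
  obtain ⟨M, rfl⟩ : ∃ M, N = M + 1 := ⟨N - 1, by omega⟩
  have h1 := Dl_C s (M+1) hc hb M le_rfl
  have h2 : s 0 * Dl s (M+1) ^ 2 = Dl s (M+1) ^ 2 * s M := by
    calc s 0 * Dl s (M+1) ^ 2 = s 0 * Dl s (M+1) * (Dl s M * s M) := by
          rw [pow_two, ← mul_assoc]; rfl
      _ = s 0 * Dl s (M+1) * Dl s M * s M := by simp only [mul_assoc]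
      _ = _ := by rw [h1, pow_two]
  have h3 : Commute (Dl s (M+1) ^ (M+1+1)) (s 0) := by
    have h4 := Dl_pow s (M+1) hc hb M (by omega)
    unfold Commute SemiconjBy
    rw [show M + 1 + 1 = 2 + M by omega, pow_add, mul_assoc, h4, ← mul_assoc, ← h2, mul_assoc]
  have h5 := Dl_pow s (M+1) hc hb k h
  have h6 : s k = Dl s (M+1) ^ k * s 0 * (Dl s (M+1) ^ k)⁻¹ := by rw [h5]; group
  rw [h6]
  have h7 : Commute (Dl s (M+1) ^ (M+1+1)) (Dl s (M+1) ^ k) := Commute.pow_pow_self _ _ _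
  exact (h7.mul_right h3).mul_right h7.inv_right

theorem Dl_mem (m : ℕ) : Dl s m ∈ Submonoid.closure (Set.range s) := by
  induction m with
  | zero => exact one_mem _
  | succ m ih => exact mul_mem ih (Submonoid.subset_closure ⟨m, rfl⟩)

theorem Dl_split (m i : ℕ) (h : i < m) : ∃ u ∈ Submonoid.closure (Set.range s),
    ∃ v ∈ Submonoid.closure (Set.range s), Dl s m = u * s i * v := by
  induction m with
  | zero => omega
  | succ m ih =>
    by_cases hi : i = m
    · subst hi
      exact ⟨_, Dl_mem s i, 1, one_mem _, by simp [Dl]⟩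
    · obtain ⟨u, hu, v, hv, e⟩ := ih (by omega)
      exact ⟨u, hu, v * s m, mul_mem hv (Submonoid.subset_closure ⟨m, rfl⟩), by
        simp only [Dl, e]; group⟩

theorem frac (N : ℕ) (hc : ∀ i j, i + 2 ≤ j → s i * s j = s j * s i)
    (hb : ∀ i, i + 1 < N → s i * s (i+1) * s i = s (i+1) * s i * s (i+1))
    (h1 : ∀ i, N ≤ i → s i = 1) (hs : Subgroup.closure (Set.range s) = ⊤) (g : G) :
    ∃ p ∈ Submonoid.closure (Set.range s), ∃ r ∈ Submonoid.closure (Set.range s),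
      g = p * r⁻¹ := by
  set P := Submonoid.closure (Set.range s) with hP
  set z := Dl s N ^ (N+1) with hz
  have zc : ∀ k, Commute z (s k) := by
    intro k
    by_cases hk : k < N
    · exact Dl_central s N hc hb k hk
    · rw [h1 k (by omega)]; exact Commute.one_right _
  have hsP : ∀ i, s i ∈ P := fun i => Submonoid.subset_closure ⟨i, rfl⟩
  have zP : ∀ p ∈ P, Commute z p := by
    intro p hp
    induction hp using Submonoid.closure_induction with
    | mem x hx => obtain ⟨i, rfl⟩ := hx; exact zc i
    | one => exact Commute.one_right _
    | mul x y _ _ hx hy => exact hx.mul_right hy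
  have inv : ∀ i, ∃ p ∈ P, (s i)⁻¹ = p * z⁻¹ := by
    intro i
    by_cases hi : i < N
    · obtain ⟨u, hu, v, hv, e⟩ := Dl_split s N i hi
      refine ⟨v * Dl s N ^ N * u, mul_mem (mul_mem hv (pow_mem (Dl_mem s N) _)) hu, ?_⟩
      have e1 : z = u * (s i * (v * Dl s N ^ N)) := by
        rw [hz, pow_succ']; nth_rewrite 1 [e]; group
      have e2 : z = s i * (v * Dl s N ^ N * u) := by
        have := (zP u hu).eq
        have e3 : z = u⁻¹ * (z * u) := by rw [this]; group
        rw [e3]; nth_rewrite 1 [e1]; group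
      rw [eq_mul_inv_iff_mul_eq]; nth_rewrite 1 [e2]; group
    · exact ⟨z, pow_mem (Dl_mem s N) _, by rw [h1 i (by omega)]; simp⟩
  have key : ∃ p ∈ P, ∃ k : ℕ, g = p * (z ^ k)⁻¹ := by
    have hg : g ∈ Subgroup.closure (Set.range s) := by rw [hs]; trivial
    induction hg using Subgroup.closure_induction_right with
    | one => exact ⟨1, one_mem _, 0, by simp⟩
    | mul_right x hx y hy ih =>
      obtain ⟨i, rfl⟩ := hy
      obtain ⟨p, hp, k, rfl⟩ := ih
      refine ⟨p * s i, mul_mem hp (hsP i), k, ?_⟩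
      have := ((zc i).pow_left k).inv_left.eq
      rw [mul_assoc, this, mul_assoc]
    | mul_inv_cancel x hx y hy ih =>
      obtain ⟨i, rfl⟩ := hy
      obtain ⟨p, hp, k, rfl⟩ := ih
      obtain ⟨p', hp', e⟩ := inv i
      refine ⟨p * p', mul_mem hp hp', k + 1, ?_⟩
      have := ((zP p' hp').pow_left k).inv_left.eq
      rw [e, mul_assoc, ← mul_assoc _ p', this, pow_succ']
      group
  obtain ⟨p, hp, k, e⟩ := key
  exact ⟨p, hp, z ^ k, pow_mem (pow_mem (Dl_mem s N) _) _, e⟩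
end grp

section lin
open Module

theorem final {G : Type*} [Group G] {V : Type*} [AddCommGroup V] [Module ℝ V]
    [FiniteDimensional ℝ V] (m : ℕ) (hm : finrank ℝ V = m) (ρ : G →* (End ℝ V)ˣ)
    (hρ : Function.Injective ρ) :
    ∃ φ : G ⧸ Subgroup.center G →* Matrix.GeneralLinearGroup (Fin (m ^ 2)) ℝ,
      Function.Injective φ := by
  set A : Submodule ℝ (End ℝ V) := Submodule.span ℝ (Set.range fun g => (ρ g : End ℝ V)) with hA
  obtain ⟨pr, hpr⟩ := LinearMap.exists_leftInverse_of_injective A.subtype (by simp)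
  have hpr' : ∀ x : A, pr x = x := fun x => LinearMap.congr_fun hpr x
  let cj : G → End ℝ (End ℝ V) := fun g =>
    (LinearMap.mulLeft ℝ (ρ g : End ℝ V)).comp (LinearMap.mulRight ℝ ((ρ g⁻¹ : (End ℝ V)ˣ) : End ℝ V))
  have cj_apply : ∀ g x, cj g x = ρ g * (x * ((ρ g⁻¹ : (End ℝ V)ˣ) : End ℝ V)) := fun g x => rfl
  have cjA : ∀ g, ∀ x ∈ A, cj g x ∈ A := by
    intro g x hx
    have : A ≤ A.comap (cj g) := by
      rw [hA, Submodule.span_le]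
      rintro _ ⟨h, rfl⟩
      apply Submodule.subset_span
      refine ⟨g * (h * g⁻¹), ?_⟩
      simp [cj_apply]
    exact this hx
  have cj_one : ∀ x, cj 1 x = x := by intro x; simp [cj_apply]
  have cj_mul : ∀ g h x, cj (g * h) x = cj g (cj h x) := by
    intro g h x; simp only [cj_apply, mul_inv_rev, map_mul, Units.val_mul, mul_assoc]
  let π : End ℝ (End ℝ V) := A.subtype.comp pr
  have πA : ∀ x, π x ∈ A := fun x => (pr x).2
  have πid : ∀ x ∈ A, π x = x := fun x hx => congrArg Subtype.val (hpr' ⟨x, hx⟩)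
  let c : G →* End ℝ (End ℝ V) :=
    { toFun := fun g => (cj g).comp π + (LinearMap.id - π)
      map_one' := by
        ext1 x
        simp [cj_one]
      map_mul' := by
        intro g h
        ext1 x
        have e1 : π (cj h (π x)) = cj h (π x) := πid _ (cjA h _ (πA x))
        have e2 : π (π x) = π x := πid _ (πA x)
        simp [cj_mul, e1, e2] }
  have c_apply : ∀ g x, c g x = cj g (π x) + (x - π x) := fun g x => rfl
  have ker1 : ∀ g, c g = 1 → g ∈ Subgroup.center G := by
    intro g hg
    rw [Subgroup.mem_center_iff]
    intro h
    have hh : (ρ h : End ℝ V) ∈ A := Submodule.subset_span ⟨h, rfl⟩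
    have e := c_apply g (ρ h)
    rw [hg, πid _ hh] at e
    have e' : ρ h = ρ (g * (h * g⁻¹)) := by
      ext1
      simpa [cj_apply] using e
    have := hρ e'
    calc h * g = (g * (h * g⁻¹)) * g := by rw [← this]
      _ = g * h := by group
  have ker2 : ∀ g ∈ Subgroup.center G, c g = 1 := by
    intro g hg
    rw [Subgroup.mem_center_iff] at hg
    have : ∀ x ∈ A, cj g x = x := by
      intro x hx
      have := LinearMap.eqOn_span (f := cj g) (g := LinearMap.id)
        (s := Set.range fun g => (ρ g : End ℝ V)) (by
          rintro _ ⟨h, rfl⟩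
          have e : g * (h * g⁻¹) = h := by rw [← mul_assoc, ← hg h]; group
          have := congrArg (fun y => ((ρ y : (End ℝ V)ˣ) : End ℝ V)) e
          simpa [cj_apply] using this)
      exact this hx
    ext1 x
    rw [c_apply, this _ (πA x)]
    simp
  have hfr : finrank ℝ (End ℝ V) = m ^ 2 := by
    rw [Module.finrank_linearMap, hm, pow_two]
  let b := Module.finBasisOfFinrankEq ℝ (End ℝ V) hfr
  let Φ : G →* Matrix.GeneralLinearGroup (Fin (m ^ 2)) ℝ :=
    MonoidHom.toHomUnits (((LinearMap.toMatrixAlgEquiv b : _ →* _)).comp c)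
  have hΦ : ∀ g, Φ g = 1 ↔ c g = 1 := by
    intro g
    rw [← Units.val_inj]
    change LinearMap.toMatrixAlgEquiv b (c g) = 1 ↔ _
    rw [map_eq_one_iff _ (LinearMap.toMatrixAlgEquiv b).injective]
  refine ⟨QuotientGroup.lift _ Φ (fun g hg => (hΦ g).2 (ker2 g hg)), ?_⟩
  rw [injective_iff_map_eq_one]
  intro x
  induction x using QuotientGroup.induction_on with
  | H g =>
    intro h
    change Φ g = 1 at h
    exact (QuotientGroup.eq_one_iff g).2 (ker1 g ((hΦ g).1 h))
end lin
end LKB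
namespace LKB
section
variable {R : Type*} [CommRing R] (q t : R) (k : ℕ) (f g : ℕ → ℕ → R) (i j : ℕ)

theorem LK_add : LK q t k (f + g) i j = LK q t k f i j + LK q t k g i j := by
  unfold LK; split_ifs <;> (try simp only [Pi.add_apply]) <;> ring
theorem LK_smul (c : R) : LK q t k (c • f) i j = c * LK q t k f i j := by
  unfold LK; split_ifs <;> (try simp only [Pi.smul_apply, smul_eq_mul]) <;> ring
theorem LK_map {S : Type*} [CommRing S] (φ : R →+* S) :
    LK (φ q) (φ t) k (fun i j => φ (f i j)) i j = φ (LK q t k f i j) := by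
  unfold LK; split_ifs <;> simp
variable {f g i j}
theorem LK_congr (n : ℕ) (h : ∀ i j, i < j → j < n → f i j = g i j) (hk : k + 1 < n)
    (hij : i < j) (hj : j < n) : LK q t k f i j = LK q t k g i j := by
  unfold LK
  rw [h k (k+1) (by omega) hk]
  split_ifs
  all_goals first
    | rfl
    | (rw [h k j (by omega) (by omega), h (k+1) j (by omega) (by omega)])
    | (rw [h (k+1) j (by omega) (by omega)])
    | (rw [h i k (by omega) (by omega), h i (k+1) (by omega) (by omega)])
    | (rw [h i k (by omega) (by omega)])
    | (rw [h i j (by omega) (by omega)])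
end

def F {R : Type*} [CommRing R] (q t : R) {N : ℕ} : List (Fin N) → (ℕ → ℕ → R) → (ℕ → ℕ → R)
  | [], f => f
  | r :: b, f => F q t b (LK q t r f)

section
variable {R : Type*} [CommRing R] (q t : R) {N : ℕ} (b : List (Fin N))

theorem F_congr (n : ℕ) (hN : N + 1 ≤ n) (f g : ℕ → ℕ → R)
    (h : ∀ i j, i < j → j < n → f i j = g i j) :
    ∀ i j, i < j → j < n → F q t b f i j = F q t b g i j := by
  induction b generalizing f g with
  | nil => exact h
  | cons r b ih =>
    exact ih _ _ fun i j hi hj => LK_congr q t r n h (by omega) hi hj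

theorem F_map {S : Type*} [CommRing S] (φ : R →+* S) (f : ℕ → ℕ → R) :
    F (φ q) (φ t) b (fun i j => φ (f i j)) = fun i j => φ (F q t b f i j) := by
  induction b generalizing f with
  | nil => rfl
  | cons r b ih =>
    simp only [F]
    rw [← ih]
    congr 1
    ext i j
    exact LK_map q t r f i j φ

theorem F_add (f g : ℕ → ℕ → R) : F q t b (f + g) = F q t b f + F q t b g := by
  induction b generalizing f g with
  | nil => rfl
  | cons r b ih =>
    simp only [F]
    rw [← ih]
    congr 1
    ext i j
    exact LK_add q t r f g i j

theorem F_smul (c : R) (f : ℕ → ℕ → R) : F q t b (c • f) = c • F q t b f := by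
  induction b generalizing f with
  | nil => rfl
  | cons r b ih =>
    simp only [F]
    rw [← ih]
    congr 1
    ext i j
    exact LK_smul q t r f i j c
end

theorem LK_nonneg (k : ℕ) (f : ℕ → ℕ → ℚ) (hf : ∀ i j, 0 ≤ f i j) (i j : ℕ) :
    0 ≤ LK (1/2) 0 k f i j := by
  have h1 := hf k (k+1)
  have h2 := hf (k+1) j
  have h3 := hf k j
  have h4 := hf i k
  have h5 := hf i (k+1)
  have h6 := hf i j
  unfold LK; split_ifs <;> linarith

theorem F_nonneg {N : ℕ} (b : List (Fin N)) (f : ℕ → ℕ → ℚ) (hf : ∀ i j, 0 ≤ f i j) (i j : ℕ) :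
    0 ≤ F (1/2) 0 b f i j := by
  induction b generalizing f with
  | nil => exact hf i j
  | cons r b ih => exact ih _ (LK_nonneg r f hf)

def dl (R : Type*) [CommRing R] (a c i j : ℕ) : R := if i = a ∧ j = c then 1 else 0

theorem dl_nonneg (a c i j : ℕ) : 0 ≤ dl ℚ a c i j := by
  unfold dl; split_ifs <;> simp

def Z (n : ℕ) (b : List (Fin (n-1))) (f : ℕ → ℕ → ℚ) : Prop :=
  ∀ i j, i < j → j < n → F (1/2) 0 b f i j = 0

theorem Z_add {n : ℕ} {b : List (Fin (n-1))} {f g : ℕ → ℕ → ℚ} (hf : ∀ i j, 0 ≤ f i j)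
    (hg : ∀ i j, 0 ≤ g i j) (h : Z n b ((1/2 : ℚ) • f + g)) : Z n b f ∧ Z n b g := by
  constructor <;>
  · intro i j hi hj
    have := h i j hi hj
    rw [F_add, F_smul] at this
    have h1 := F_nonneg b f hf i j
    have h2 := F_nonneg b g hg i j
    simp only [Pi.add_apply, Pi.smul_apply, smul_eq_mul] at this
    linarith

theorem Z_smul {n : ℕ} {b : List (Fin (n-1))} {f : ℕ → ℕ → ℚ}
    (h : Z n b ((1/2 : ℚ) • f)) : Z n b f := by
  intro i j hi hj
  have := h i j hi hj
  rw [F_smul] at this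
  simpa using this

theorem A1 (r s : ℕ) (h : r + 2 ≤ s ∨ s + 2 ≤ r) :
    LK (1/2) 0 r (dl ℚ s (s+1)) = dl ℚ s (s+1) := by
  ext i j; unfold LK dl; split_ifs <;> first | omega | norm_num

theorem A2 (r : ℕ) : LK (1/2) 0 r (dl ℚ (r+1) (r+2)) =
    (1/2 : ℚ) • dl ℚ (r+1) (r+2) + dl ℚ r (r+2) := by
  ext i j; simp only [Pi.add_apply, Pi.smul_apply]; unfold LK dl
  split_ifs <;> first | omega | norm_num
theorem A3 (r : ℕ) : LK (1/2) 0 (r+1) (dl ℚ r (r+2)) = (1/2 : ℚ) • dl ℚ r (r+1) := by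
  ext i j; simp only [Pi.smul_apply]; unfold LK dl
  split_ifs <;> first | omega | norm_num
theorem A4 (s : ℕ) : LK (1/2) 0 (s+1) (dl ℚ s (s+1)) =
    (1/2 : ℚ) • dl ℚ s (s+1) + dl ℚ s (s+2) := by
  ext i j; simp only [Pi.add_apply, Pi.smul_apply]; unfold LK dl
  split_ifs <;> first | omega | norm_num
theorem A5 (s : ℕ) : LK (1/2) 0 s (dl ℚ s (s+2)) = (1/2 : ℚ) • dl ℚ (s+1) (s+2) := by
  ext i j; simp only [Pi.smul_apply]; unfold LK dl
  split_ifs <;> first | omega | norm_num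

theorem exists_tau : ∃ τ : ℝ, Function.Injective (Polynomial.aeval (R := ℚ) τ) := by
  refine ⟨liouvilleNumber (2 : ℕ), transcendental_iff_injective.1 ?_⟩
  have := transcendental_liouvilleNumber (m := 2) le_rfl
  intro h
  exact this ((IsFractionRing.isAlgebraic_iff ℤ ℚ ℝ).2 h)

abbrev Idx (n : ℕ) := Σ j : Fin n, Fin j

theorem card_Idx (n : ℕ) : Fintype.card (Idx n) = n * (n-1) / 2 := by
  rw [Fintype.card_sigma]
  simp only [Fintype.card_fin]
  rw [Fin.sum_univ_eq_sum_range (fun i => i) n, Finset.sum_range_id]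

section
variable {R : Type*} [CommRing R] (q t : R) {n : ℕ}
def hat (f : Idx n → R) (i j : ℕ) : R :=
  if h : i < j ∧ j < n then f ⟨⟨j, h.2⟩, ⟨i, h.1⟩⟩ else 0

theorem hat_add (f g : Idx n → R) : hat (f + g) = hat f + hat g := by
  ext i j; simp only [Pi.add_apply]; unfold hat; split_ifs <;> simp
theorem hat_smul (c : R) (f : Idx n → R) : hat (c • f) = c • hat f := by
  ext i j; simp only [Pi.smul_apply]; unfold hat; split_ifs <;> simp

def T (k : ℕ) : (Idx n → R) →ₗ[R] (Idx n → R) where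
  toFun f p := LK q t k (hat f) p.2 p.1
  map_add' f g := by ext p; rw [hat_add, LK_add]; rfl
  map_smul' c f := by ext p; rw [hat_smul, LK_smul]; rfl

theorem hat_T (k : ℕ) (f : Idx n → R) (i j : ℕ) (hij : i < j) (hj : j < n) :
    hat (T q t k f) i j = LK q t k (hat f) i j := by
  conv_lhs => unfold hat
  rw [dif_pos ⟨hij, hj⟩]; rfl

theorem T_braid (k : ℕ) (hk : k + 2 < n) :
    (T q t k : Module.End R (Idx n → R)) * T q t (k+1) * T q t k = T q t (k+1) * T q t k * T q t (k+1) := by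
  refine LinearMap.ext fun f => funext fun p => ?_
  obtain ⟨⟨j, hj⟩, ⟨i, hi⟩⟩ := p
  change LK q t k (hat (T q t (k+1) (T q t k f))) i j = LK q t (k+1) (hat (T q t k (T q t (k+1) f))) i j
  have e : ∀ k l, k + 1 < n → l + 1 < n → LK q t k (hat (T q t l (T q t k f))) i j =
      LK q t k (LK q t l (LK q t k (hat f))) i j := by
    intro k l h1 h2
    refine LK_congr _ _ _ n (fun i j hi hj => ?_) h1 hi hj
    rw [hat_T _ _ _ _ _ _ hi hj]
    exact LK_congr _ _ _ n (fun i j hi hj => hat_T _ _ _ _ _ _ hi hj) h2 hi hj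
  rw [e _ _ (by omega) (by omega), e _ _ (by omega) (by omega)]
  exact LK_braid q t k _ i j

theorem T_comm (k l : ℕ) (hk : k + 2 ≤ l) (hl : l + 1 < n) :
    (T q t k : Module.End R (Idx n → R)) * T q t l = T q t l * T q t k := by
  refine LinearMap.ext fun f => funext fun p => ?_
  obtain ⟨⟨j, hj⟩, ⟨i, hi⟩⟩ := p
  change LK q t k (hat (T q t l f)) i j = LK q t l (hat (T q t k f)) i j
  rw [LK_congr q t k n (fun i j hi hj => hat_T q t l f i j hi hj) (by omega) hi hj,
    LK_congr q t l n (fun i j hi hj => hat_T q t k f i j hi hj) (by omega) hi hj]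
  exact LK_comm q t k _ i j l hk
end

theorem hat_eq_zero {n : ℕ} (f : Idx n → ℝ) (h : ∀ i j, i < j → j < n → hat f i j = 0) : f = 0 := by
  ext ⟨⟨j, hj⟩, ⟨i, hi⟩⟩
  have := h i j hi hj
  unfold hat at this
  rw [dif_pos ⟨hi, hj⟩] at this
  exact this

theorem T_unit {n : ℕ} (τ : ℝ) (hτ : τ ≠ 0) (k : ℕ) (hk : k + 1 < n) :
    IsUnit (T (1/2) τ k : Module.End ℝ (Idx n → ℝ)) := by
  rw [LinearMap.isUnit_iff_ker_eq_bot, LinearMap.ker_eq_bot']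
  intro f hf
  have h0 : ∀ i j, i < j → j < n → LK (1/2) τ k (hat f) i j = 0 := by
    intro i j hi hj
    rw [← hat_T _ _ _ _ _ _ hi hj, hf]
    unfold hat; split_ifs <;> rfl
  apply hat_eq_zero
  have h1 : hat f k (k+1) = 0 := by
    have := h0 k (k+1) (by omega) hk
    rw [LK1 _ _ _ _ _ _ rfl rfl] at this
    simpa [hτ] using this
  have h2 : ∀ j, k + 1 < j → j < n → hat f (k+1) j = 0 := by
    intro j h h'
    have := h0 k j (by omega) h'
    rw [LK2 _ _ _ _ _ _ rfl h, h1] at this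
    simpa using this
  have h3 : ∀ j, k + 1 < j → j < n → hat f k j = 0 := by
    intro j h h'
    have := h0 (k+1) j (by omega) h'
    rw [LK3 _ _ _ _ _ _ rfl h, h2 j h h'] at this
    simpa using this
  have h4 : ∀ i, i < k → hat f i k = 0 := by
    intro i h
    have := h0 i (k+1) (by omega) hk
    rw [LK5 _ _ _ _ _ _ h rfl, h1] at this
    simpa using this
  have h5 : ∀ i, i < k → hat f i (k+1) = 0 := by
    intro i h
    have := h0 i k (by omega) (by omega)
    rw [LK4 _ _ _ _ _ _ h rfl, h4 i h] at this
    simpa using this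
  intro i j hi hj
  rcases LK_cases k i j hi with ⟨rfl, rfl⟩ | ⟨rfl, h⟩ | ⟨rfl, h⟩ | ⟨h, rfl⟩ | ⟨h, rfl⟩ | ⟨h, h'⟩ | h
  · exact h1
  · exact h3 j h hj
  · exact h2 j h hj
  · exact h4 i h
  · exact h5 i h
  · have := h0 i j hi hj
    rw [LK6 _ _ _ _ _ _ h h', h1] at this
    simpa using this
  · have := h0 i j hi hj
    rwa [LK7 _ _ _ _ _ _ hi h] at this

section braid
variable {n : ℕ}
def sg (i : Fin (n-1)) : BraidGroup n := (PresentedGroup.of i : PresentedGroup (braidRels n))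

theorem sg_comm (i j : Fin (n-1)) (h : (i : ℕ) + 2 ≤ j) : sg i * sg j = sg j * sg i := by
  have : (PresentedGroup.mk (braidRels n)) (FreeGroup.of i * FreeGroup.of j *
      (FreeGroup.of i)⁻¹ * (FreeGroup.of j)⁻¹) = 1 :=
    PresentedGroup.one_of_mem (Or.inl ⟨i, j, h, rfl⟩)
  simp only [map_mul, map_inv] at this
  have h2 := mul_inv_eq_iff_eq_mul.1 (mul_inv_eq_one.1 this)
  exact h2

theorem sg_braid (i j : Fin (n-1)) (h : (j : ℕ) = i + 1) :
    sg i * sg j * sg i = sg j * sg i * sg j := by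
  have : (PresentedGroup.mk (braidRels n)) (FreeGroup.of i * FreeGroup.of j * FreeGroup.of i *
              (FreeGroup.of j * FreeGroup.of i * FreeGroup.of j)⁻¹) = 1 :=
    PresentedGroup.one_of_mem (Or.inr ⟨i, j, h, rfl⟩)
  rw [map_mul, map_inv] at this
  have h2 := mul_inv_eq_one.1 this
  simp only [map_mul] at h2
  exact h2

def W : List (Fin (n-1)) → BraidGroup n
  | [] => 1
  | r :: b => W b * sg r

theorem W_append (a b : List (Fin (n-1))) : W (a ++ b) = W b * W a := by
  induction a with
  | nil => simp [W]
  | cons r a ih => simp [W, ih, mul_assoc]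

def ss (n : ℕ) (i : ℕ) : BraidGroup n := if h : i < n - 1 then sg ⟨i, h⟩ else 1

theorem ss_closure_mem (p : BraidGroup n) (hp : p ∈ Submonoid.closure (Set.range (ss n))) :
    ∃ b, p = W b := by
  induction hp using Submonoid.closure_induction with
  | mem x hx =>
    obtain ⟨i, rfl⟩ := hx
    unfold ss
    split_ifs with h
    · exact ⟨[⟨i, h⟩], by simp [W]⟩
    · exact ⟨[], rfl⟩
  | one => exact ⟨[], rfl⟩
  | mul x y _ _ hx hy =>
    obtain ⟨a, rfl⟩ := hx
    obtain ⟨b, rfl⟩ := hy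
    exact ⟨b ++ a, by rw [W_append]⟩

theorem frac_W (g : BraidGroup n) : ∃ a b, g = W a * (W b)⁻¹ := by
  have hcl : Subgroup.closure (Set.range (ss n)) = ⊤ := by
    rw [eq_top_iff]
    have h := PresentedGroup.closure_range_of (braidRels n)
    have h2 : Subgroup.closure (Set.range (sg (n := n))) = ⊤ := h
    rw [← h2]
    apply Subgroup.closure_mono
    rintro _ ⟨i, rfl⟩
    exact ⟨i, by simp [ss]⟩
  obtain ⟨p, hp, r, hr, e⟩ := frac (ss n) (n-1) (by
    intro i j hij
    unfold ss
    split_ifs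
    · exact sg_comm _ _ hij
    all_goals simp) (by
    intro i hi
    unfold ss
    rw [dif_pos hi, dif_pos (by omega)]
    exact sg_braid _ _ rfl) (by
    intro i hi
    unfold ss
    rw [dif_neg (by omega)]) hcl g
  obtain ⟨a, rfl⟩ := ss_closure_mem p hp
  obtain ⟨b, rfl⟩ := ss_closure_mem r hr
  exact ⟨a, b, e⟩

theorem exists_rho (τ : ℝ) (hτ : τ ≠ 0) : ∃ ρ : BraidGroup n →* (Module.End ℝ (Idx n → ℝ))ˣ,
    ∀ i : Fin (n-1), (ρ (sg i) : Module.End ℝ (Idx n → ℝ)) = T (1/2) τ i := by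
  let u : Fin (n-1) → (Module.End ℝ (Idx n → ℝ))ˣ := fun i =>
    (T_unit (n := n) τ hτ i (by omega)).unit
  have hu : ∀ i, (u i : Module.End ℝ (Idx n → ℝ)) = T (1/2) τ i := fun i => rfl
  have hrel : ∀ r ∈ braidRels n, FreeGroup.lift u r = 1 := by
    rintro r (⟨i, j, h, rfl⟩ | ⟨i, j, h, rfl⟩)
    · simp only [map_mul, map_inv, FreeGroup.lift_apply_of]
      rw [mul_inv_eq_one, mul_inv_eq_iff_eq_mul]
      ext1
      simp only [Units.val_mul, hu]
      exact T_comm _ _ _ _ h (by omega)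
    · simp only [map_mul, map_inv, FreeGroup.lift_apply_of]
      rw [mul_inv_eq_one]
      ext1
      simp only [Units.val_mul, hu, h]
      exact T_braid _ _ _ (by omega)
  refine ⟨PresentedGroup.toGroup hrel, fun i => ?_⟩
  have : PresentedGroup.toGroup hrel (PresentedGroup.of i) = u i := PresentedGroup.toGroup.of hrel
  exact (congrArg Units.val this).trans (hu i)

variable (τ : ℝ) (ρ : BraidGroup n →* (Module.End ℝ (Idx n → ℝ))ˣ)
  (hρ : ∀ i : Fin (n-1), (ρ (sg i) : Module.End ℝ (Idx n → ℝ)) = T (1/2) τ i)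

include hρ in
theorem hat_rho (b : List (Fin (n-1))) (f : Idx n → ℝ) : ∀ i j, i < j → j < n →
    hat ((ρ (W b) : Module.End ℝ (Idx n → ℝ)) f) i j = F (1/2) τ b (hat f) i j := by
  induction b generalizing f with
  | nil => intro i j _ _; simp [W, F]
  | cons r b ih =>
    intro i j hi hj
    simp only [W, F, map_mul, Units.val_mul, hρ, Module.End.mul_apply]
    rw [ih _ i j hi hj]
    exact F_congr _ _ _ n (by omega) _ _ (fun i j hi hj => hat_T _ _ _ _ _ _ hi hj) i j hi hj

include hρ in
theorem transport (hτ : Function.Injective (Polynomial.aeval (R := ℚ) τ))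
    (b b' : List (Fin (n-1))) (h : ρ (W b) = ρ (W b')) (a c : ℕ) (hac : a < c) (hc : c < n)
    (hZ : Z n b (dl ℚ a c)) : Z n b' (dl ℚ a c) := by
  intro i j hi hj
  refine Eq.trans ?_ (hZ i j hi hj)
  let f : Idx n → ℝ := fun p => dl ℝ a c p.2 p.1
  have hf : ∀ i j, i < j → j < n → hat f i j = dl ℝ a c i j := by
    intro i j hi hj
    unfold hat; rw [dif_pos ⟨hi, hj⟩]
  let φ : Polynomial ℚ →+* ℝ := (Polynomial.aeval (R := ℚ) τ).toRingHom
  let ψ : Polynomial ℚ →+* ℚ := Polynomial.evalRingHom 0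
  have hd : ∀ {S : Type} [CommRing S] (θ : Polynomial ℚ →+* S),
      (fun i j => θ (dl (Polynomial ℚ) a c i j)) = dl S a c := by
    intro S _ θ; ext i j; unfold dl; split_ifs <;> simp
  have e1 : ∀ b : List (Fin (n-1)),
      hat ((ρ (W b) : Module.End ℝ (Idx n → ℝ)) f) i j =
        φ (F (Polynomial.C (1/2)) Polynomial.X b (dl _ a c) i j) := by
    intro b
    rw [hat_rho τ ρ hρ b f i j hi hj, F_congr _ _ _ n (by omega) _ _ hf i j hi hj]
    have := F_map (Polynomial.C (1/2 : ℚ)) Polynomial.X b φ (dl _ a c)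
    rw [hd] at this
    have := congrFun (congrFun this i) j
    rw [← this]
    simp [φ]
  have e2 : ∀ b : List (Fin (n-1)), F (1/2) 0 b (dl ℚ a c) i j =
        ψ (F (Polynomial.C (1/2)) Polynomial.X b (dl _ a c) i j) := by
    intro b
    have := F_map (Polynomial.C (1/2 : ℚ)) Polynomial.X b ψ (dl _ a c)
    rw [hd] at this
    have := congrFun (congrFun this i) j
    rw [← this]
    simp [ψ]
  rw [e2 b', e2 b]
  congr 1
  apply hτ
  have h3 := e1 b
  rw [h, e1 b'] at h3
  exact h3

include hρ in
theorem descent (hτ : Function.Injective (Polynomial.aeval (R := ℚ) τ)) (m : ℕ) :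
    ∀ (b : List (Fin (n-1))), b.length = m → ∀ s : Fin (n-1), Z n b (dl ℚ s (s+1)) →
      ∃ b', b'.length + 1 = m ∧ W b = W b' * sg s := by
  induction m using Nat.strong_induction_on with
  | _ m IH =>
  intro b hb s hZ
  have tr : ∀ b b' : List (Fin (n-1)), W b = W b' → ∀ a c, a < c → c < n →
      Z n b (dl ℚ a c) → Z n b' (dl ℚ a c) := fun b b' h a c h1 h2 h3 =>
    transport τ ρ hρ hτ b b' (by rw [h]) a c h1 h2 h3
  cases b with
  | nil =>
    have := hZ s (s+1) (by omega) (by omega)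
    simp [F, dl] at this
  | cons r b =>
    simp only [List.length_cons] at hb
    by_cases hrs : r = s
    · subst hrs
      exact ⟨b, hb, rfl⟩
    have hrs' : (r : ℕ) ≠ s := fun h => hrs (Fin.ext h)
    have hZ' : Z n b (LK (1/2) 0 r (dl ℚ s (s+1))) := hZ
    by_cases hfar : (r : ℕ) + 2 ≤ s ∨ (s : ℕ) + 2 ≤ r
    · rw [A1 _ _ hfar] at hZ'
      obtain ⟨b', hb', e⟩ := IH b.length (by omega) b rfl s hZ'
      refine ⟨r :: b', by simp; omega, ?_⟩
      have hc : sg s * sg r = sg r * sg s := by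
        rcases hfar with h | h
        · exact (sg_comm _ _ h).symm
        · exact sg_comm _ _ h
      simp only [W]
      rw [e, mul_assoc, hc, mul_assoc]
    · have fin : ∀ b'' : List (Fin (n-1)), b''.length + 1 = b.length → W b = W b'' * sg s →
          Z n b'' (dl ℚ r (r+1)) → ∃ b', b'.length + 1 = m ∧ W (r :: b) = W b' * sg s := by
        intro b'' h1 h2 h3
        obtain ⟨b3, h4, e⟩ := IH b''.length (by omega) b'' rfl r h3
        refine ⟨r :: s :: b3, by simp; omega, ?_⟩
        have hbr : sg r * sg s * sg r = sg s * sg r * sg s := by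
          rcases (by omega : (s : ℕ) = r + 1 ∨ (r : ℕ) = s + 1) with h | h
          · exact sg_braid _ _ h
          · exact (sg_braid _ _ h).symm
        simp only [W]
        rw [h2, e]
        simp only [mul_assoc] at hbr ⊢
        rw [hbr]
      rcases (by omega : (s : ℕ) = r + 1 ∨ (r : ℕ) = s + 1) with h | h
      · rw [h, A2] at hZ'
        obtain ⟨z1, z2⟩ := Z_add (dl_nonneg _ _) (dl_nonneg _ _) hZ'
        obtain ⟨b'', hb'', e⟩ := IH b.length (by omega) b rfl s (by rw [h]; exact z1)
        refine fin b'' hb'' e ?_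
        have z3 : Z n b'' (LK (1/2) 0 s (dl ℚ r (r+2))) :=
          tr b (s :: b'') e _ _ (by omega) (by omega) z2
        rw [h, A3] at z3
        exact Z_smul z3
      · rw [h, A4] at hZ'
        obtain ⟨z1, z2⟩ := Z_add (dl_nonneg _ _) (dl_nonneg _ _) hZ'
        obtain ⟨b'', hb'', e⟩ := IH b.length (by omega) b rfl s z1
        refine fin b'' hb'' e ?_
        have z3 : Z n b'' (LK (1/2) 0 s (dl ℚ s (s+2))) :=
          tr b (s :: b'') e _ _ (by omega) (by omega) z2
        rw [A5] at z3
        rw [h]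
        exact Z_smul z3

theorem Z_head (s : Fin (n-1)) (b : List (Fin (n-1))) : Z n (s :: b) (dl ℚ s (s+1)) := by
  have h : LK (1/2) 0 s (dl ℚ s (s+1)) = (0 : ℚ) • dl ℚ s (s+1) := by
    ext i j; simp only [Pi.smul_apply]; unfold LK dl
    split_ifs <;> first | omega | norm_num
  intro i j _ _
  simp only [F]
  rw [h, F_smul]; simp

include hρ in
theorem W_inj (hτ : Function.Injective (Polynomial.aeval (R := ℚ) τ)) (b b' : List (Fin (n-1)))
    (h : ρ (W b) = ρ (W b')) : W b = W b' := by
  induction b generalizing b' with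
  | nil =>
    cases b' with
    | nil => rfl
    | cons s b' =>
      have := transport τ ρ hρ hτ _ _ h.symm s (s+1) (by omega) (by omega) (Z_head s b')
      obtain ⟨_, h, _⟩ := descent τ ρ hρ hτ _ _ rfl s this
      simp at h
  | cons s b ih =>
    have := transport τ ρ hρ hτ _ _ h s (s+1) (by omega) (by omega) (Z_head s b)
    obtain ⟨b'', _, e⟩ := descent τ ρ hρ hτ _ _ rfl s this
    rw [e] at h ⊢
    simp only [W, map_mul] at h ⊢
    rw [ih b'' (mul_right_cancel h)]

include hρ in
theorem rho_inj (hτ : Function.Injective (Polynomial.aeval (R := ℚ) τ)) :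
    Function.Injective ρ := by
  rw [injective_iff_map_eq_one]
  intro g hg
  obtain ⟨a, b, rfl⟩ := frac_W g
  rw [map_mul, map_inv, mul_inv_eq_one] at hg
  rw [mul_inv_eq_one]
  exact W_inj τ ρ hρ hτ a b hg
end braid
end LKB

/-- For every `n ≥ 2`, the quotient `B_n / C(B_n)` of the braid group by its center
embeds into `GL((n(n-1)/2)², ℝ)`; in particular it is linear. -/
theorem stmt_8 (n : ℕ) (hn : 2 ≤ n) :
    ∃ φ : BraidGroup n ⧸ Subgroup.center (BraidGroup n) →*
        Matrix.GeneralLinearGroup (Fin ((n * (n - 1) / 2) ^ 2)) ℝ,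
      Function.Injective φ := by
  obtain ⟨τ, hτ⟩ := LKB.exists_tau
  have hτ0 : τ ≠ 0 := by
    rintro rfl
    have : (Polynomial.X : Polynomial ℚ) = 0 := hτ (by simp)
    exact Polynomial.X_ne_zero this
  obtain ⟨ρ, hρ⟩ := LKB.exists_rho (n := n) τ hτ0
  exact LKB.final _ (by rw [Module.finrank_fintype_fun_eq_card, LKB.card_Idx]) ρ
    (LKB.rho_inj τ ρ hρ hτ)
end

section
/- Let G be a group and H a subgroup of G of finite index. If H is linear, i.e. there exist a field F, a positive integer k, and an injective group homomorphism H → GL(k,F), then G is linear over the same field: there exist a positive integer m and an injective group homomorphism G → GL(m,F). -/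
/-- If `H` is a finite index subgroup of `G` and `H` embeds into `GL(k, F)`, then `G`
embeds into `GL(m, F)` for some positive integer `m`, over the same field `F`. -/
theorem stmt_10 (G : Type*) [Group G] (H : Subgroup G) (hindex : H.index ≠ 0)
    (F : Type*) [Field F] (k : ℕ) (hk : 0 < k)
    (f : H →* Matrix.GeneralLinearGroup (Fin k) F) (hf : Function.Injective f) :
    ∃ m : ℕ, 0 < m ∧
      ∃ φ : G →* Matrix.GeneralLinearGroup (Fin m) F, Function.Injective φ := by
  classical
  let e : Matrix (Fin k) (Fin k) F →* Module.End F (Fin k → F) :=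
    (Matrix.toLinAlgEquiv' : _ ≃ₐ[F] _).toAlgHom.toRingHom.toMonoidHom
  have he : Function.Injective e := (Matrix.toLinAlgEquiv' : _ ≃ₐ[F] _).injective
  let ρ : Representation F H (Fin k → F) := e.comp ((Units.coeHom _).comp f)
  have hρ : Function.Injective ρ := fun a b h => hf (Units.ext (he h))
  let V := Representation.coindV H.subtype ρ
  have hfi : H.FiniteIndex := ⟨hindex⟩
  have : Finite (G ⧸ H) := Subgroup.finite_quotient_of_finiteIndex
  -- restriction to coset representatives
  let r : V →ₗ[F] ((G ⧸ H) → (Fin k → F)) :=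
    { toFun := fun x q => x.1 (q.out)⁻¹
      map_add' := fun _ _ => rfl
      map_smul' := fun _ _ => rfl }
  have hr : Function.Injective r := by
    intro x y hxy
    apply Subtype.ext
    funext g
    have h1 : x.1 ((QuotientGroup.mk g⁻¹ : G ⧸ H).out)⁻¹
        = y.1 ((QuotientGroup.mk g⁻¹ : G ⧸ H).out)⁻¹ :=
      congrFun hxy (QuotientGroup.mk g⁻¹ : G ⧸ H)
    obtain ⟨h, hh⟩ := QuotientGroup.mk_out_eq_mul H g⁻¹
    have hg : g = H.subtype h * ((QuotientGroup.mk g⁻¹ : G ⧸ H).out)⁻¹ := by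
      rw [hh]; simp
    rw [hg, x.2, y.2, h1]
  have hfin : Module.Finite F V := FiniteDimensional.of_injective r hr
  have key : ∀ v : Fin k → F, ∃ x : V, (∀ h : H, x.1 h = ρ h v) ∧ ∀ g, g ∉ H → x.1 g = 0 := by
    intro v
    refine ⟨⟨fun g => if hg : g ∈ H then ρ ⟨g, hg⟩ v else 0, ?_⟩, ?_, ?_⟩
    · intro h g
      by_cases hg : g ∈ H
      · have h2 : (h : G) * g ∈ H := H.mul_mem h.2 hg
        have : (⟨(h : G) * g, h2⟩ : H) = h * ⟨g, hg⟩ := rfl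
        simp only [Subgroup.subtype_apply, hg, h2, dif_pos, this, map_mul]
        rfl
      · have h2 : ¬ (h : G) * g ∈ H := fun h3 => hg ((H.mul_mem_cancel_left h.2).1 h3)
        simp [hg, h2]
    · intro h; simp
    · intro g hg; simp [hg]
  have key1 : ∀ v (x : V), (∀ h : H, x.1 h = ρ h v) → x.1 1 = v := by
    intro v x hx
    have := hx 1
    simpa using this
  let v1 : Fin k → F := fun _ => 1
  have hv1 : v1 ≠ 0 := fun h => one_ne_zero (congrFun h ⟨0, hk⟩)
  have : Nontrivial V := by
    obtain ⟨x, hx, -⟩ := key v1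
    refine ⟨x, 0, fun h => hv1 ?_⟩
    rw [← key1 v1 x hx, h]; rfl
  let σ := Representation.coind H.subtype ρ
  have hσ : Function.Injective σ := by
    rw [injective_iff_map_eq_one]
    intro g hg
    have h1 : ∀ x : V, x.1 g = x.1 1 := by
      intro x
      have h2 : (σ g x).1 1 = x.1 1 := by rw [hg]; rfl
      have h3 : (σ g x).1 1 = x.1 (1 * g) := rfl
      rw [← h2, h3, one_mul]
    have hgH : g ∈ H := by
      by_contra hgH
      obtain ⟨x, hx, hx0⟩ := key v1
      apply hv1
      rw [← key1 v1 x hx, ← h1, hx0 g hgH]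
    have : (⟨g, hgH⟩ : H) = 1 := by
      apply hρ
      rw [map_one]
      apply LinearMap.ext
      intro v
      obtain ⟨x, hx, -⟩ := key v
      rw [← hx, h1, key1 v x hx]; rfl
    exact congrArg Subtype.val this
  let b := Module.finBasis F V
  let t : Module.End F V →* Matrix (Fin (Module.finrank F V)) (Fin (Module.finrank F V)) F :=
    (LinearMap.toMatrixAlgEquiv b).toAlgHom.toRingHom.toMonoidHom
  have ht : Function.Injective t := (LinearMap.toMatrixAlgEquiv b).injective
  refine ⟨Module.finrank F V, Module.finrank_pos, (t.comp σ).toHomUnits, ?_⟩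
  intro a c hac
  exact hσ (ht (congrArg Units.val hac))
end
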